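/- arXiv:2510.18451 — 2 statements merged into one kernel-verified Lean document; each statement's English description precedes it below -/
import Mathlib

section
/- Let Ψ : (0,∞) → (0,∞) and ω : (0,∞) → (0,1) be such that the maps q ↦ q²Ψ(q) and q ↦ q²Ψ(q)ω(q) are non-increasing on (0,∞), Σ_{q=1}^∞ qΨ(q) < ∞ (sum over positive integers q), and lim_{q→∞} ω(q) = 0. Assume also that ω(q) ≥ (45/Ψ(q)) · Ψ(1/(2qΨ(q))) for all sufficiently large q. Then dim_H(E(Ψ,ω)) = inf{s ≥ 0 : Σ_{q=1}^∞ q(Ψ(q)ω(q))^s < ∞}. -/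
/-!
Write `ρ = Ψ ω`, and let `s₀` be the infimum of the `s ≥ 0` with `∑ q ρ(q)^s < ∞`.

*Upper bound.* A point of `E(Ψ, ω)` lies, for infinitely many `q`, in an annulus
`(1 - ω q) Ψ q ≤ |x - p / q| ≤ Ψ q`, which consists of two intervals of length `ρ q`. There are
`O(q)` of them meeting a bounded set, so convergence of `∑ q ρ(q)^s` bounds the `s`-dimensional
Hausdorff measure on bounded sets (`dimH_ESet_le`).

*Lower bound.* For `s < s₀` a Cantor subset of `E(Ψ, ω)` of dimension at least `s` is built. Its
basic intervals (`Node`) are the right halves `[p / q + (1 - ω q) Ψ q, p / q + Ψ q]` of annuli. Such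
an interval `[a, b]`, of length `ρ q`, comes with the threshold `R = 1 / (2 q Ψ q)`: since distinct
fractions satisfy `|p / q - p' / q'| ≥ 1 / (q q')`, its points are automatically far from all other
rationals of denominator below `R`. The hypothesis `ω ≥ (45 / Ψ) Ψ(1 / (2 q Ψ))` says exactly that
`45 Ψ R ≤ b - a`.

Given `[a, b]` and `R`, take a large `Q`. By Dirichlet's theorem every point of `[a, b]` is close to
a rational of denominator at most `Q`. The points for which this denominator is less than about
`Q / 1024`, and those close to a rational of denominator `q' ∈ [R, Q]` within `4 Ψ q'`, form a set of
measure less than half of `b - a`; this is proved block by block over dyadic ranges of denominators,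
using the convergence of `∑ q Ψ q` and `45 Ψ R ≤ b - a`. Hence there are at least a constant times
`(b - a) Q²` rationals in `[a, b]` with denominator comparable to `Q` and far from all rationals of
intermediate denominator (`goodCenters_card`). Each of them is the centre of a child
(`exists_child`), and they are `1 / Q²`-separated.

Divergence of `∑ q ρ(q)^s'` for `s < s' < s₀` makes `Q² ρ(Q)^s` arbitrarily large along a sequence
of `Q` (`frequently_large_of_not_summable`), so that an equidistributed mass satisfies
`mass ≤ length ^ s` at every stage. Coding the Cantor set by `[0, 1)` along the masses, the decoding
map is `s`-Hölder and onto `[0, 1)`, whence the dimension is at least `s` (`cantor_dimH`).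
-/

open Filter Set

/-- A real number `x` is `Ψ`-approximable: `|x - p/q| ≤ Ψ q` for infinitely many
pairs `(p, q) ∈ ℤ × ℕ` (with `q > 0`).  `WSet Ψ` is the set `W(Ψ)` of such `x`. -/
def WSet (Ψ : ℝ → ℝ) : Set ℝ :=
  {x : ℝ | {pq : ℤ × ℕ | 0 < pq.2 ∧ |x - (pq.1 : ℝ) / (pq.2 : ℝ)| ≤ Ψ (pq.2 : ℝ)}.Infinite}

/-- `ESet Ψ ω` is the set `E(Ψ, ω)` of `x ∈ W(Ψ)` such that for all sufficiently large
`q ∈ ℕ` one has `|x - p/q| ≥ (1 - ω q) * Ψ q` for every `p ∈ ℤ`. -/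
def ESet (Ψ ω : ℝ → ℝ) : Set ℝ :=
  {x : ℝ | x ∈ WSet Ψ ∧ ∃ Q : ℕ, ∀ q : ℕ, Q ≤ q → ∀ p : ℤ,
    (1 - ω (q : ℝ)) * Ψ (q : ℝ) ≤ |x - (p : ℝ) / (q : ℝ)|}

open MeasureTheory

/-! ### Dimension of Cantor sets -/

/-- A mass distribution principle for Cantor sets. Each `σ : S` is a basic interval `[a σ, b σ]` of
mass `w σ ≤ (b σ - a σ) ^ s`; it has `m ≥ 2` children sharing the mass equally and in such a position
that the `i`-th and `j`-th are at distance at least `c |j - i| (b σ - a σ) / m`. Then the Cantor set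
started at `σ₀` has dimension at least `s`. The predicate `P` records whatever else is known about
the pair parent-child. The proof sends `y ∈ [0, 1)`, expanded in the mixed base given by the numbers
of children, to the point of the Cantor set with the digits of `y`, and shows that the inverse of
this map is `s`-Hölder. -/
theorem cantor_dimH {S : Type*} (a b w : S → ℝ) (P : S → S → Prop) {s c : ℝ}
    (hs0 : 0 < s) (hs1 : s ≤ 1) (hc : 0 < c)
    (hab : ∀ σ, a σ < b σ) (hw0 : ∀ σ, 0 < w σ) (hw : ∀ σ, w σ ≤ (b σ - a σ) ^ s)
    (step : ∀ σ, ∃ m : ℕ, 2 ≤ m ∧ ∃ f : ℕ → S,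
      (∀ i < m, Icc (a (f i)) (b (f i)) ⊆ Icc (a σ) (b σ) ∧ w (f i) = w σ / m ∧ P σ (f i)) ∧
      ∀ i j : ℕ, i < j → j < m →
        b (f i) + c * ((j : ℝ) - i) * ((b σ - a σ) / m) ≤ a (f j))
    (σ₀ : S) :
    ∃ K : Set ℝ, ENNReal.ofReal s ≤ dimH K ∧ ∀ x ∈ K, ∃ τ : ℕ → S, τ 0 = σ₀ ∧
      ∀ n, P (τ n) (τ (n + 1)) ∧ x ∈ Icc (a (τ n)) (b (τ n)) := by
  choose m hm f hf hsep using step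
  have hmpos : ∀ σ, (0 : ℝ) < m σ := fun σ => by have := hm σ; positivity
  -- the orbit of `y`: node at depth `n` and relative position of `y` in the slot of that node
  let st : ℝ → ℕ → S × ℝ := fun y n =>
    Nat.rec (σ₀, y) (fun _ p => (f p.1 ⌊p.2 * m p.1⌋₊, p.2 * m p.1 - ⌊p.2 * m p.1⌋₊)) n
  have st0 : ∀ y, st y 0 = (σ₀, y) := fun y => rfl
  have stS1 : ∀ y n, (st y (n + 1)).1 = f (st y n).1 ⌊(st y n).2 * m (st y n).1⌋₊ :=
    fun y n => rfl
  have stS2 : ∀ y n, (st y (n + 1)).2 =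
    (st y n).2 * m (st y n).1 - ⌊(st y n).2 * m (st y n).1⌋₊ := fun y n => rfl
  have hpos : ∀ y ∈ Ico (0 : ℝ) 1, ∀ n, (st y n).2 ∈ Ico (0 : ℝ) 1 := by
    intro y hy n
    induction n with
    | zero => simpa [st0] using hy
    | succ n ih =>
      rw [stS2]
      have h0 : 0 ≤ (st y n).2 * m (st y n).1 := mul_nonneg ih.1 (hmpos _).le
      have h1 := Nat.floor_le h0
      have h2 := Nat.lt_floor_add_one ((st y n).2 * m (st y n).1)
      constructor <;> linarith
  have hdig : ∀ y ∈ Ico (0 : ℝ) 1, ∀ n, ⌊(st y n).2 * m (st y n).1⌋₊ < m (st y n).1 := by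
    intro y hy n
    have ih := hpos y hy n
    rw [Nat.floor_lt (mul_nonneg ih.1 (hmpos _).le)]
    nlinarith [ih.2, hmpos (st y n).1]
  have hanti : ∀ y ∈ Ico (0 : ℝ) 1,
      Antitone fun n => Icc (a (st y n).1) (b (st y n).1) := by
    intro y hy
    refine antitone_nat_of_succ_le fun n => ?_
    rw [stS1]
    exact (hf _ _ (hdig y hy n)).1
  -- `g y` is the unique point common to all intervals along the orbit of `y`
  let g : ℝ → ℝ := fun y => ⨆ n, a (st y n).1
  have hg : ∀ y ∈ Ico (0 : ℝ) 1, ∀ n, g y ∈ Icc (a (st y n).1) (b (st y n).1) := by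
    intro y hy n
    have := ciSup_mem_iInter_Icc_of_antitone_Icc (hanti y hy) (fun n => (hab _).le)
    exact mem_iInter.1 this n
  have hwS : ∀ y ∈ Ico (0 : ℝ) 1, ∀ n, w (st y (n + 1)).1 = w (st y n).1 / m (st y n).1 := by
    intro y hy n
    rw [stS1]
    exact (hf _ _ (hdig y hy n)).2.1
  have hwle : ∀ y ∈ Ico (0 : ℝ) 1, ∀ n, w (st y n).1 ≤ w σ₀ * (1 / 2) ^ n := by
    intro y hy n
    induction n with
    | zero => simp [st0]
    | succ n ih =>
      rw [hwS y hy, pow_succ, div_le_iff₀ (hmpos _)]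
      have h2 : (2 : ℝ) ≤ m (st y n).1 := by exact_mod_cast hm _
      have : 0 ≤ w σ₀ * (1 / 2) ^ n := by have := hw0 σ₀; positivity
      nlinarith
  -- distinct digits lead to disjoint intervals, so nodes determine digits
  have hinj : ∀ σ i j, i < m σ → j < m σ → f σ i = f σ j → i = j := by
    have key : ∀ σ i j, i < j → j < m σ → f σ i ≠ f σ j := by
      intro σ i j hij hj h
      have h1 := hsep σ i j hij hj
      rw [h] at h1
      have h2 := hab (f σ j)
      have h3 : (0 : ℝ) < (j : ℝ) - i := by
        have : (i : ℝ) < j := by exact_mod_cast hij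
        linarith
      have h4 : 0 < (b σ - a σ) / m σ := div_pos (by linarith [hab σ]) (hmpos σ)
      have : 0 < c * ((j : ℝ) - i) * ((b σ - a σ) / m σ) := by positivity
      linarith
    intro σ i j hi hj h
    rcases lt_trichotomy i j with h1 | h1 | h1
    · exact absurd h (key σ i j h1 hj)
    · exact h1
    · exact absurd h.symm (key σ j i h1 hi)
  -- as long as the orbits agree, the mass between `y` and `y'` lies in the current node
  have hdiff : ∀ y ∈ Ico (0 : ℝ) 1, ∀ y' ∈ Ico (0 : ℝ) 1, ∀ n,
      (∀ k ≤ n, (st y k).1 = (st y' k).1) →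
      (y - y') * w σ₀ = ((st y n).2 - (st y' n).2) * w (st y n).1 := by
    intro y hy y' hy' n
    induction n with
    | zero => intro _; simp [st0]
    | succ n ih =>
      intro h
      rw [ih fun k hk => h k (by omega)]
      have e := h n (by omega)
      have e' := h (n + 1) le_rfl
      rw [hwS y hy]
      have hd : ⌊(st y n).2 * m (st y n).1⌋₊ = ⌊(st y' n).2 * m (st y' n).1⌋₊ := by
        have d1 := hdig y hy n
        have d2 := hdig y' hy' n
        rw [stS1, stS1] at e'
        rw [← e] at e' d2 ⊢
        exact hinj _ _ _ d1 d2 e'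
      rw [stS2, stS2, hd, ← e]
      have := (hmpos (st y n).1).ne'
      field_simp
      ring
  -- the inverse Hölder estimate, with the digits of `y` and `y'` compared at first difference
  have hhol : ∀ y ∈ Ico (0 : ℝ) 1, ∀ y' ∈ Ico (0 : ℝ) 1,
      |y - y'| ≤ 2 / (c * w σ₀) * |g y - g y'| ^ s := by
    intro y hy y' hy'
    by_cases hall : ∀ k, (st y k).1 = (st y' k).1
    · have hz : |y - y'| ≤ 0 := by
        have hlim : Tendsto (fun n : ℕ => ((1 : ℝ) / 2) ^ n) atTop (nhds 0) :=
          tendsto_pow_atTop_nhds_zero_of_lt_one (by norm_num) (by norm_num)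
        refine ge_of_tendsto' hlim fun n => ?_
        have h1 := hdiff y hy y' hy' n fun k _ => hall k
        have h2 := hwle y hy n
        have h3 := hpos y hy n
        have h4 := hpos y' hy' n
        have h5 : |(st y n).2 - (st y' n).2| ≤ 1 := by
          rw [abs_le]; constructor <;> linarith [h3.1, h3.2, h4.1, h4.2]
        have h6 : |y - y'| * w σ₀ = |(st y n).2 - (st y' n).2| * w (st y n).1 := by
          rw [← abs_of_pos (hw0 σ₀), ← abs_mul, h1, abs_mul, abs_of_pos (hw0 _)]
        have h7 : |y - y'| * w σ₀ ≤ (1 / 2) ^ n * w σ₀ := by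
          rw [h6]; nlinarith [hw0 (st y n).1]
        exact le_of_mul_le_mul_right h7 (hw0 σ₀)
      have : 0 ≤ 2 / (c * w σ₀) * |g y - g y'| ^ s := by have := hw0 σ₀; positivity
      linarith
    · push Not at hall
      classical
      have hn := Nat.find_spec hall
      have hmin := fun k (hk : k < Nat.find hall) => not_not.1 (Nat.find_min hall hk)
      generalize Nat.find hall = n at hn hmin
      cases n with
      | zero => simp [st0] at hn
      | succ n =>
        have hd := hdiff y hy y' hy' n fun k hk => hmin k (by omega)
        have e := hmin n (by omega)
        have hx := hg y hy (n + 1)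
        have hx' := hg y' hy' (n + 1)
        have hX := hg y hy n
        have hX' := hg y' hy' n
        have d1 := hdig y hy n
        have d2 := hdig y' hy' n
        have p1 := hpos y hy n
        have p2 := hpos y' hy' n
        rw [stS1] at hx hx'
        rw [stS1, stS1] at hn
        rw [← e] at hx' hn d2 hX'
        generalize (st y n).1 = σ at *
        generalize (st y n).2 = t at *
        generalize (st y' n).2 = t' at *
        have hM := hmpos σ
        have f1 := Nat.floor_le (mul_nonneg p1.1 hM.le)
        have f2 := Nat.floor_le (mul_nonneg p2.1 hM.le)
        have g1 := Nat.lt_floor_add_one (t * m σ)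
        have g2 := Nat.lt_floor_add_one (t' * m σ)
        generalize ⌊t * (m σ : ℝ)⌋₊ = i at *
        generalize ⌊t' * (m σ : ℝ)⌋₊ = j at *
        have hij : i ≠ j := fun h => hn (by rw [h])
        have hl : 0 < b σ - a σ := by linarith [hab σ]
        -- `D` is the number of slots separating the two digits
        obtain ⟨D, hD1, hDt, hDg⟩ : ∃ D : ℝ, 1 ≤ D ∧ |t - t'| * m σ ≤ D + 1 ∧
            c * D * ((b σ - a σ) / m σ) ≤ |g y - g y'| := by
          rcases lt_or_gt_of_ne hij with h | h
          · have h1 : (i : ℝ) + 1 ≤ j := by exact_mod_cast h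
            refine ⟨(j : ℝ) - i, by linarith, ?_, ?_⟩
            · rw [← abs_of_pos hM, ← abs_mul, abs_le]
              constructor <;> nlinarith
            · have := hsep σ i j h d2
              rw [abs_sub_comm]
              refine le_trans ?_ (le_abs_self _)
              linarith [hx.2, hx'.1]
          · have h1 : (j : ℝ) + 1 ≤ i := by exact_mod_cast h
            refine ⟨(i : ℝ) - j, by linarith, ?_, ?_⟩
            · rw [← abs_of_pos hM, ← abs_mul, abs_le]
              constructor <;> nlinarith
            · have := hsep σ j i h d1
              refine le_trans ?_ (le_abs_self _)
              linarith [hx'.2, hx.1]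
        have hgl : |g y - g y'| ≤ b σ - a σ := by
          rw [abs_le]; constructor <;> linarith [hX.1, hX.2, hX'.1, hX'.2]
        have hgpos : 0 < |g y - g y'| := lt_of_lt_of_le (by positivity) hDg
        set G := |g y - g y'| with hG
        -- `t ↦ t ^ (s - 1)` is decreasing, and `G` is at most the length of the interval of `σ`
        have hW : w σ ≤ G ^ s / G * (b σ - a σ) := by
          refine (hw σ).trans ?_
          have h1 : (b σ - a σ) ^ s = (b σ - a σ) ^ (s - 1) * (b σ - a σ) := by
            rw [Real.rpow_sub_one hl.ne']; field_simp
          have h2 : G ^ s / G = G ^ (s - 1) := by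
            rw [Real.rpow_sub_one hgpos.ne']
          rw [h1, h2]
          exact mul_le_mul_of_nonneg_right
            (Real.rpow_le_rpow_of_nonpos hgpos hgl (by linarith)) hl.le
        have h6 : |y - y'| * w σ₀ = |t - t'| * w σ := by
          rw [← abs_of_pos (hw0 σ₀), ← abs_mul, hd, abs_mul, abs_of_pos (hw0 _)]
        have h7 : |t - t'| ≤ 2 * D / m σ := by
          rw [le_div_iff₀ hM]; linarith
        have h8 : D / m σ * (b σ - a σ) ≤ G / c := by
          rw [le_div_iff₀ hc]
          calc D / m σ * (b σ - a σ) * c = c * D * ((b σ - a σ) / m σ) := by ring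
            _ ≤ G := hDg
        have h9 : |y - y'| * w σ₀ ≤ 2 / c * G ^ s := by
          rw [h6]
          calc |t - t'| * w σ ≤ (2 * D / m σ) * (G ^ s / G * (b σ - a σ)) :=
                mul_le_mul h7 hW (hw0 σ).le (by positivity)
            _ = 2 * (G ^ s / G) * (D / m σ * (b σ - a σ)) := by ring
            _ ≤ 2 * (G ^ s / G) * (G / c) := by gcongr
            _ = 2 / c * G ^ s := by field_simp
        have : 2 / (c * w σ₀) * G ^ s = (2 / c * G ^ s) / w σ₀ := by field_simp
        rw [this, le_div_iff₀ (hw0 σ₀)]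
        exact h9
  refine ⟨g '' Ico 0 1, ?_, ?_⟩
  · have hginj : InjOn g (Ico 0 1) := by
      intro y hy y' hy' h
      have := hhol y hy y' hy'
      rw [h, sub_self, abs_zero, Real.zero_rpow hs0.ne', mul_zero] at this
      exact sub_eq_zero.1 (abs_eq_zero.1 (le_antisymm this (abs_nonneg _)))
    let h := Function.invFunOn g (Ico 0 1)
    have hleft : ∀ y ∈ Ico (0 : ℝ) 1, h (g y) = y := fun y hy =>
      hginj.leftInvOn_invFunOn hy
    have hH : HolderOnWith (2 / (c * w σ₀)).toNNReal s.toNNReal h (g '' Ico 0 1) := by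
      rintro _ ⟨y, hy, rfl⟩ _ ⟨y', hy', rfl⟩
      rw [hleft y hy, hleft y' hy', edist_dist, edist_dist, Real.dist_eq, Real.dist_eq,
        Real.coe_toNNReal _ hs0.le, ENNReal.ofReal_rpow_of_nonneg (abs_nonneg _) hs0.le]
      change _ ≤ ENNReal.ofReal _ * _
      rw [← ENNReal.ofReal_mul (by have := hw0 σ₀; positivity)]
      exact ENNReal.ofReal_le_ofReal (hhol y hy y' hy')
    have himg : h '' (g '' Ico 0 1) = Ico 0 1 := by
      rw [image_image]
      ext z; constructor
      · rintro ⟨y, hy, rfl⟩; simpa only [hleft y hy] using hy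
      · intro hz; exact ⟨z, hz, hleft z hz⟩
    have hle := hH.dimH_image_le (Real.toNNReal_pos.2 hs0)
    rw [himg, Real.dimH_of_nonempty_interior (by simp [interior_Ico])] at hle
    have hne : ((s.toNNReal : NNReal) : ENNReal) ≠ 0 := by
      simpa using hs0
    rw [ENNReal.le_div_iff_mul_le (Or.inl hne) (Or.inl ENNReal.coe_ne_top)] at hle
    simpa [ENNReal.ofReal] using hle
  · rintro _ ⟨y, hy, rfl⟩
    refine ⟨fun n => (st y n).1, rfl, fun n => ⟨?_, hg y hy n⟩⟩
    change P (st y n).1 (st y (n + 1)).1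
    rw [stS1]
    exact (hf _ _ (hdig y hy n)).2.2

/-! ### Separation of rationals -/

/-- The increasing enumeration of a `g`-separated finite set is `g`-separated with multiplicity. -/
theorem exists_sorted_enum (T : Finset ℝ) {g : ℝ}
    (hT : ∀ x ∈ T, ∀ y ∈ T, x < y → x + g ≤ y) :
    ∃ x : ℕ → ℝ, (∀ i < T.card, x i ∈ T) ∧
      ∀ i j : ℕ, i < j → j < T.card → x i + ((j : ℝ) - i) * g ≤ x j := by
  let e := T.orderEmbOfFin rfl
  let x : ℕ → ℝ := fun i => if h : i < T.card then e ⟨i, h⟩ else 0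
  have hx : ∀ i (h : i < T.card), x i = e ⟨i, h⟩ := fun i h => by simp [x, h]
  have hmem : ∀ i < T.card, x i ∈ T := fun i h => by
    rw [hx i h]; exact Finset.orderEmbOfFin_mem _ _ _
  refine ⟨x, hmem, fun i j hij => ?_⟩
  induction j, hij using Nat.le_induction with
  | base =>
    intro hj
    have : x i < x (i + 1) := by
      rw [hx i (by omega), hx (i + 1) hj]
      exact e.strictMono (by simp [Fin.lt_def])
    have := hT _ (hmem i (by omega)) _ (hmem _ hj) this
    push_cast; linarith
  | succ j hij ih =>
    intro hj
    have h1 := ih (by omega)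
    have : x j < x (j + 1) := by
      rw [hx j (by omega), hx (j + 1) hj]
      exact e.strictMono (by simp [Fin.lt_def])
    have := hT _ (hmem j (by omega)) _ (hmem _ hj) this
    push_cast; linarith

theorem card_le_of_separated (T : Finset ℝ) {g a b : ℝ} (hg : 0 < g) (hab : a ≤ b)
    (hT : ∀ x ∈ T, ∀ y ∈ T, x < y → x + g ≤ y) (hI : ∀ x ∈ T, x ∈ Icc a b) :
    (T.card : ℝ) ≤ 1 + (b - a) / g := by
  obtain ⟨x, hx, hsep⟩ := exists_sorted_enum T hT
  have h0 : 0 ≤ (b - a) / g := div_nonneg (by linarith) hg.le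
  rcases Nat.lt_or_ge T.card 2 with h | h
  · have : (T.card : ℝ) ≤ 1 := by exact_mod_cast Nat.le_of_lt_succ h
    linarith
  · have h1 := hsep 0 (T.card - 1) (by omega) (by omega)
    have h2 := hI _ (hx 0 (by omega))
    have h3 := hI _ (hx (T.card - 1) (by omega))
    rw [Nat.cast_sub (by omega)] at h1
    rw [← sub_le_iff_le_add', le_div_iff₀ hg]
    simp only [Nat.cast_one, Nat.cast_zero, sub_zero] at h1
    linarith [h2.1, h3.2]

theorem one_div_mul_le_abs_sub {p p' : ℤ} {q q' : ℕ} (hq : 0 < q) (hq' : 0 < q')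
    (hne : (p : ℝ) / q ≠ (p' : ℝ) / q') :
    1 / ((q : ℝ) * q') ≤ |(p : ℝ) / q - (p' : ℝ) / q'| := by
  have h1 : (0 : ℝ) < q := by exact_mod_cast hq
  have h2 : (0 : ℝ) < q' := by exact_mod_cast hq'
  rw [div_sub_div _ _ h1.ne' h2.ne', abs_div, abs_of_pos (mul_pos h1 h2)]
  gcongr
  have h3 : p * q' - q * p' ≠ 0 := by
    intro h
    apply hne
    rw [div_eq_div_iff h1.ne' h2.ne']
    have : (p : ℝ) * q' - q * p' = 0 := by exact_mod_cast h
    linarith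
  exact_mod_cast Int.one_le_abs h3

/-- The points of `[a, b]` within `r` of a rational with denominator in `[D, 2D)`. -/
def nearBlock (a b D r : ℝ) : Set ℝ :=
  {x | x ∈ Icc a b ∧ ∃ (p : ℤ) (q : ℕ), 0 < q ∧ D ≤ q ∧ (q : ℝ) < 2 * D ∧ |x - (p : ℝ) / q| ≤ r}

theorem finite_rationals (a b N : ℝ) :
    {y : ℝ | y ∈ Icc a b ∧ ∃ (p : ℤ) (q : ℕ), 0 < q ∧ (q : ℝ) ≤ N ∧ y = (p : ℝ) / q}.Finite := by
  obtain ⟨M, hM⟩ := exists_nat_ge (max |a| |b| * N)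
  have hfin : ((Finset.Icc (-(M : ℤ)) M ×ˢ Finset.Icc 1 ⌊N⌋₊ : Finset (ℤ × ℕ)) : Set (ℤ × ℕ)).Finite :=
    Finset.finite_toSet _
  refine (hfin.image fun z : ℤ × ℕ => (z.1 : ℝ) / z.2).subset ?_
  rintro y ⟨hy, p, q, hq, hqN, rfl⟩
  refine ⟨(p, q), ?_, rfl⟩
  have hq' : (0 : ℝ) < q := by exact_mod_cast hq
  have h1 : |(p : ℝ) / q| ≤ max |a| |b| := abs_le_max_abs_abs hy.1 hy.2
  rw [abs_div, abs_of_pos hq', div_le_iff₀ hq'] at h1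
  have h2 : |(p : ℝ)| ≤ M := by
    refine h1.trans (le_trans ?_ hM)
    gcongr
  have h3 : |p| ≤ M := by exact_mod_cast h2
  rw [abs_le] at h3
  simp only [Finset.coe_product, Finset.coe_Icc, mem_prod, mem_Icc]
  exact ⟨h3, hq, Nat.le_floor hqN⟩

/-- Rationals with denominator in `[D, 2D)` are `1 / (4 D²)`-separated, so at most
`1 + 4 D² (b - a + 2 r)` of them are within `r` of `[a, b]`. -/
theorem volume_nearBlock_le {a b D r : ℝ} (hab : a ≤ b) (hD : 0 < D) (hr : 0 ≤ r) :
    volume (nearBlock a b D r) ≤ ENNReal.ofReal (2 * r * (1 + 4 * D ^ 2 * (b - a + 2 * r))) := by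
  set F : Set ℝ := {y : ℝ | y ∈ Icc (a - r) (b + r) ∧ ∃ (p : ℤ) (q : ℕ), 0 < q ∧ D ≤ q ∧
    (q : ℝ) < 2 * D ∧ y = (p : ℝ) / q} with hF
  have hfin : F.Finite := (finite_rationals (a - r) (b + r) (2 * D)).subset (by
    rintro y ⟨hy, p, q, hq, _, h2, h3⟩
    exact ⟨hy, p, q, hq, h2.le, h3⟩)
  have hcard : (hfin.toFinset.card : ℝ) ≤ 1 + ((b + r) - (a - r)) / (1 / (4 * D ^ 2)) := by
    refine card_le_of_separated _ (by positivity) (by linarith) ?_ ?_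
    · intro x hx y hy hxy
      rw [Finite.mem_toFinset] at hx hy
      obtain ⟨_, p, q, hq, hDq, hqD, rfl⟩ := hx
      obtain ⟨_, p', q', hq', hDq', hqD', rfl⟩ := hy
      have h1 := one_div_mul_le_abs_sub hq hq' hxy.ne
      rw [abs_sub_comm, abs_of_pos (by linarith)] at h1
      have h2 : 1 / (4 * D ^ 2) ≤ 1 / ((q : ℝ) * q') := by
        have h5 : (0 : ℝ) < q := by exact_mod_cast hq
        have h6 : (0 : ℝ) < q' := by exact_mod_cast hq'
        apply one_div_le_one_div_of_le (by positivity)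
        nlinarith
      linarith
    · intro x hx
      rw [Finite.mem_toFinset] at hx
      exact hx.1
  have hsub : nearBlock a b D r ⊆ ⋃ y ∈ hfin.toFinset, Icc (y - r) (y + r) := by
    rintro x ⟨hx, p, q, hq, hDq, hqD, h⟩
    rw [abs_le] at h
    simp only [mem_iUnion, Finite.mem_toFinset]
    refine ⟨(p : ℝ) / q, ⟨⟨?_, ?_⟩, p, q, hq, hDq, hqD, rfl⟩, ?_, ?_⟩ <;>
      linarith [h.1, h.2, hx.1, hx.2]
  calc volume (nearBlock a b D r) ≤ _ := measure_mono hsub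
    _ ≤ ∑ y ∈ hfin.toFinset, volume (Icc (y - r) (y + r)) := measure_biUnion_finset_le _ _
    _ = hfin.toFinset.card * ENNReal.ofReal (2 * r) := by
      simp only [Real.volume_Icc, add_sub_sub_cancel, Finset.sum_const, nsmul_eq_mul, ← two_mul]
    _ = ENNReal.ofReal (hfin.toFinset.card * (2 * r)) := by
      rw [ENNReal.ofReal_mul (Nat.cast_nonneg _), ENNReal.ofReal_natCast]
    _ ≤ _ := by
      apply ENNReal.ofReal_le_ofReal
      rw [mul_comm]
      gcongr
      refine hcard.trans (le_of_eq ?_)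
      field_simp
      ring

/-! ### Counting well-placed rationals -/

theorem psi_antitone {Ψ : ℝ → ℝ} (hΨpos : ∀ q : ℝ, 0 < q → 0 < Ψ q)
    (hmono : AntitoneOn (fun q : ℝ => q ^ 2 * Ψ q) (Ioi 0)) {q r : ℝ} (hq : 0 < q) (hqr : q ≤ r) :
    Ψ r ≤ Ψ q := by
  have hr : 0 < r := hq.trans_le hqr
  have h : r ^ 2 * Ψ r ≤ q ^ 2 * Ψ q := hmono hq hr hqr
  have h1 : q ^ 2 * Ψ r ≤ r ^ 2 * Ψ r :=
    mul_le_mul_of_nonneg_right (by gcongr) (hΨpos r hr).le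
  exact le_of_mul_le_mul_left (h1.trans h) (by positivity)

/-- By Cauchy condensation, the convergence of `∑ q Ψ q` makes the dyadic sums of `q² Ψ q` small
uniformly in the starting point `R`. -/
theorem dyadic_tail {Ψ : ℝ → ℝ} (hΨpos : ∀ q : ℝ, 0 < q → 0 < Ψ q)
    (hmono : AntitoneOn (fun q : ℝ => q ^ 2 * Ψ q) (Ioi 0))
    (hsum : Summable (fun q : ℕ => (q : ℝ) * Ψ (q : ℝ))) {ε : ℝ} (hε : 0 < ε) :
    ∃ R₀ : ℝ, 0 < R₀ ∧ ∀ R, R₀ ≤ R → ∀ N : ℕ,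
      ∑ j ∈ Finset.range N, (2 ^ j * R) ^ 2 * Ψ (2 ^ j * R) ≤ ε := by
  have hcond : Summable fun k : ℕ => (2 : ℝ) ^ k * (((2 ^ k : ℕ) : ℝ) * Ψ ((2 ^ k : ℕ) : ℝ)) := by
    refine (summable_condensed_iff_of_nonneg (f := fun q : ℕ => (q : ℝ) * Ψ (q : ℝ)) ?_ ?_).2 hsum
    · intro n
      rcases n.eq_zero_or_pos with rfl | hn
      · simp
      · have := hΨpos n (by exact_mod_cast hn)
        positivity
    · intro m n hm hmn
      have hm' : (0 : ℝ) < m := by exact_mod_cast hm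
      have hmn' : (m : ℝ) ≤ n := by exact_mod_cast hmn
      have hn' : (0 : ℝ) < n := hm'.trans_le hmn'
      have h : (n : ℝ) ^ 2 * Ψ n ≤ (m : ℝ) ^ 2 * Ψ m := hmono hm' hn' hmn'
      have h1 : (m : ℝ) * (n * Ψ n) ≤ n * (n * Ψ n) :=
        mul_le_mul_of_nonneg_right hmn' (by have := hΨpos n hn'; positivity)
      exact le_of_mul_le_mul_left (by nlinarith) hm'
  set h : ℕ → ℝ := fun k => (2 : ℝ) ^ k * (((2 ^ k : ℕ) : ℝ) * Ψ ((2 ^ k : ℕ) : ℝ)) with hh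
  have hh' : ∀ k, h k = (2 ^ k) ^ 2 * Ψ (2 ^ k) := fun k => by simp only [hh]; push_cast; ring
  have hnn : ∀ k, 0 ≤ h k := fun k => by
    rw [hh']; have := hΨpos (2 ^ k) (by positivity); positivity
  obtain ⟨k₀, hk₀⟩ := ((tendsto_sum_nat_add h).eventually (gt_mem_nhds hε)).exists
  refine ⟨2 ^ k₀, by positivity, fun R hR N => ?_⟩
  calc ∑ j ∈ Finset.range N, (2 ^ j * R) ^ 2 * Ψ (2 ^ j * R)
      ≤ ∑ j ∈ Finset.range N, h (j + k₀) := by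
        refine Finset.sum_le_sum fun j _ => ?_
        rw [hh']
        have hR0 : 0 < R := lt_of_lt_of_le (by positivity) hR
        refine hmono (mem_Ioi.2 (by positivity)) (mem_Ioi.2 (by positivity)) ?_
        rw [pow_add]
        gcongr
    _ ≤ ∑' j, h (j + k₀) := ((summable_nat_add_iff k₀).2 hcond).sum_le_tsum _ fun j _ => hnn _
    _ ≤ ε := hk₀.le

/-- The rationals `y ∈ [a, b]`, of denominator between `Q / 1024` and `Q` in lowest terms, whose
`Ψ`-neighbourhood on the right stays in `[a, b]` and which are at distance more than `2 Ψ q` from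
every `p / q` with `q` at least `R` and less than the denominator of `y`. -/
def goodCenters (Ψ : ℝ → ℝ) (a b R : ℝ) (Q : ℕ) : Set ℝ :=
  {y | ∃ r : ℚ, y = r ∧ (Q : ℝ) ≤ 1024 * r.den ∧ r.den ≤ Q ∧ a ≤ y ∧ y + Ψ r.den ≤ b ∧
    ∀ (p : ℤ) (q : ℕ), R ≤ q → q < r.den → 2 * Ψ q < |y - (p : ℝ) / q|}

theorem goodCenters_finite (Ψ : ℝ → ℝ) (hΨpos : ∀ q : ℝ, 0 < q → 0 < Ψ q) (a b R : ℝ) (Q : ℕ) :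
    (goodCenters Ψ a b R Q).Finite := by
  refine (finite_rationals a b Q).subset ?_
  rintro y ⟨r, rfl, _, h2, h3, h4, _⟩
  have := hΨpos r.den (by exact_mod_cast r.den_pos)
  exact ⟨⟨h3, by linarith⟩, r.num, r.den, r.den_pos, by exact_mod_cast h2, Rat.cast_def r⟩

/-- There are at least `(b - a) Q² / 8192` good centres. The middle nine tenths of `[a, b]` are
covered by the points having a Dirichlet approximation of small denominator (measure at most
`(b - a) / 16`), the points near a rational of intermediate denominator (measure at most
`21 (b - a) / 50`, which is where `45 Ψ R ≤ b - a` enters), and the intervals of radius `1024 / Q²`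
around the good centres. -/
theorem goodCenters_card {Ψ : ℝ → ℝ} (hΨpos : ∀ q : ℝ, 0 < q → 0 < Ψ q)
    (hmono : AntitoneOn (fun q : ℝ => q ^ 2 * Ψ q) (Ioi 0)) {a b R : ℝ} {Q : ℕ}
    (hab : a < b) (hR : 0 < R) (hΨR : 45 * Ψ R ≤ b - a)
    (htail : ∀ N : ℕ, ∑ j ∈ Finset.range N, (2 ^ j * R) ^ 2 * Ψ (2 ^ j * R) ≤ 1 / 1000)
    (hQR : 1024 * (R + 1) ≤ Q) (hQL : 2 ^ 26 ≤ Q * (b - a)) :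
    (b - a) * Q ^ 2 / 8192 ≤ (goodCenters_finite Ψ hΨpos a b R Q).toFinset.card := by
  set T := (goodCenters_finite Ψ hΨpos a b R Q).toFinset with hT
  set L := b - a with hL
  have hL0 : 0 < L := by linarith
  have hQ0 : (0 : ℝ) < Q := by linarith
  have hQ1 : (1024 : ℝ) ≤ Q := by linarith
  have hQn : 0 < Q := by exact_mod_cast hQ0
  have hQ2L : 2 ^ 26 ≤ (Q : ℝ) ^ 2 * L := by nlinarith
  -- `2 ^ d` is comparable with `Q / 512`
  obtain ⟨d, hd1, hd2⟩ : ∃ d : ℕ, (2 : ℝ) ^ d * 512 ≤ Q ∧ (Q : ℝ) < 1024 * 2 ^ d := by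
    obtain ⟨d, h1, h2⟩ := exists_nat_pow_near (x := (Q : ℝ) / 512) (y := 2)
      (by rw [le_div_iff₀ (by norm_num)]; linarith) (by norm_num)
    refine ⟨d, ?_, ?_⟩
    · rwa [le_div_iff₀ (by norm_num)] at h1
    · rw [div_lt_iff₀ (by norm_num), pow_succ] at h2; linarith
  obtain ⟨N, hN⟩ : ∃ N : ℕ, (Q : ℝ) < 2 ^ N * R := by
    obtain ⟨N, hN⟩ := pow_unbounded_of_one_lt ((Q : ℝ) / R) (one_lt_two)
    exact ⟨N, by rwa [div_lt_iff₀ hR] at hN⟩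
  have hcover : Icc (a + L / 20) (b - L / 20) ⊆
      ((⋃ j ∈ Finset.range d, nearBlock a b (2 ^ j) (1 / (2 ^ j * Q))) ∪
       (⋃ j ∈ Finset.range N, nearBlock a b (2 ^ j * R) (4 * Ψ (2 ^ j * R)))) ∪
       ⋃ y ∈ T, Icc (y - 1024 / (Q : ℝ) ^ 2) (y + 1024 / (Q : ℝ) ^ 2) := by
    intro x hx
    by_contra hcon
    simp only [mem_union, mem_iUnion, not_or, not_exists, Finset.mem_range] at hcon
    obtain ⟨⟨hA, hB⟩, hC⟩ := hcon
    have hxab : x ∈ Icc a b := ⟨by linarith [hx.1], by linarith [hx.2]⟩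
    obtain ⟨r, hr, hrQ⟩ := Real.exists_rat_abs_sub_le_and_den_le x hQn
    have hden : (0 : ℝ) < r.den := by exact_mod_cast r.den_pos
    have hrQ' : (r.den : ℝ) ≤ Q := by exact_mod_cast hrQ
    have hr' : |x - r| ≤ 1 / (r.den * Q) :=
      hr.trans (one_div_le_one_div_of_le (by positivity) (by nlinarith))
    have hrdef : (r : ℝ) = (r.num : ℝ) / r.den := Rat.cast_def r
    -- the denominator is large, since `x` avoids the first family
    have hbig : (2 : ℝ) ^ d ≤ r.den := by
      by_contra hlt
      push Not at hlt
      obtain ⟨j, hj1, hj2⟩ := exists_nat_pow_near (x := (r.den : ℝ)) (y := 2)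
        (by exact_mod_cast r.den_pos) (by norm_num)
      have hjd : j < d := (pow_lt_pow_iff_right₀ (one_lt_two : (1 : ℝ) < 2)).1 (hj1.trans_lt hlt)
      refine hA j hjd ⟨hxab, r.num, r.den, r.den_pos, hj1, by rw [pow_succ] at hj2; linarith, ?_⟩
      rw [← hrdef]
      refine hr'.trans (one_div_le_one_div_of_le (by positivity) (by gcongr))
    have hden1024 : (Q : ℝ) < 1024 * r.den := by linarith
    have hdist : |x - r| ≤ 1024 / (Q : ℝ) ^ 2 := by
      refine hr'.trans ?_
      rw [div_le_div_iff₀ (by positivity) (by positivity)]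
      nlinarith
    have hsmall : 1024 / (Q : ℝ) ^ 2 ≤ L / 40 := by
      rw [div_le_div_iff₀ (by positivity) (by positivity)]
      nlinarith
    have hdR : R ≤ r.den := by nlinarith
    have hΨd : Ψ r.den ≤ L / 40 := by
      have h1 : (r.den : ℝ) ^ 2 * Ψ r.den ≤ R ^ 2 * Ψ R := hmono hR hden hdR
      have h2 : R ^ 2 * Ψ R ≤ 1 / 1000 := by simpa using htail 1
      have h3 : (Q : ℝ) ^ 2 ≤ 1024 ^ 2 * (r.den : ℝ) ^ 2 := by
        rw [← mul_pow]; gcongr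
      have h4 : 64 ≤ (r.den : ℝ) ^ 2 * L := by nlinarith
      have h5 : (r.den : ℝ) ^ 2 * Ψ r.den ≤ (r.den : ℝ) ^ 2 * (L / 40) := by linarith
      exact le_of_mul_le_mul_left h5 (by positivity)
    rw [abs_le] at hdist
    refine hC r ?_ ⟨by linarith [hdist.1], by linarith [hdist.2]⟩
    rw [hT, Finite.mem_toFinset]
    refine ⟨r, rfl, hden1024.le, hrQ, by linarith [hdist.2, hx.1],
      by linarith [hdist.1, hx.2], fun p q hRq hq => ?_⟩
    by_contra hle
    push Not at hle
    have hq0 : (0 : ℝ) < q := hR.trans_le hRq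
    have hqn : 0 < q := by exact_mod_cast hq0
    have hqQ : (q : ℝ) < r.den := by exact_mod_cast hq
    -- a reduced fraction differs from every fraction with a smaller denominator
    have hne : (r.num : ℝ) / r.den ≠ (p : ℝ) / q := by
      intro h
      have h1 : r = (p : ℚ) / q := by
        have : (r : ℝ) = ((p / q : ℚ) : ℝ) := by rw [hrdef, h]; push_cast; rfl
        exact_mod_cast this
      have h2 : ((r.den : ℤ)) ∣ q := by
        rw [h1]; exact_mod_cast Rat.den_dvd p q
      have := Nat.le_of_dvd hqn (by exact_mod_cast h2)
      omega
    have hgap := one_div_mul_le_abs_sub r.den_pos hqn hne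
    rw [← hrdef] at hgap
    -- `|x - r| ≤ 1 / (r.den * Q) ≤ |r - p / q| ≤ 2 Ψ q`, so `x` lies in the second family
    have hx4 : |x - (p : ℝ) / q| ≤ 4 * Ψ q := by
      have h1 : 1 / ((r.den : ℝ) * Q) ≤ 1 / ((r.den : ℝ) * q) :=
        one_div_le_one_div_of_le (by positivity) (by gcongr; linarith)
      have h2 := abs_sub_le x r ((p : ℝ) / q)
      linarith
    obtain ⟨j, hj1, hj2⟩ := exists_nat_pow_near (x := (q : ℝ) / R) (y := 2)
      (by rwa [one_le_div hR]) (by norm_num)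
    rw [le_div_iff₀ hR] at hj1
    rw [div_lt_iff₀ hR, pow_succ] at hj2
    have hjN : j < N := by
      have : (2 : ℝ) ^ j * R < 2 ^ N * R := by linarith
      exact (pow_lt_pow_iff_right₀ (one_lt_two : (1 : ℝ) < 2)).1 (lt_of_mul_lt_mul_right this hR.le)
    refine hB j hjN ⟨hxab, p, q, hqn, hj1, by linarith, hx4.trans ?_⟩
    have := psi_antitone hΨpos hmono (by positivity : 0 < 2 ^ j * R) hj1
    linarith
  -- `A j` and `B j` bound the measures of the `j`-th blocks of the two families
  set A : ℕ → ℝ := fun j => 2 * (1 / (2 ^ j * Q)) * (1 + 4 * (2 ^ j) ^ 2 *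
    (b - a + 2 * (1 / (2 ^ j * Q)))) with hAdef
  set B : ℕ → ℝ := fun j => 2 * (4 * Ψ (2 ^ j * R)) * (1 + 4 * (2 ^ j * R) ^ 2 *
    (b - a + 2 * (4 * Ψ (2 ^ j * R)))) with hBdef
  have hψ : ∀ j : ℕ, 0 < Ψ (2 ^ j * R) := fun j => hΨpos _ (by positivity)
  have hA0 : ∀ j, 0 ≤ A j := fun j => by
    have : 0 ≤ b - a := hL0.le
    simp only [hAdef]; positivity
  have hB0 : ∀ j, 0 ≤ B j := fun j => by
    have : 0 ≤ b - a := hL0.le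
    have := hψ j
    simp only [hBdef]; positivity
  have hvol : 9 / 10 * L ≤ ∑ j ∈ Finset.range d, A j + ∑ j ∈ Finset.range N, B j +
      T.card * (2048 / (Q : ℝ) ^ 2) := by
    have hSA : 0 ≤ ∑ j ∈ Finset.range d, A j := Finset.sum_nonneg fun j _ => hA0 j
    have hSB : 0 ≤ ∑ j ∈ Finset.range N, B j := Finset.sum_nonneg fun j _ => hB0 j
    rw [← ENNReal.ofReal_le_ofReal_iff (by positivity), ENNReal.ofReal_add (by positivity)
      (by positivity), ENNReal.ofReal_add hSA hSB, ENNReal.ofReal_sum_of_nonneg fun j _ => hA0 j,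
      ENNReal.ofReal_sum_of_nonneg fun j _ => hB0 j]
    calc ENNReal.ofReal (9 / 10 * L) = volume (Icc (a + L / 20) (b - L / 20)) := by
          rw [Real.volume_Icc]; congr 1; rw [hL]; ring
      _ ≤ _ := measure_mono hcover
      _ ≤ _ := measure_union_le _ _
      _ ≤ _ := by
        refine add_le_add ((measure_union_le _ _).trans (add_le_add ?_ ?_)) ?_
        · refine (measure_biUnion_finset_le _ _).trans (Finset.sum_le_sum fun j _ => ?_)
          exact volume_nearBlock_le hab.le (by positivity) (by positivity)
        · refine (measure_biUnion_finset_le _ _).trans (Finset.sum_le_sum fun j _ => ?_)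
          exact volume_nearBlock_le hab.le (by positivity) (by have := hψ j; positivity)
        · refine (measure_biUnion_finset_le _ _).trans (le_of_eq ?_)
          rw [ENNReal.ofReal_mul (Nat.cast_nonneg _), ENNReal.ofReal_natCast]
          simp only [Real.volume_Icc, add_sub_sub_cancel, Finset.sum_const, nsmul_eq_mul]
          congr 2; ring
  have hgeo : ∀ n : ℕ, ∑ j ∈ Finset.range n, ((1 : ℝ) / 2) ^ j ≤ 2 := sum_geometric_two_le
  have hSA : ∑ j ∈ Finset.range d, A j ≤ L / 16 := by
    have h1 : ∀ j ∈ Finset.range d, A j ≤ 2 / Q * (1 / 2) ^ j + 16 * L / Q * 2 ^ j := by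
      intro j _
      have hp : (1 : ℝ) ≤ 2 ^ j := one_le_pow₀ (by norm_num)
      have h2 : 2 * (1 / (2 ^ j * Q)) ≤ L := by
        rw [mul_one_div, div_le_iff₀ (by positivity)]
        nlinarith
      calc A j ≤ 2 * (1 / (2 ^ j * Q)) * (1 + 4 * (2 ^ j) ^ 2 * (L + L)) := by
            simp only [hAdef]; gcongr
        _ = _ := by
          rw [one_div_pow]; field_simp; ring
    have h3 : ∑ j ∈ Finset.range d, (2 : ℝ) ^ j ≤ 2 ^ d := by
      rw [geom_sum_eq (by norm_num)]; norm_num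
    refine (Finset.sum_le_sum h1).trans ?_
    rw [Finset.sum_add_distrib, ← Finset.mul_sum, ← Finset.mul_sum]
    have h4 : 2 / (Q : ℝ) * ∑ j ∈ Finset.range d, (1 / 2) ^ j ≤ 2 / Q * 2 := by
      gcongr; exact hgeo d
    have h5 : 16 * L / Q * ∑ j ∈ Finset.range d, (2 : ℝ) ^ j ≤ 16 * L / Q * (Q / 512) := by
      gcongr; linarith
    have h6 : 16 * L / Q * (Q / 512) = L / 32 := by field_simp; norm_num
    have h7 : 2 / (Q : ℝ) * 2 ≤ L / 32 := by
      rw [div_mul_eq_mul_div, div_le_div_iff₀ hQ0 (by norm_num)]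
      linarith
    linarith
  have hSB : ∑ j ∈ Finset.range N, B j ≤ 21 / 50 * L := by
    have h1 : ∀ j ∈ Finset.range N, B j ≤
        8 * Ψ R * (1 / 2) ^ j + 64 * L * ((2 ^ j * R) ^ 2 * Ψ (2 ^ j * R)) := by
      intro j _
      have hp : (1 : ℝ) ≤ 2 ^ j := one_le_pow₀ (by norm_num)
      have hRj : R ≤ 2 ^ j * R := by nlinarith
      have h2 : (2 ^ j * R) ^ 2 * Ψ (2 ^ j * R) ≤ R ^ 2 * Ψ R :=
        hmono hR (mem_Ioi.2 (by positivity)) hRj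
      have h3 := psi_antitone hΨpos hmono hR hRj
      have h4 : Ψ (2 ^ j * R) ≤ Ψ R * (1 / 2) ^ j := by
        rw [one_div_pow, mul_one_div, le_div_iff₀ (by positivity)]
        have h5 : R ^ 2 * (Ψ (2 ^ j * R) * (2 ^ j) ^ 2) ≤ R ^ 2 * Ψ R := by
          linarith [mul_pow ((2 : ℝ) ^ j) R 2]
        have h6 := le_of_mul_le_mul_left h5 (by positivity)
        nlinarith [mul_le_mul_of_nonneg_left hp (mul_pos (hψ j) (pow_pos (two_pos : (0:ℝ) < 2) j)).le]
      have h5 := hψ j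
      calc B j ≤ 2 * (4 * Ψ (2 ^ j * R)) * (1 + 4 * (2 ^ j * R) ^ 2 * (L + L)) := by
            simp only [hBdef]; gcongr; linarith
        _ = 8 * Ψ (2 ^ j * R) + 64 * L * ((2 ^ j * R) ^ 2 * Ψ (2 ^ j * R)) := by ring
        _ ≤ _ := by linarith
    refine (Finset.sum_le_sum h1).trans ?_
    rw [Finset.sum_add_distrib, ← Finset.mul_sum, ← Finset.mul_sum]
    have h4 : 8 * Ψ R * ∑ j ∈ Finset.range N, ((1 : ℝ) / 2) ^ j ≤ 8 * Ψ R * 2 := by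
      have := hΨpos R hR
      gcongr; exact hgeo N
    have h5 : 64 * L * ∑ j ∈ Finset.range N, (2 ^ j * R) ^ 2 * Ψ (2 ^ j * R) ≤
        64 * L * (1 / 1000) := by
      gcongr; exact htail N
    linarith
  have hfin : 2 / 5 * L ≤ T.card * (2048 / (Q : ℝ) ^ 2) := by linarith
  rw [mul_div_assoc', le_div_iff₀ (by positivity)] at hfin
  nlinarith

/-! ### Upper bound -/

/-- Infinitely many solutions `(p, q)` force arbitrarily large `q`, since `p` is bounded in terms
of `q` and `x`. -/
theorem exists_large_denominator {Ψ : ℝ → ℝ} (hΨ : ∀ q r : ℝ, 0 < q → q ≤ r → Ψ r ≤ Ψ q)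
    {x : ℝ} (hx : x ∈ WSet Ψ) (N : ℕ) :
    ∃ (p : ℤ) (q : ℕ), 0 < q ∧ N ≤ q ∧ |x - (p : ℝ) / q| ≤ Ψ q := by
  by_contra hcon
  push Not at hcon
  refine hx ?_
  obtain ⟨M, hM⟩ := exists_nat_ge (N * (|x| + |Ψ 1|))
  refine (Finset.finite_toSet (Finset.Icc (-(M : ℤ)) M ×ˢ Finset.Icc 0 N)).subset ?_
  rintro ⟨p, q⟩ ⟨hq, h⟩
  simp only at hq h
  have hqN : q < N := by
    by_contra hle
    exact absurd h (not_le.2 (hcon p q hq (by omega)))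
  have hq' : (0 : ℝ) < q := by exact_mod_cast hq
  have h1 : Ψ q ≤ |Ψ 1| := (hΨ 1 q one_pos (by exact_mod_cast hq)).trans (le_abs_self _)
  have h2 : |(p : ℝ) / q| ≤ |x| + |Ψ 1| := by
    have := abs_sub_abs_le_abs_sub ((p : ℝ) / q) x
    rw [abs_sub_comm] at this
    linarith
  rw [abs_div, abs_of_pos hq', div_le_iff₀ hq'] at h2
  have h3 : |(p : ℝ)| ≤ M := by
    refine h2.trans (le_trans ?_ hM)
    rw [mul_comm]
    have : (q : ℝ) ≤ N := by exact_mod_cast hqN.le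
    gcongr
  have h4 : |p| ≤ M := by exact_mod_cast h3
  rw [abs_le] at h4
  simp only [Finset.coe_product, Finset.coe_Icc, mem_prod, mem_Icc]
  exact ⟨h4, by omega, by omega⟩

/-- The upper bound, by covering with the halves of the annuli around `p / q` with `q ≥ n`. -/
theorem dimH_ESet_le {Ψ ω : ℝ → ℝ} (hΨpos : ∀ q : ℝ, 0 < q → 0 < Ψ q)
    (hωmem : ∀ q : ℝ, 0 < q → ω q ∈ Ioo (0 : ℝ) 1)
    (hΨ : ∀ q r : ℝ, 0 < q → q ≤ r → Ψ r ≤ Ψ q)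
    (hsum : Summable (fun q : ℕ => (q : ℝ) * Ψ (q : ℝ))) {d : ℝ} (hd : 0 < d)
    (hsd : Summable (fun q : ℕ => (q : ℝ) * (Ψ (q : ℝ) * ω (q : ℝ)) ^ d)) :
    dimH (ESet Ψ ω) ≤ ENNReal.ofReal d := by
  have hunion : ESet Ψ ω ⊆ ⋃ M : ℕ, ESet Ψ ω ∩ Icc (-(M : ℝ)) M := by
    intro x hx
    obtain ⟨M, hM⟩ := exists_nat_ge |x|
    exact mem_iUnion.2 ⟨M, hx, abs_le.1 hM⟩
  refine (dimH_mono hunion).trans ?_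
  rw [dimH_iUnion]
  refine iSup_le fun M => ?_
  have hΨ0 : Tendsto (fun n : ℕ => Ψ n) atTop (nhds 0) := by
    refine squeeze_zero' ?_ ?_ hsum.tendsto_atTop_zero
    · filter_upwards [eventually_gt_atTop 0] with n hn
      exact (hΨpos n (by exact_mod_cast hn)).le
    · filter_upwards [eventually_gt_atTop 0] with n hn
      have h1 : (1 : ℝ) ≤ n := by exact_mod_cast hn
      have := hΨpos n (by linarith)
      nlinarith
  -- the two halves of the annulus around `p / q`
  let I : ℕ × ℤ × Bool → Set ℝ := fun z => bif z.2.2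
    then Icc ((z.2.1 : ℝ) / z.1 + (1 - ω z.1) * Ψ z.1) ((z.2.1 : ℝ) / z.1 + Ψ z.1)
    else Icc ((z.2.1 : ℝ) / z.1 - Ψ z.1) ((z.2.1 : ℝ) / z.1 - (1 - ω z.1) * Ψ z.1)
  have hI : ∀ z, Metric.ediam (I z) = ENNReal.ofReal (Ψ z.1 * ω z.1) := by
    rintro ⟨q, p, _ | _⟩ <;> simp only [I, cond_true, cond_false, Real.ediam_Icc] <;>
      congr 1 <;> ring
  -- the annuli with `q ≥ n` that can meet `[-M, M]` once `Ψ n ≤ 1`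
  let good : ℕ → ℕ × ℤ × Bool → Prop := fun n z =>
    n ≤ z.1 ∧ 0 < z.1 ∧ |z.2.1| ≤ ((M + 1) * z.1 : ℕ)
  classical
  let t : ℕ → ℕ × ℤ × Bool → Set ℝ := fun n z => if good n z then I z else ∅
  have hρ : ∀ q : ℕ, 0 < q → 0 ≤ Ψ q * ω q ∧ Ψ q * ω q ≤ Ψ q := by
    intro q hq
    have h0 : (0 : ℝ) < q := by exact_mod_cast hq
    have h1 := hΨpos q h0
    have h2 := hωmem q h0
    exact ⟨mul_nonneg h1.le h2.1.le, mul_le_of_le_one_right h1.le h2.2.le⟩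
  have hbound := MeasureTheory.Measure.hausdorffMeasure_le_liminf_tsum d
    (ESet Ψ ω ∩ Icc (-(M : ℝ)) M) (l := atTop) (fun n : ℕ => ENNReal.ofReal (Ψ n))
    (by simpa using ENNReal.tendsto_ofReal hΨ0) t
    (by
      filter_upwards [eventually_gt_atTop 0] with n hn z
      by_cases hz : good n z
      · simp only [t, if_pos hz, hI]
        refine ENNReal.ofReal_le_ofReal ((hρ z.1 hz.2.1).2.trans (hΨ _ _ ?_ ?_))
        · exact_mod_cast hn
        · exact_mod_cast hz.1
      · simp [t, if_neg hz])
    (by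
      filter_upwards [hΨ0.eventually (gt_mem_nhds one_pos), eventually_gt_atTop 0] with n hn1 hn x hx
      obtain ⟨⟨hW, Q, hQ⟩, hxM⟩ := hx
      obtain ⟨p, q, hq, hNq, h⟩ := exists_large_denominator hΨ hW (max n Q)
      have h' := hQ q ((le_max_right _ _).trans hNq) p
      have hq' : (0 : ℝ) < q := by exact_mod_cast hq
      have hn' : (0 : ℝ) < n := by exact_mod_cast hn
      have hΨq : Ψ q ≤ 1 :=
        (hΨ n q hn' (by exact_mod_cast (le_max_left _ _).trans hNq)).trans hn1.le
      have hp : |p| ≤ ((M + 1) * q : ℕ) := by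
        have h1 := abs_sub_abs_le_abs_sub ((p : ℝ) / q) x
        rw [abs_sub_comm] at h1
        have h2 : |x| ≤ M := abs_le.2 hxM
        have h3 : |(p : ℝ) / q| ≤ M + 1 := by linarith
        rw [abs_div, abs_of_pos hq', div_le_iff₀ hq'] at h3
        exact_mod_cast h3
      have hgood : ∀ β, good n (q, p, β) := fun β => ⟨(le_max_left _ _).trans hNq, hq, hp⟩
      rw [mem_iUnion]
      rcases le_total 0 (x - (p : ℝ) / q) with hs | hs
      · refine ⟨(q, p, true), ?_⟩
        rw [abs_of_nonneg hs] at h h'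
        simp only [t, if_pos (hgood true), I, cond_true]
        constructor <;> linarith
      · refine ⟨(q, p, false), ?_⟩
        rw [abs_of_nonpos hs] at h h'
        simp only [t, if_pos (hgood false), I, cond_false]
        constructor <;> linarith)
  have hfin : ∀ n : ℕ, ∑' z, Metric.ediam (t n z) ^ d ≤
      ENNReal.ofReal (∑' q : ℕ, (4 * M + 6) * ((q : ℝ) * (Ψ q * ω q) ^ d)) := by
    intro n
    have hterm : ∀ q : ℕ, 0 ≤ (4 * (M : ℝ) + 6) * ((q : ℝ) * (Ψ q * ω q) ^ d) := by
      intro q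
      rcases q.eq_zero_or_pos with rfl | hq
      · simp
      · have := Real.rpow_nonneg (hρ q hq).1 d
        positivity
    rw [ENNReal.ofReal_tsum_of_nonneg hterm (hsd.mul_left _), ENNReal.tsum_prod']
    refine ENNReal.tsum_le_tsum fun q => ?_
    set F : Finset (ℤ × Bool) :=
      Finset.Icc (-((((M + 1) * q : ℕ)) : ℤ)) (((M + 1) * q : ℕ)) ×ˢ Finset.univ with hF
    rcases q.eq_zero_or_pos with rfl | hq
    · have : ∀ y : ℤ × Bool, Metric.ediam (t n (0, y)) ^ d = 0 := by
        intro y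
        have : ¬ good n (0, y) := fun h => absurd h.2.1 (lt_irrefl _)
        simp [t, if_neg this, hd]
      simp [this]
    have hout : ∀ y ∉ F, Metric.ediam (t n (q, y)) ^ d = 0 := by
      intro y hy
      have : ¬ good n (q, y) := by
        intro h
        refine hy ?_
        rw [hF, Finset.mem_product, Finset.mem_Icc]
        exact ⟨abs_le.1 h.2.2, Finset.mem_univ _⟩
      simp [t, if_neg this, hd]
    rw [tsum_eq_sum hout]
    have hle : ∀ y ∈ F, Metric.ediam (t n (q, y)) ^ d ≤ ENNReal.ofReal ((Ψ q * ω q) ^ d) := by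
      intro y _
      by_cases hz : good n (q, y)
      · simp only [t, if_pos hz, hI]
        rw [ENNReal.ofReal_rpow_of_nonneg (hρ q hq).1 hd.le]
      · simp [t, if_neg hz, hd]
    refine (Finset.sum_le_card_nsmul _ _ _ hle).trans ?_
    have hcard : F.card = (2 * ((M + 1) * q) + 1) * 2 := by
      rw [hF, Finset.card_product, Int.card_Icc, Finset.card_univ, Fintype.card_bool]
      congr 1
      omega
    rw [nsmul_eq_mul, ← ENNReal.ofReal_natCast, ← ENNReal.ofReal_mul (Nat.cast_nonneg _), hcard,
      ← mul_assoc (4 * (M : ℝ) + 6)]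
    refine ENNReal.ofReal_le_ofReal (mul_le_mul_of_nonneg_right ?_ (Real.rpow_nonneg (hρ q hq).1 d))
    push_cast
    have : (1 : ℝ) ≤ q := by exact_mod_cast hq
    nlinarith
  have hne : MeasureTheory.Measure.hausdorffMeasure ((d.toNNReal : NNReal) : ℝ)
      (ESet Ψ ω ∩ Icc (-(M : ℝ)) M) ≠ ⊤ := by
    rw [Real.coe_toNNReal d hd.le]
    refine ne_top_of_le_ne_top (ENNReal.ofReal_ne_top
      (r := ∑' q : ℕ, (4 * (M : ℝ) + 6) * ((q : ℝ) * (Ψ q * ω q) ^ d))) (hbound.trans ?_)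
    · exact Filter.liminf_le_of_le (by isBoundedDefault) fun b hb => by
        obtain ⟨n, hn⟩ := hb.exists
        exact hn.trans (hfin n)
  exact dimH_le_of_hausdorffMeasure_ne_top hne

/-! ### Lower bound -/

/-- Otherwise `ρ q ^ s ≤ C / q²` eventually, and `q ρ(q)^s'` is at most a constant times
`q ^ (1 - 2 s' / s)`, whose exponent is less than `-1`. -/
theorem frequently_large_of_not_summable {ρ : ℝ → ℝ} (hρ : ∀ q : ℝ, 0 < q → 0 < ρ q) {s s' : ℝ}
    (hs : 0 < s) (hss' : s < s')
    (hns : ¬ Summable (fun q : ℕ => (q : ℝ) * ρ q ^ s')) (C : ℝ) :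
    ∃ᶠ Q : ℕ in atTop, C ≤ (Q : ℝ) ^ 2 * ρ Q ^ s := by
  by_contra hcon
  rw [not_frequently] at hcon
  refine hns ?_
  have hexp : 1 - 2 * (s' / s) < -1 := by
    have : 1 < s' / s := by rwa [one_lt_div hs]
    linarith
  have hsm : Summable fun q : ℕ => |C| ^ (s' / s) * (q : ℝ) ^ (1 - 2 * (s' / s)) :=
    (Real.summable_nat_rpow.2 hexp).mul_left _
  refine Summable.of_norm_bounded_eventually_nat hsm ?_
  filter_upwards [hcon, eventually_gt_atTop 0] with q hq hq0
  have hq' : (0 : ℝ) < q := by exact_mod_cast hq0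
  have hρq := hρ q hq'
  push Not at hq
  have h1 : ρ q ^ s ≤ |C| / (q : ℝ) ^ 2 := by
    rw [le_div_iff₀ (by positivity)]
    linarith [le_abs_self C]
  have hs's : 0 < s' / s := div_pos (hs.trans hss') hs
  have h2 : ρ q ^ s' ≤ (|C| / (q : ℝ) ^ 2) ^ (s' / s) := by
    have h3 : ρ q ^ s' = (ρ q ^ s) ^ (s' / s) := by
      rw [← Real.rpow_mul hρq.le, mul_div_cancel₀ _ hs.ne']
    rw [h3]
    exact Real.rpow_le_rpow (by positivity) h1 hs's.le
  rw [Real.norm_of_nonneg (by positivity)]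
  calc (q : ℝ) * ρ q ^ s' ≤ q * (|C| / (q : ℝ) ^ 2) ^ (s' / s) := by gcongr
    _ = |C| ^ (s' / s) * (q : ℝ) ^ (1 - 2 * (s' / s)) := by
      rw [Real.div_rpow (abs_nonneg _) (by positivity), Real.rpow_sub hq', Real.rpow_one,
        ← Real.rpow_natCast, ← Real.rpow_mul hq'.le]
      push_cast
      ring

/-- A basic interval `[a, b]` of the Cantor construction, with its mass `w`. Denominators in
`[R₀, R)` have been dealt with at earlier stages, and those from `R` on are still free. -/
structure Node (Ψ : ℝ → ℝ) (s R₀ : ℝ) where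
  a : ℝ
  b : ℝ
  R : ℝ
  w : ℝ
  a_lt_b : a < b
  le_R : R₀ ≤ R
  psi_R : 45 * Ψ R ≤ b - a
  w_pos : 0 < w
  w_le : w ≤ (b - a) ^ s

/-- `τ` is an admissible child of `σ`: it meets the requirements of `ESet` for the denominators in
`[σ.R, τ.R)`, all its points being `Ψ`-close to one rational with denominator at least `σ.R`, and
`(1 - ω) Ψ`-far from all rationals with denominator in that range. -/
def Node.IsChild {Ψ : ℝ → ℝ} {s R₀ : ℝ} (ω : ℝ → ℝ) (σ τ : Node Ψ s R₀) : Prop :=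
  σ.R + 1 ≤ τ.R ∧
  (∃ (p : ℤ) (q : ℕ), σ.R ≤ q ∧ ∀ x ∈ Icc τ.a τ.b, |x - (p : ℝ) / q| ≤ Ψ q) ∧
  ∀ (p : ℤ) (q : ℕ), σ.R ≤ q → (q : ℝ) < τ.R → ∀ x ∈ Icc τ.a τ.b,
    (1 - ω q) * Ψ q ≤ |x - (p : ℝ) / q|

/-- A point in all intervals of an infinite branch lies in `ESet Ψ ω`: the ranges `[R, R')` of
consecutive nodes exhaust all large denominators. -/
theorem mem_ESet_of_branch {Ψ ω : ℝ → ℝ} {s R₀ : ℝ} (hR₀ : 0 < R₀) {x : ℝ} (τ : ℕ → Node Ψ s R₀)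
    (hτ : ∀ n, (τ n).IsChild ω (τ (n + 1))) (hx : ∀ n, x ∈ Icc (τ n).a (τ n).b) :
    x ∈ ESet Ψ ω := by
  have hgrow : ∀ n : ℕ, (n : ℝ) ≤ (τ n).R := by
    intro n
    induction n with
    | zero => simpa using hR₀.le.trans (τ 0).le_R
    | succ n ih => have := (hτ n).1; push_cast; linarith
  refine ⟨fun hfin => ?_, ⌈(τ 0).R⌉₊, fun q hq p => ?_⟩
  · obtain ⟨M, hM⟩ := (hfin.image Prod.snd).bddAbove
    obtain ⟨p, q, hq, h⟩ := (hτ (M + 1)).2.1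
    have hq0 : (0 : ℝ) < q := lt_of_lt_of_le (hR₀.trans_le (τ (M + 1)).le_R) hq
    have hqM : q ≤ M := hM ⟨(p, q), ⟨by exact_mod_cast hq0, h x (hx _)⟩, rfl⟩
    have h1 := hgrow (M + 1)
    have h2 : (q : ℝ) ≤ M := by exact_mod_cast hqM
    push_cast at h1
    linarith
  · have hex : ∃ n, (q : ℝ) < (τ n).R := ⟨q + 1, by have := hgrow (q + 1); push_cast at this; linarith⟩
    classical
    have hn := Nat.find_spec hex
    have hmin := fun k (hk : k < Nat.find hex) => Nat.find_min hex hk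
    generalize Nat.find hex = n at hn hmin
    cases n with
    | zero => exact absurd hn (not_lt.2 (Nat.ceil_le.1 hq))
    | succ n => exact (hτ n).2.2 p q (not_lt.1 (hmin n (by omega))) hn x (hx _)

section Step

variable {Ψ ω : ℝ → ℝ} {s R₀ : ℝ}

/-- A good centre `y = p / q` carries the child `[y + (1 - ω q) Ψ q, y + Ψ q]` with threshold
`1 / (2 q Ψ q)`. Other rationals `p' / q'` with `q' < q` are avoided because `y` is good, and those
with `q ≤ q' < 1 / (2 q Ψ q)` because `|y - p' / q'| ≥ 1 / (q q') > 2 Ψ q`. Non-reduced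
representations of `y` itself are harmless since `Ψ (2 q) ≤ Ψ q / 4`. -/
theorem exists_child (hΨpos : ∀ q : ℝ, 0 < q → 0 < Ψ q)
    (hωmem : ∀ q : ℝ, 0 < q → ω q ∈ Ioo (0 : ℝ) 1)
    (hmono : AntitoneOn (fun q : ℝ => q ^ 2 * Ψ q) (Ioi 0))
    (hmono' : AntitoneOn (fun q : ℝ => q ^ 2 * (Ψ q * ω q)) (Ioi 0)) (hs : 0 < s) (hR₀ : 0 < R₀)
    (hsmall : ∀ q, R₀ ≤ q → q ^ 2 * Ψ q ≤ 1 / 2 ^ 22)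
    (hω2 : ∀ q, R₀ ≤ q → ω q ≤ 1 / 2)
    (hbig : ∀ q, R₀ ≤ q → 45 / Ψ q * Ψ (1 / (2 * q * Ψ q)) ≤ ω q)
    (σ : Node Ψ s R₀) {Q : ℕ} (hQR : 1024 * (σ.R + 1) ≤ Q) {w : ℝ} (hw0 : 0 < w)
    (hw : w ≤ (Ψ Q * ω Q) ^ s) {y : ℝ} (hy : y ∈ goodCenters Ψ σ.a σ.b σ.R Q) :
    ∃ τ : Node Ψ s R₀, y ≤ τ.a ∧ τ.b ≤ y + 1 / (2 * (Q : ℝ) ^ 2) ∧ τ.w = w ∧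
      Icc τ.a τ.b ⊆ Icc σ.a σ.b ∧ σ.IsChild ω τ := by
  obtain ⟨r, rfl, hQr, hrQ, hay, hyb, havoid⟩ := hy
  have hσR : 0 < σ.R := hR₀.trans_le σ.le_R
  have hQ0 : (0 : ℝ) < Q := by linarith
  have hQq : (r.den : ℝ) ≤ Q := by exact_mod_cast hrQ
  have hrdef : (r : ℝ) = (r.num : ℝ) / r.den := Rat.cast_def r
  have hqn := r.den_pos
  have hq0 : (0 : ℝ) < r.den := by exact_mod_cast hqn
  have hRq : σ.R + 1 ≤ r.den := by linarith
  have hR0q : R₀ ≤ r.den := by linarith [σ.le_R]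
  have hψ := hΨpos _ hq0
  have hω := hωmem _ hq0
  have hf := hsmall _ hR0q
  set q : ℝ := (r.den : ℝ) with hq
  have hnewR : q ≤ 1 / (2 * q * Ψ q) := by
    rw [le_div_iff₀ (by positivity)]
    nlinarith
  have hΨQ : Ψ q ≤ 1 / (2 * (Q : ℝ) ^ 2) := by
    rw [le_div_iff₀ (by positivity)]
    have : (Q : ℝ) ^ 2 ≤ 1024 ^ 2 * q ^ 2 := by rw [← mul_pow]; gcongr
    nlinarith
  have hωψ : 0 ≤ (1 - ω q) * Ψ q := mul_nonneg (by linarith [hω.2]) hψ.le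
  have hlen : (r + Ψ q) - (r + (1 - ω q) * Ψ q) = Ψ q * ω q := by ring
  refine ⟨⟨r + (1 - ω q) * Ψ q, r + Ψ q, 1 / (2 * q * Ψ q), w, ?_, ?_, ?_, hw0, ?_⟩,
    ?_, ?_, rfl, ?_, ?_, ?_, ?_⟩
  · have := mul_pos hψ hω.1
    linarith
  · linarith
  · rw [hlen]
    have := hbig q hR0q
    rw [div_mul_eq_mul_div, div_le_iff₀ hψ] at this
    linarith
  · rw [hlen]
    have hQpos := hωmem _ hQ0
    refine hw.trans (Real.rpow_le_rpow (mul_nonneg (hΨpos _ hQ0).le hQpos.1.le) ?_ hs.le)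
    exact psi_antitone (Ψ := fun q => Ψ q * ω q)
      (fun q hq => mul_pos (hΨpos q hq) (hωmem q hq).1) hmono' hq0 hQq
  · simp only; linarith
  · simp only; linarith
  · intro x hx
    exact ⟨by linarith [hx.1], by linarith [hx.2]⟩
  · simp only; linarith
  · refine ⟨r.num, r.den, by linarith, fun x hx => ?_⟩
    rw [← hrdef, ← hq, abs_le]
    constructor <;> linarith [hx.1, hx.2]
  · intro p q' hRq' hq'R x hx
    simp only at hq'R hx
    have hq'0 : (0 : ℝ) < q' := hσR.trans_le hRq'
    have hq'n : 0 < q' := by exact_mod_cast hq'0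
    have hψ' := hΨpos _ hq'0
    have hω' := hωmem _ hq'0
    have hle' : (1 - ω q') * Ψ q' ≤ Ψ q' := by nlinarith [hω'.1]
    have hxr0 : (1 - ω q) * Ψ q ≤ x - r := by linarith [hx.1]
    have hxr : |x - r| ≤ Ψ q := by rw [abs_le]; constructor <;> linarith [hx.1, hx.2]
    have htri : |(r : ℝ) - (p : ℝ) / q'| ≤ |x - r| + |x - (p : ℝ) / q'| := by
      have := abs_sub_le (r : ℝ) x ((p : ℝ) / q')
      rwa [abs_sub_comm (r : ℝ) x] at this
    by_cases heq : (r.num : ℝ) / r.den = (p : ℝ) / q'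
    · rw [← heq, ← hrdef]
      refine le_trans ?_ (hxr0.trans (le_abs_self _))
      have hdvd : r.den ∣ q' := by
        have h1 : r = (p : ℚ) / q' := by
          have : (r : ℝ) = ((p / q' : ℚ) : ℝ) := by rw [hrdef, heq]; push_cast; rfl
          exact_mod_cast this
        have h2 : ((r.den : ℤ)) ∣ q' := by
          rw [h1]; exact_mod_cast Rat.den_dvd p q'
        exact_mod_cast h2
      obtain ⟨k, hk⟩ := hdvd
      rcases Nat.lt_or_ge k 2 with hk2 | hk2
      · have hk1 : k = 1 := by
          have : k ≠ 0 := by rintro rfl; simp at hk; omega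
          omega
        rw [hk, hk1, mul_one]
      -- non-reduced representations: `Ψ (k q) ≤ Ψ q / 4 ≤ (1 - ω q) Ψ q`
      · have hk2' : (2 : ℝ) ≤ k := by exact_mod_cast hk2
        have hkq : (q' : ℝ) = q * k := by rw [hk]; push_cast; rfl
        have h1 : (q' : ℝ) ^ 2 * Ψ q' ≤ q ^ 2 * Ψ q := hmono hq0 hq'0 <| by
          rw [hkq]; exact le_mul_of_one_le_right hq0.le (by linarith)
        have h2 : q ^ 2 * (4 * Ψ q') ≤ q ^ 2 * Ψ q := by
          refine le_trans ?_ h1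
          have h4k : (4 : ℝ) ≤ (k : ℝ) ^ 2 := by nlinarith
          calc q ^ 2 * (4 * Ψ q') ≤ q ^ 2 * ((k : ℝ) ^ 2 * Ψ q') := by gcongr
            _ = (q' : ℝ) ^ 2 * Ψ q' := by rw [hkq]; ring
        have h3 := le_of_mul_le_mul_left h2 (by positivity)
        have h4 := hω2 q hR0q
        have h5 : 1 / 2 * Ψ q ≤ (1 - ω q) * Ψ q :=
          mul_le_mul_of_nonneg_right (by linarith) hψ.le
        linarith
    · have hgap := one_div_mul_le_abs_sub hqn hq'n heq
      rw [← hrdef] at hgap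
      rcases Nat.lt_or_ge q' r.den with hlt | hge
      · have h1 := havoid p q' hRq' hlt
        have h2 : Ψ q ≤ Ψ q' := psi_antitone hΨpos hmono hq'0 (by rw [hq]; exact_mod_cast hlt.le)
        linarith
      · have h2 : Ψ q' ≤ Ψ q := psi_antitone hΨpos hmono hq0 (by rw [hq]; exact_mod_cast hge)
        have h3 : 2 * Ψ q ≤ 1 / (q * q') := by
          rw [lt_div_iff₀ (by positivity)] at hq'R
          rw [le_div_iff₀ (by positivity)]
          nlinarith
        linarith

/-- Every node has at least two children, evenly enough spread and of equal mass, as required by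
`cantor_dimH`. The denominator bound `Q` is chosen with `8192 w ≤ (b - a) Q² (Ψ Q ω Q) ^ s`, so that
the mass `w / m` of a child is at most the `s`-th power of its length. -/
theorem exists_children (hΨpos : ∀ q : ℝ, 0 < q → 0 < Ψ q)
    (hωmem : ∀ q : ℝ, 0 < q → ω q ∈ Ioo (0 : ℝ) 1)
    (hmono : AntitoneOn (fun q : ℝ => q ^ 2 * Ψ q) (Ioi 0))
    (hmono' : AntitoneOn (fun q : ℝ => q ^ 2 * (Ψ q * ω q)) (Ioi 0)) (hs : 0 < s) (hR₀ : 0 < R₀)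
    (htail : ∀ R, R₀ ≤ R → ∀ N : ℕ,
      ∑ j ∈ Finset.range N, (2 ^ j * R) ^ 2 * Ψ (2 ^ j * R) ≤ 1 / 2 ^ 22)
    (hω2 : ∀ q, R₀ ≤ q → ω q ≤ 1 / 2)
    (hbig : ∀ q, R₀ ≤ q → 45 / Ψ q * Ψ (1 / (2 * q * Ψ q)) ≤ ω q)
    (hfreq : ∀ C : ℝ, ∃ᶠ Q : ℕ in atTop, C ≤ (Q : ℝ) ^ 2 * (Ψ Q * ω Q) ^ s)
    (σ : Node Ψ s R₀) :
    ∃ m : ℕ, 2 ≤ m ∧ ∃ f : ℕ → Node Ψ s R₀,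
      (∀ i < m, Icc (f i).a (f i).b ⊆ Icc σ.a σ.b ∧ (f i).w = σ.w / m ∧ σ.IsChild ω (f i)) ∧
      ∀ i j : ℕ, i < j → j < m →
        (f i).b + 1 / 16384 * ((j : ℝ) - i) * ((σ.b - σ.a) / m) ≤ (f j).a := by
  have hσR : 0 < σ.R := hR₀.trans_le σ.le_R
  have hL0 : 0 < σ.b - σ.a := by linarith [σ.a_lt_b]
  have hev : ∀ᶠ Q : ℕ in atTop, 1024 * (σ.R + 1) ≤ Q ∧ 2 ^ 26 ≤ Q * (σ.b - σ.a) := by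
    have h1 := tendsto_natCast_atTop_atTop (R := ℝ)
    filter_upwards [h1.eventually_ge_atTop (1024 * (σ.R + 1)),
      h1.eventually_ge_atTop (2 ^ 26 / (σ.b - σ.a))] with Q h2 h3
    exact ⟨h2, by rwa [div_le_iff₀ hL0] at h3⟩
  obtain ⟨Q, hC, hQR, hQL⟩ := ((hfreq (8192 * σ.w / (σ.b - σ.a))).and_eventually hev).exists
  have hQ0 : (0 : ℝ) < Q := by linarith
  have hQ1 : (1 : ℝ) ≤ Q := by linarith
  have hcard := goodCenters_card hΨpos hmono σ.a_lt_b hσR σ.psi_R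
    (fun N => (htail _ σ.le_R N).trans (by norm_num)) hQR hQL
  set T := (goodCenters_finite Ψ hΨpos σ.a σ.b σ.R Q).toFinset with hT
  set m := T.card with hm
  set L := σ.b - σ.a with hL
  have hmem : ∀ y ∈ T, y ∈ goodCenters Ψ σ.a σ.b σ.R Q := fun y hy => by
    rwa [hT, Finite.mem_toFinset] at hy
  have hm2 : (2 : ℝ) ≤ m := by nlinarith
  have hm0 : (0 : ℝ) < m := by linarith
  have hsepT : ∀ x ∈ T, ∀ y ∈ T, x < y → x + 1 / (Q : ℝ) ^ 2 ≤ y := by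
    intro x hx y hy hxy
    obtain ⟨r, rfl, _, hr, _⟩ := hmem x hx
    obtain ⟨r', rfl, _, hr', _⟩ := hmem y hy
    have h0 : (r : ℝ) = (r.num : ℝ) / r.den := Rat.cast_def r
    have h0' : (r' : ℝ) = (r'.num : ℝ) / r'.den := Rat.cast_def r'
    have h1 := one_div_mul_le_abs_sub r.den_pos r'.den_pos (by rw [← h0, ← h0']; exact hxy.ne)
    rw [← h0, ← h0', abs_sub_comm, abs_of_pos (by linarith)] at h1
    have h2 : 1 / (Q : ℝ) ^ 2 ≤ 1 / ((r.den : ℝ) * r'.den) := by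
      have h3 : (0 : ℝ) < r.den := by exact_mod_cast r.den_pos
      have h4 : (0 : ℝ) < r'.den := by exact_mod_cast r'.den_pos
      have h5 : (r.den : ℝ) ≤ Q := by exact_mod_cast hr
      have h6 : (r'.den : ℝ) ≤ Q := by exact_mod_cast hr'
      apply one_div_le_one_div_of_le (by positivity)
      nlinarith
    linarith
  obtain ⟨x, hxT, hxsep⟩ := exists_sorted_enum T hsepT
  have hw' : σ.w / m ≤ (Ψ Q * ω Q) ^ s := by
    rw [div_le_iff₀ hL0] at hC
    rw [div_le_iff₀ hm0]
    have hρ : 0 < (Ψ Q * ω Q) ^ s :=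
      Real.rpow_pos_of_pos (mul_pos (hΨpos _ hQ0) (hωmem _ hQ0).1) _
    nlinarith
  have hchild : ∀ i, ∃ τ : Node Ψ s R₀, i < m → (x i ≤ τ.a ∧ τ.b ≤ x i + 1 / (2 * (Q : ℝ) ^ 2) ∧
      τ.w = σ.w / m ∧ Icc τ.a τ.b ⊆ Icc σ.a σ.b ∧ σ.IsChild ω τ) := by
    intro i
    by_cases hi : i < m
    · obtain ⟨τ, hτ⟩ := exists_child hΨpos hωmem hmono hmono' hs hR₀
        (fun q hq => by simpa using htail q hq 1) hω2 hbig σ hQR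
        (div_pos σ.w_pos hm0) hw' (hmem _ (hxT i hi))
      exact ⟨τ, fun _ => hτ⟩
    · exact ⟨σ, fun h => absurd h hi⟩
  choose f hf using hchild
  refine ⟨m, by exact_mod_cast hm2, f, fun i hi => ?_, fun i j hij hj => ?_⟩
  · obtain ⟨_, _, h3, h4, h5⟩ := hf i hi
    exact ⟨h4, h3, h5⟩
  · obtain ⟨_, h1, _⟩ := hf i (hij.trans hj)
    obtain ⟨h2, _⟩ := hf j hj
    have h3 := hxsep i j hij hj
    have h4 : (1 : ℝ) ≤ (j : ℝ) - i := by
      have : (i : ℝ) + 1 ≤ j := by exact_mod_cast hij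
      linarith
    have h5 : L / m ≤ 8192 * (1 / (Q : ℝ) ^ 2) := by
      rw [mul_one_div, div_le_div_iff₀ hm0 (by positivity)]
      linarith
    have h6 : 1 / (2 * (Q : ℝ) ^ 2) = 1 / 2 * (1 / (Q : ℝ) ^ 2) := by field_simp
    have h7 : 1 / 16384 * ((j : ℝ) - i) * (L / m) ≤
        1 / 16384 * ((j : ℝ) - i) * (8192 * (1 / (Q : ℝ) ^ 2)) :=
      mul_le_mul_of_nonneg_left h5 (by linarith)
    have h8 : 0 < 1 / (Q : ℝ) ^ 2 := by positivity
    nlinarith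

end Step

/-- The lower bound: the Cantor construction started from `[0, 1]` of mass `1`, beyond a
threshold `R₀` from which all asymptotic hypotheses hold. -/
theorem le_dimH_ESet {Ψ ω : ℝ → ℝ} (hΨpos : ∀ q : ℝ, 0 < q → 0 < Ψ q)
    (hωmem : ∀ q : ℝ, 0 < q → ω q ∈ Ioo (0 : ℝ) 1)
    (hmono : AntitoneOn (fun q : ℝ => q ^ 2 * Ψ q) (Ioi 0))
    (hmono' : AntitoneOn (fun q : ℝ => q ^ 2 * (Ψ q * ω q)) (Ioi 0))
    (hsum : Summable (fun q : ℕ => (q : ℝ) * Ψ (q : ℝ)))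
    (hωlim : Tendsto ω atTop (nhds 0))
    (hbig : ∀ᶠ q : ℝ in atTop, 45 / Ψ q * Ψ (1 / (2 * q * Ψ q)) ≤ ω q)
    {s : ℝ} (hs : 0 < s) (hs1 : s ≤ 1)
    (hfreq : ∀ C : ℝ, ∃ᶠ Q : ℕ in atTop, C ≤ (Q : ℝ) ^ 2 * (Ψ Q * ω Q) ^ s) :
    ENNReal.ofReal s ≤ dimH (ESet Ψ ω) := by
  obtain ⟨R₁, hR₁, htail⟩ := dyadic_tail hΨpos hmono hsum (ε := 1 / 2 ^ 22) (by norm_num)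
  have hω2 : ∀ᶠ q : ℝ in atTop, ω q ≤ 1 / 2 :=
    (hωlim.eventually (gt_mem_nhds (by norm_num : (0 : ℝ) < 1 / 2))).mono fun q h => h.le
  obtain ⟨R₂, hR₂⟩ := eventually_atTop.1 (hω2.and hbig)
  set R₀ := max (max R₁ R₂) 1 with hR₀def
  have h1 : R₁ ≤ R₀ := (le_max_left _ _).trans (le_max_left _ _)
  have h2 : R₂ ≤ R₀ := (le_max_right _ _).trans (le_max_left _ _)
  have h3 : 1 ≤ R₀ := le_max_right _ _
  have hR₀ : 0 < R₀ := by linarith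
  have hroot : 45 * Ψ R₀ ≤ (1 : ℝ) - 0 := by
    have h4 : R₀ ^ 2 * Ψ R₀ ≤ 1 / 2 ^ 22 := by simpa using htail R₀ h1 1
    have := hΨpos R₀ hR₀
    nlinarith
  obtain ⟨K, hK, hKE⟩ := cantor_dimH (S := Node Ψ s R₀) Node.a Node.b Node.w (Node.IsChild ω)
    (c := 1 / 16384) hs hs1 (by norm_num) Node.a_lt_b Node.w_pos Node.w_le
    (exists_children hΨpos hωmem hmono hmono' hs hR₀ (fun R hR => htail R (h1.trans hR))
      (fun q hq => (hR₂ q (h2.trans hq)).1) (fun q hq => (hR₂ q (h2.trans hq)).2) hfreq)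
    ⟨0, 1, R₀, 1, one_pos, le_rfl, hroot, one_pos, by simp⟩
  refine hK.trans (dimH_mono fun x hx => ?_)
  obtain ⟨τ, _, hτ⟩ := hKE x hx
  exact mem_ESet_of_branch hR₀ τ (fun n => (hτ n).1) fun n => (hτ n).2

/-! ### The dimension formula -/

/-- **Theorem.** Suppose `q ↦ q²Ψ(q)` and `q ↦ q²Ψ(q)ω(q)` are non-increasing on `(0,∞)`,
`Σ_{q≥1} qΨ(q) < ∞`, `ω(q) → 0`, `ω` maps `(0,∞)` into `(0,1)`, and
`ω(q) ≥ (45/Ψ(q))·Ψ(1/(2qΨ(q)))` for all sufficiently large `q`.  Then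
`dim_H(E(Ψ,ω)) = inf {s ≥ 0 : Σ_{q≥1} q(Ψ(q)ω(q))^s < ∞}`. -/
theorem dimH_ESet (Ψ ω : ℝ → ℝ)
    (hΨpos : ∀ q : ℝ, 0 < q → 0 < Ψ q)
    (hωmem : ∀ q : ℝ, 0 < q → ω q ∈ Set.Ioo (0 : ℝ) 1)
    (hmono : AntitoneOn (fun q : ℝ => q ^ 2 * Ψ q) (Set.Ioi 0))
    (hmono' : AntitoneOn (fun q : ℝ => q ^ 2 * Ψ q * ω q) (Set.Ioi 0))
    (hsum : Summable (fun q : ℕ => (q : ℝ) * Ψ (q : ℝ)))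
    (hωlim : Filter.Tendsto ω Filter.atTop (nhds 0))
    (hbig : ∀ᶠ q : ℝ in Filter.atTop, 45 / Ψ q * Ψ (1 / (2 * q * Ψ q)) ≤ ω q) :
    dimH (ESet Ψ ω) = ENNReal.ofReal
      (sInf {s : ℝ | 0 ≤ s ∧ Summable (fun q : ℕ => (q : ℝ) * (Ψ (q : ℝ) * ω (q : ℝ)) ^ s)}) := by
  set A := {s : ℝ | 0 ≤ s ∧ Summable (fun q : ℕ => (q : ℝ) * (Ψ (q : ℝ) * ω (q : ℝ)) ^ s)} with hA
  -- `A` contains `1`, so its infimum is neither a junk value nor larger than `1`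
  have hbdd : BddBelow A := ⟨0, fun s hs => hs.1⟩
  have hone : (1 : ℝ) ∈ A := by
    refine ⟨zero_le_one, Summable.of_nonneg_of_le (fun q => ?_) (fun q => ?_) hsum⟩ <;>
    · rcases q.eq_zero_or_pos with rfl | hq
      · simp
      · have hq' : (0 : ℝ) < q := by exact_mod_cast hq
        have h1 := hΨpos q hq'
        have h2 := hωmem q hq'
        rw [Real.rpow_one]
        have h3 := mul_pos h1 h2.1
        first
        | positivity
        | exact mul_le_mul_of_nonneg_left (mul_le_of_le_one_right h1.le h2.2.le) hq'.le
  have hpos : ∀ s ∈ A, 0 < s := by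
    rintro s ⟨hs0, hs⟩
    rcases hs0.eq_or_lt with rfl | h
    · exfalso
      simp only [Real.rpow_zero, mul_one] at hs
      have h1 := hs.tendsto_atTop_zero
      exact not_tendsto_nhds_of_tendsto_atTop tendsto_natCast_atTop_atTop 0 h1
    · exact h
  apply le_antisymm
  · have hle : ∀ s ∈ A, dimH (ESet Ψ ω) ≤ ENNReal.ofReal s := fun s hs =>
      dimH_ESet_le hΨpos hωmem (fun q r hq hqr => psi_antitone hΨpos hmono hq hqr) hsum
        (hpos s hs) hs.2
    refine ENNReal.le_of_forall_pos_le_add fun ε hε _ => ?_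
    obtain ⟨s, hs, hlt⟩ := exists_lt_of_csInf_lt ⟨1, hone⟩
      (lt_add_of_pos_right (sInf A) (NNReal.coe_pos.2 hε))
    refine (hle s hs).trans ((ENNReal.ofReal_le_ofReal hlt.le).trans ?_)
    refine ENNReal.ofReal_add_le.trans ?_
    simp
  · have hmono'' : AntitoneOn (fun q : ℝ => q ^ 2 * (Ψ q * ω q)) (Ioi 0) := by
      simpa only [mul_assoc] using hmono'
    have hlow : ∀ s, 0 < s → s < sInf A → ENNReal.ofReal s ≤ dimH (ESet Ψ ω) := by
      intro s hs hsA
      obtain ⟨s', hs1, hs2⟩ := exists_between hsA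
      have hns : ¬ Summable (fun q : ℕ => (q : ℝ) * (Ψ (q : ℝ) * ω (q : ℝ)) ^ s') := fun h =>
        notMem_of_lt_csInf hs2 hbdd ⟨(hs.trans hs1).le, h⟩
      exact le_dimH_ESet hΨpos hωmem hmono hmono'' hsum hωlim hbig hs
        (hsA.le.trans (csInf_le hbdd hone))
        (frequently_large_of_not_summable (ρ := fun q => Ψ q * ω q)
          (fun q hq => mul_pos (hΨpos q hq) (hωmem q hq).1) hs hs1 hns)
    refine le_of_forall_lt fun c hc => ?_
    have hc' : c ≠ ⊤ := hc.ne_top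
    lift c to NNReal using hc'
    rw [ENNReal.lt_ofReal_iff_toReal_lt ENNReal.coe_ne_top, ENNReal.coe_toReal] at hc
    obtain ⟨s, hs1, hs2⟩ := exists_between hc
    have hs0 : 0 < s := c.coe_nonneg.trans_lt hs1
    refine lt_of_lt_of_le ?_ (hlow s hs0 hs2)
    rwa [ENNReal.lt_ofReal_iff_toReal_lt ENNReal.coe_ne_top, ENNReal.coe_toReal]
end

section
/- Let Ψ : (0,∞) → (0,∞) and ω : (0,∞) → (0,1) be such that the maps q ↦ q²Ψ(q) and q ↦ q²Ψ(q)ω(q) are non-increasing on (0,∞), Ψ satisfies the square divisibility condition, Σ_{q=1}^∞ qΨ(q) < ∞ (sum over positive integers q), and lim_{q→∞} ω(q) = 0. Assume also that ω(q) ≥ (45/(16Ψ(q))) · Ψ(1/(8Ψ(q))) for all sufficiently large q. Then dim_H(E(Ψ,ω)) = inf{s ≥ 0 : Σ_{q=1}^∞ q(Ψ(q)ω(q))^s < ∞}. -/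
/-!
The value of the dimension comes from an upper bound by a covering argument and a lower bound by
a Cantor construction.

*Upper bound* (`dimH_exactSet_le`). A point of `E(Ψ, ω)` lies, for infinitely many `p/q`, in one
of the two annuli `(1 - ω(q))Ψ(q) ≤ |x - p/q| ≤ Ψ(q)`, which are intervals of length
`Ψ(q)ω(q)`. There are `O(q)` of them for each `q` in a bounded region, so the `s`-dimensional
Hausdorff measure is finite as soon as `∑ q (Ψ(q)ω(q))^s` converges.

*Lower bound* (`le_dimH_exactSet`). The intervals of the Cantor set are annuli
`J(r) = [r + (1 - ω(q))Ψ(q), r + Ψ(q)]` to the right of rationals `r` of denominator `q`. Inside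
a given `J(r)` of length `ℓ`, most points `x` are far from all rationals of the relevant
denominators: the exceptional sets have small measure because `∑ qΨ(q)` converges
(`volume_dyadic_bad`, `volume_tail_bad`, `volume_small_den_bad`). About `ℓN²` such points with
gaps of order `N⁻²` can be selected (`exists_spaced_points`), and the Dirichlet theorem yields
near each of them a rational of denominator comparable to `N`; the annuli of these rationals are
the children of `J(r)` (`exists_children`).

The point is that a child annulus, which hugs the end point `r + Ψ(q)`, must itself stay
away from the other rationals `r'` (`good_rational`). If the denominator `b` of `r'` is at most `q`,
the choice of `x` suffices. If `b ≥ 1/Ψ(q)`, the lower bound on `ω` makes `Ψ(b)` negligible compared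
with the length `Ψ(q)ω(q)`, and `r'` is dealt with at a later step. For `q < b < 1/Ψ(q)` the square
divisibility condition enters: `1/Ψ(q) = q²k`, so `r + Ψ(q)` is rational, and a rational `r'`
too close to it produces a mirror image, of smaller denominator, too close to `r`
(`mirror_identity`, `mirror_bound`).

The number of children being of order `ℓN²` with gaps of order `N⁻²`, the Cantor set has dimension
at least `s` whenever `N²(Ψ(N)ω(N))^s` is unbounded (`cantor_dim`), and this holds for every `s`
below the critical exponent of the series (`unbounded_of_not_summable`).
-/


open Filter Set

/-- `Ψ` satisfies the *square divisibility condition*: for every positive integer `q`,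
`Ψ(q)⁻¹` is a positive integer divisible by `q²`. -/
def SquareDivisibility (Ψ : ℝ → ℝ) : Prop :=
  ∀ q : ℕ, 0 < q → ∃ k : ℕ, 0 < k ∧ (Ψ (q : ℝ))⁻¹ = (q : ℝ) ^ 2 * (k : ℝ)

section Helpers

open MeasureTheory

/-! ### Hausdorff dimension of Cantor sets -/

/-- Dimension bound for a Cantor set built from a tree of intervals. Level `n` has `D n` intervals
`[u n k, v n k]`; interval `k` of level `n + 1` is a child of interval `k / m n` of level `n`, and
children with the same parent are separated by `gap n` times the difference of their indices.
If `D n * (m n * gap n) ^ s` stays bounded below, the set of branch points has dimension at least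
`s`: sending `t ∈ [0,1)` to a point of the branch through the nodes `⌊t * D n⌋` has an
`s`-Hölder left inverse, which maps the Cantor set onto `[0,1)`. -/
theorem cantor_dim (D m : ℕ → ℕ) (u v : ℕ → ℕ → ℝ) (gap : ℕ → ℝ) (s c : ℝ)
    (hs : 0 < s) (hs1 : s ≤ 1) (hc : 0 < c)
    (hD0 : D 0 = 1) (hD : ∀ n, D (n + 1) = D n * m n) (hm : ∀ n, 2 ≤ m n)
    (huv : ∀ n, ∀ k < D n, u n k ≤ v n k)
    (hnest : ∀ n, ∀ k < D (n + 1), u n (k / m n) ≤ u (n + 1) k ∧ v (n + 1) k ≤ v n (k / m n))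
    (hgap : ∀ n, 0 < gap n)
    (hsep : ∀ n, ∀ k k', k < k' → k' < D (n + 1) → k / m n = k' / m n →
      ((k' : ℝ) - k) * gap n ≤ u (n + 1) k' - v (n + 1) k)
    (hdim : ∀ n, c ≤ D n * (m n * gap n) ^ s)
    (K : Set ℝ)
    (hK : ∀ (x : ℝ) (k : ℕ → ℕ), (∀ n, k n < D n ∧ k (n + 1) / m n = k n ∧
      x ∈ Icc (u n (k n)) (v n (k n))) → x ∈ K) :
    ENNReal.ofReal s ≤ dimH K := by
  have hDpos : ∀ n, 0 < D n := by
    intro n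
    induction n with
    | zero => simp [hD0]
    | succ n ih => rw [hD]; exact Nat.mul_pos ih (by have := hm n; omega)
  have hDpow : ∀ n, n < D n := by
    intro n
    induction n with
    | zero => simp [hD0]
    | succ n ih => rw [hD]; nlinarith [hm n, hDpos n]
  -- the node of level `n` containing the parameter `t`
  let κ : ℝ → ℕ → ℕ := fun t n => ⌊t * D n⌋₊
  have hκlt : ∀ t ∈ Ico (0 : ℝ) 1, ∀ n, κ t n < D n := by
    intro t ht n
    have h0 : (0 : ℝ) < D n := by exact_mod_cast hDpos n
    refine (Nat.floor_lt (by have := ht.1; positivity)).2 ?_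
    nlinarith [ht.2]
  have hκdiv : ∀ t n, κ t (n + 1) / m n = κ t n := by
    intro t n
    have h0 : (m n : ℝ) ≠ 0 := by have := hm n; positivity
    simp only [κ]
    rw [← Nat.floor_div_natCast, hD]
    congr 1
    push_cast
    field_simp
  have hex : ∀ t, ∃ x, t ∈ Ico (0 : ℝ) 1 → ∀ n, x ∈ Icc (u n (κ t n)) (v n (κ t n)) := by
    intro t
    by_cases ht : t ∈ Ico (0 : ℝ) 1
    · have hanti : Antitone fun n => Icc (u n (κ t n)) (v n (κ t n)) := by
        refine antitone_nat_of_succ_le fun n => ?_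
        have := hnest n (κ t (n + 1)) (hκlt t ht _)
        rw [hκdiv] at this
        exact Icc_subset_Icc this.1 this.2
      have := ciSup_mem_iInter_Icc_of_antitone_Icc hanti
        (fun n => huv n _ (hκlt t ht n))
      exact ⟨_, fun _ n => mem_iInter.1 this n⟩
    · exact ⟨0, fun h => absurd h ht⟩
  choose G hG using hex
  have key : ∀ t ∈ Ico (0 : ℝ) 1, ∀ t' ∈ Ico (0 : ℝ) 1, t < t' →
      t' - t ≤ 2 ^ s / c * |G t' - G t| ^ s := by
    intro t ht t' ht' htt
    have hdiff : ∃ n, κ t n ≠ κ t' n := by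
      obtain ⟨n, hn⟩ := exists_nat_gt (1 / (t' - t))
      refine ⟨n, fun h => ?_⟩
      have h1 : t' * D n < κ t' n + 1 := Nat.lt_floor_add_one _
      have h2 : (κ t n : ℝ) ≤ t * D n := Nat.floor_le (by have := ht.1; positivity)
      rw [← h] at h1
      have h3 : (n : ℝ) < D n := by exact_mod_cast hDpow n
      have h4 : 0 < t' - t := by linarith
      rw [div_lt_iff₀ h4] at hn
      nlinarith
    classical
    let n0 := Nat.find hdiff
    have hn0 : κ t n0 ≠ κ t' n0 := Nat.find_spec hdiff
    have hn0' : ∀ j < n0, κ t j = κ t' j := fun j hj => by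
      simpa using Nat.find_min hdiff hj
    rcases hn : n0 with _ | n
    · exfalso
      rw [hn] at hn0
      have h1 := hκlt t ht 0
      have h2 := hκlt t' ht' 0
      omega
    rw [hn] at hn0
    have hsame : κ t n = κ t' n := hn0' n (by omega)
    have hd0 : (0 : ℝ) < D n := by exact_mod_cast hDpos n
    have hd1 : (0 : ℝ) < D (n + 1) := by exact_mod_cast hDpos (n + 1)
    have hm0 : (0 : ℝ) < m n := by have := hm n; positivity
    have hle : κ t (n + 1) ≤ κ t' (n + 1) :=
      Nat.floor_mono (by nlinarith)
    have hlt : κ t (n + 1) < κ t' (n + 1) := lt_of_le_of_ne hle hn0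
    have hL1 : (1 : ℝ) ≤ (κ t' (n + 1) : ℝ) - κ t (n + 1) := by
      have : ((κ t (n + 1) + 1 : ℕ) : ℝ) ≤ κ t' (n + 1) := by exact_mod_cast hlt
      push_cast at this; linarith
    have hX1 : t' - t ≤ 1 / D n := by
      have h1 : t' * D n < κ t' n + 1 := Nat.lt_floor_add_one _
      have h2 : (κ t n : ℝ) ≤ t * D n := Nat.floor_le (by have := ht.1; positivity)
      rw [← hsame] at h1
      rw [le_div_iff₀ hd0]; nlinarith
    set L : ℝ := (κ t' (n + 1) : ℝ) - κ t (n + 1) with hL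
    have hX2 : t' - t ≤ 2 * L / D (n + 1) := by
      have h1 : t' * D (n + 1) < κ t' (n + 1) + 1 := Nat.lt_floor_add_one _
      have h2 : (κ t (n + 1) : ℝ) ≤ t * D (n + 1) := Nat.floor_le (by have := ht.1; positivity)
      rw [le_div_iff₀ hd1]; nlinarith
    have hXpos : 0 < t' - t := by linarith
    have hGsep : L * gap n ≤ |G t' - G t| := by
      have h1 := hsep n _ _ hlt (hκlt t' ht' _) (by rw [hκdiv, hκdiv, hsame])
      have h2 := (hG t ht (n + 1)).2
      have h3 := (hG t' ht' (n + 1)).1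
      exact le_trans (by linarith) (le_abs_self _)
    have hstep : t' - t ≤ 1 / D n * (2 * L / m n) ^ s := by
      calc t' - t = (t' - t) ^ (1 - s) * (t' - t) ^ s := by
            rw [← Real.rpow_add hXpos]; simp
        _ ≤ (1 / D n) ^ (1 - s) * (2 * L / D (n + 1)) ^ s := by
            gcongr
        _ = (1 / D n) ^ (1 - s) * ((1 / D n) ^ s * (2 * L / m n) ^ s) := by
            rw [← Real.mul_rpow (by positivity) (by positivity), hD]
            congr 2
            push_cast
            field_simp
        _ = 1 / D n * (2 * L / m n) ^ s := by
            rw [← mul_assoc, ← Real.rpow_add (by positivity)]; simp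
    have hg := hgap n
    have hL0 : 0 < L := by linarith
    calc t' - t ≤ 1 / D n * (2 * L / m n) ^ s := hstep
      _ ≤ 2 ^ s / c * (L * gap n) ^ s := by
          have e1 : (D n * (m n * gap n) ^ s) * (1 / D n * (2 * L / m n) ^ s)
              = 2 ^ s * (L * gap n) ^ s := by
            rw [← Real.mul_rpow (by positivity) (by positivity)]
            have : (D n * (m n * gap n) ^ s) * (1 / D n * (2 * L / m n) ^ s)
              = (m n * gap n) ^ s * (2 * L / m n) ^ s := by field_simp
            rw [this, ← Real.mul_rpow (by positivity) (by positivity)]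
            congr 1
            field_simp
          rw [div_mul_eq_mul_div (2 ^ s) c, le_div_iff₀ hc, ← e1, mul_comm]
          gcongr
          exact hdim n
      _ ≤ 2 ^ s / c * |G t' - G t| ^ s := by gcongr
  have key2 : ∀ t ∈ Ico (0 : ℝ) 1, ∀ t' ∈ Ico (0 : ℝ) 1,
      |t - t'| ≤ 2 ^ s / c * |G t - G t'| ^ s := by
    intro t ht t' ht'
    rcases lt_trichotomy t t' with h | h | h
    · rw [abs_sub_comm, abs_of_pos (by linarith), abs_sub_comm (G t)]
      exact key t ht t' ht' h
    · subst h; simp [Real.zero_rpow hs.ne']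
    · rw [abs_of_pos (by linarith)]
      exact key t' ht' t ht h
  have hinj : InjOn G (Ico 0 1) := by
    intro t ht t' ht' h
    have := key2 t ht t' ht'
    rw [h, sub_self, abs_zero, Real.zero_rpow hs.ne', mul_zero] at this
    linarith [abs_nonpos_iff.1 this]
  have hsub : G '' Ico 0 1 ⊆ K := by
    rintro _ ⟨t, ht, rfl⟩
    exact hK _ (κ t) fun n => ⟨hκlt t ht n, hκdiv t n, hG t ht n⟩
  -- The left inverse of `G` is a Hölder map of `G '' [0,1)` onto `[0,1)`.
  let F := Function.invFunOn G (Ico (0 : ℝ) 1)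
  have hF : ∀ t ∈ Ico (0 : ℝ) 1, F (G t) = t := fun t ht => hinj.leftInvOn_invFunOn ht
  have hhold : HolderOnWith (2 ^ s / c).toNNReal s.toNNReal F (G '' Ico 0 1) := by
    rintro _ ⟨t, ht, rfl⟩ _ ⟨t', ht', rfl⟩
    rw [hF t ht, hF t' ht', edist_dist, edist_dist, Real.dist_eq, Real.dist_eq,
      Real.coe_toNNReal _ hs.le, ENNReal.ofReal_rpow_of_nonneg (abs_nonneg _) hs.le]
    change _ ≤ ENNReal.ofReal _ * _
    rw [← ENNReal.ofReal_mul (by positivity)]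
    exact ENNReal.ofReal_le_ofReal (key2 t ht t' ht')
  have himg : F '' (G '' Ico 0 1) = Ico 0 1 := by
    rw [image_image]
    ext y
    constructor
    · rintro ⟨t, ht, rfl⟩
      simpa [hF t ht] using ht
    · intro hy
      exact ⟨y, hy, hF y hy⟩
  have h1 := hhold.dimH_image_le (by simpa using hs)
  rw [himg, Real.dimH_of_nonempty_interior (by simp)] at h1
  rw [Module.finrank_self, Nat.cast_one, ENNReal.le_div_iff_mul_le (by simp [hs]) (by simp),
    one_mul] at h1
  exact h1.trans (dimH_mono hsub)

/-! ### Measure of neighbourhoods of separated sets -/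

/-- A `σ`-separated set has at most `(v - u + 2ρ)/σ + 1` points within `ρ` of `[u, v]`, so the
`ρ`-neighbourhoods of its points cover little of `[u, v]`. -/
theorem volume_near_separated_le (S : Set ℝ) (u v σ ρ : ℝ) (huv : u ≤ v) (hσ : 0 < σ) (hρ : 0 ≤ ρ)
    (hS : ∀ a ∈ S, ∀ b ∈ S, a ≠ b → σ ≤ |a - b|) :
    volume {x | x ∈ Icc u v ∧ ∃ a ∈ S, |x - a| < ρ} ≤
      ENNReal.ofReal (((v - u + 2 * ρ) / σ + 1) * (2 * ρ)) := by
  classical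
  set T : Set ℝ := S ∩ Icc (u - ρ) (v + ρ) with hT
  let M : ℕ := ⌊(v - u + 2 * ρ) / σ⌋₊ + 1
  let f : ℝ → ℕ := fun a => ⌊(a - (u - ρ)) / σ⌋₊
  have hmaps : MapsTo f T (Finset.range M) := by
    rintro a ⟨_, h1, h2⟩
    simp only [Finset.coe_range, mem_Iio, M, f, Nat.lt_succ_iff]
    apply Nat.floor_mono
    gcongr
    linarith
  have hinj : InjOn f T := by
    rintro a ⟨ha, ha1, -⟩ b ⟨hb, hb1, -⟩ hab
    by_contra hne
    have h1 := hS a ha b hb hne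
    have hab' : ⌊(a - (u - ρ)) / σ⌋₊ = ⌊(b - (u - ρ)) / σ⌋₊ := hab
    have ea := Nat.lt_floor_add_one ((a - (u - ρ)) / σ)
    have eb := Nat.lt_floor_add_one ((b - (u - ρ)) / σ)
    have fa := Nat.floor_le (show 0 ≤ (a - (u - ρ)) / σ from div_nonneg (by linarith) hσ.le)
    have fb := Nat.floor_le (show 0 ≤ (b - (u - ρ)) / σ from div_nonneg (by linarith) hσ.le)
    rw [hab'] at ea fa
    have h2 : |(a - (u - ρ)) / σ - (b - (u - ρ)) / σ| < 1 := by
      rw [abs_lt]; constructor <;> linarith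
    rw [← sub_div, abs_div, abs_of_pos hσ, div_lt_one hσ] at h2
    have : a - (u - ρ) - (b - (u - ρ)) = a - b := by ring
    rw [this] at h2
    linarith
  have hTfin : T.Finite := Set.Finite.of_injOn hmaps hinj (Finset.finite_toSet _)
  have hcard : hTfin.toFinset.card ≤ M := by
    have := Finset.card_le_card_of_injOn (s := hTfin.toFinset) (t := Finset.range M) f
      (by simpa using hmaps) (by simpa using hinj)
    simpa using this
  have hsub : {x | x ∈ Icc u v ∧ ∃ a ∈ S, |x - a| < ρ} ⊆
      ⋃ a ∈ hTfin.toFinset, Metric.ball a ρ := by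
    rintro x ⟨hx, a, ha, hxa⟩
    simp only [mem_iUnion]
    have := abs_lt.1 hxa
    refine ⟨a, ?_, by simpa [Real.dist_eq] using hxa⟩
    simp only [Finite.mem_toFinset, hT]
    exact ⟨ha, by linarith [hx.1], by linarith [hx.2]⟩
  refine (measure_mono hsub).trans ((measure_biUnion_finset_le _ _).trans ?_)
  simp only [Real.volume_ball, Finset.sum_const, nsmul_eq_mul]
  have : (hTfin.toFinset.card : ENNReal) = ENNReal.ofReal (hTfin.toFinset.card : ℝ) := by simp
  rw [this, ← ENNReal.ofReal_mul (by positivity)]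
  apply ENNReal.ofReal_le_ofReal
  gcongr
  have h1 : (hTfin.toFinset.card : ℝ) ≤ M := by exact_mod_cast hcard
  have h2 := Nat.floor_le (show 0 ≤ (v - u + 2 * ρ) / σ from div_nonneg (by linarith) hσ.le)
  simp only [M, Nat.cast_add, Nat.cast_one] at h1
  linarith

/-- A set of measure more than `2mh` contains `m` points with consecutive gaps at least `h`: take a
point close to the infimum, discard an interval of length `2h`, and continue. -/
theorem exists_spaced_points (h : ℝ) (hh : 0 < h) (m : ℕ) : ∀ A : Set ℝ, BddBelow A →
    ENNReal.ofReal (m * (2 * h)) < volume A →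
    ∃ x : ℕ → ℝ, (∀ i < m, x i ∈ A) ∧ ∀ i j, i < j → j < m → x i + ((j : ℝ) - i) * h ≤ x j := by
  induction m with
  | zero => exact fun A _ _ => ⟨fun _ => 0, by simp, by simp⟩
  | succ m ih =>
    intro A hA hvol
    have hne : A.Nonempty := nonempty_of_measure_ne_zero (ne_bot_of_gt hvol)
    obtain ⟨x0, hx0, hlt⟩ := exists_lt_of_csInf_lt hne (show sInf A < sInf A + h by linarith)
    set A' := A ∩ Ici (x0 + h) with hA'
    have hsub : A ⊆ A' ∪ Ico (sInf A) (sInf A + 2 * h) := by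
      intro y hy
      by_cases hy' : x0 + h ≤ y
      · exact Or.inl ⟨hy, hy'⟩
      · exact Or.inr ⟨csInf_le hA hy, by linarith⟩
    have h1 : volume A ≤ volume A' + ENNReal.ofReal (2 * h) := by
      refine (measure_mono hsub).trans ((measure_union_le _ _).trans ?_)
      simp [Real.volume_Ico]
    have h2 : ENNReal.ofReal (m * (2 * h)) < volume A' := by
      by_contra hcon
      push Not at hcon
      have : volume A ≤ ENNReal.ofReal ((m + 1 : ℕ) * (2 * h)) := by
        refine h1.trans ((add_le_add_left hcon _).trans ?_)
        rw [← ENNReal.ofReal_add (by positivity) (by positivity)]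
        apply ENNReal.ofReal_le_ofReal
        push_cast; linarith
      exact absurd hvol (not_lt.2 this)
    obtain ⟨x, hx, hxs⟩ := ih A' (hA.mono inter_subset_left) h2
    have hle : ∀ j < m, x0 + (j + 1 : ℝ) * h ≤ x j := by
      intro j hj
      rcases Nat.eq_zero_or_pos j with rfl | hj0
      · have := (hx 0 hj).2
        simpa using this
      · have e1 := hxs 0 j hj0 hj
        have e2 : x0 + h ≤ x 0 := (hx 0 (by omega)).2
        push_cast at e1
        linarith
    refine ⟨fun i => Nat.casesOn i x0 x, ?_, ?_⟩
    · rintro (_ | i) hi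
      · exact hx0
      · exact (hx i (by omega)).1
    · rintro (_ | i) (_ | j) hij hj
      · omega
      · simpa using hle j (by omega)
      · omega
      · have := hxs i j (by omega) (by omega)
        push_cast
        simpa using this

/-! ### The mirror trick -/

/-- The mirror trick. Put `Q = q²k`, so that `p/q + 1/Q` is rational with denominator `Q`. With
`d = aq - bp` and `C = b - dqk`, the distance from `p/q + 1/Q` to `a/b` is `|C|/(bQ)`. The
rational `e/C`, where `e = a - pdk`, satisfies `e/C - p/q = d/(qC)`. When `a/b` is unusually
close to `p/q + 1/Q`, the integer `C` is small, and `e/C` is a rational of small denominator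
close to `p/q`. -/
theorem mirror_identity (p a : ℤ) (q b k : ℕ) (hq : 0 < q) (hb : 0 < b) (hk : 0 < k)
    (hbQ : b < q ^ 2 * k) (hne : (p : ℝ) / q ≠ (a : ℝ) / b) :
    ∃ C e : ℤ, C ≠ 0 ∧ (e : ℝ) / C ≠ (p : ℝ) / q ∧
      |(p : ℝ) / q + 1 / ((q : ℝ) ^ 2 * k) - (a : ℝ) / b| = |(C : ℝ)| / (b * ((q : ℝ) ^ 2 * k)) ∧
      |(p : ℝ) / q - (e : ℝ) / C| = |(b : ℝ) - C| / ((q : ℝ) ^ 2 * k * |(C : ℝ)|) := by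
  set d : ℤ := a * q - b * p with hd
  have hd0 : d ≠ 0 := by
    intro h0
    apply hne
    have h1 : (a : ℝ) * q - b * p = 0 := by exact_mod_cast h0
    rw [div_eq_div_iff (by positivity) (by positivity)]
    linarith
  set C : ℤ := b - d * q * k with hC
  set e : ℤ := a - d * k * p with he
  have hrel : C * p + d = q * e := by rw [hC, he, hd]; ring
  have hC0 : C ≠ 0 := by
    intro h0
    have h1 : d = q * e := by rw [h0] at hrel; linarith
    have h2 : (b : ℤ) = q ^ 2 * k * e := by
      have : (b : ℤ) = d * q * k := by linarith
      rw [this, h1]; ring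
    have hQ : (0 : ℤ) < q ^ 2 * k := by positivity
    have hbQ' : (b : ℤ) < q ^ 2 * k := by exact_mod_cast hbQ
    have hb' : (0 : ℤ) < b := by exact_mod_cast hb
    have he0 : 0 < e := by
      by_contra h; push Not at h; nlinarith
    nlinarith
  have hq' : (q : ℝ) ≠ 0 := by positivity
  have hk' : (k : ℝ) ≠ 0 := by positivity
  have hb' : (b : ℝ) ≠ 0 := by positivity
  have hC' : (C : ℝ) ≠ 0 := by exact_mod_cast hC0
  have hdR : (d : ℝ) = a * q - b * p := by rw [hd]; push_cast; ring
  have hCR : (C : ℝ) = b - d * q * k := by rw [hC]; push_cast; ring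
  have hrelR : (C : ℝ) * p + d = q * e := by exact_mod_cast hrel
  refine ⟨C, e, hC0, ?_, ?_, ?_⟩
  · intro h
    rw [div_eq_div_iff hC' hq'] at h
    apply hd0
    have : (d : ℝ) = 0 := by linarith
    exact_mod_cast this
  · have : (p : ℝ) / q + 1 / ((q : ℝ) ^ 2 * k) - (a : ℝ) / b = C / (b * ((q : ℝ) ^ 2 * k)) := by
      rw [hCR, hdR]; field_simp; ring
    rw [this, abs_div, abs_of_pos (show (0 : ℝ) < b * ((q : ℝ) ^ 2 * k) by positivity)]
  · have : (p : ℝ) / q - (e : ℝ) / C = - ((b - C) / ((q : ℝ) ^ 2 * k * C)) := by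
      have e1 : (b : ℝ) - C = d * q * k := by rw [hCR]; ring
      rw [e1]; field_simp; linear_combination hrelR
    rw [this, abs_neg, abs_div, abs_mul,
      abs_of_pos (show (0 : ℝ) < (q : ℝ) ^ 2 * k by positivity)]

/-! ### Discrete form of the hypotheses -/

/-- The hypotheses of the theorem in discrete form, for the restrictions `ψ` and `w` of `Ψ` and `ω`
to the positive integers. The field `big` is what the lower bound on `ω` is used for: a rational
whose denominator is at least `1/ψ(q)` carries an interval that is short compared with the length
`ψ(q) w(q)` of an annulus of denominator `q`. -/
structure Nice (ψ w : ℕ → ℝ) : Prop where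
  pos : ∀ c, 0 < c → 0 < ψ c
  mono : ∀ a b : ℕ, 0 < a → a ≤ b → (b : ℝ) ^ 2 * ψ b ≤ (a : ℝ) ^ 2 * ψ a
  gmono : ∀ a b : ℕ, 0 < a → a ≤ b → ψ b * w b ≤ ψ a * w a
  sqdiv : ∀ q : ℕ, 0 < q → ∃ k : ℕ, 0 < k ∧ (ψ q)⁻¹ = (q : ℝ) ^ 2 * k
  sum : Summable fun c : ℕ => (c : ℝ) * ψ c
  wpos : ∀ c, 0 < c → 0 < w c ∧ w c < 1
  wlim : Tendsto w atTop (nhds 0)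
  big : ∀ᶠ q : ℕ in atTop, ∀ b : ℕ, (ψ q)⁻¹ ≤ b → ψ b ≤ ψ q * w q / 180

namespace Nice
variable {ψ w : ℕ → ℝ}

theorem anti (H : Nice ψ w) {a b : ℕ} (ha : 0 < a) (hab : a ≤ b) : ψ b ≤ ψ a := by
  have h1 := H.mono a b ha hab
  have h2 := H.pos b (by omega)
  have ha' : (0 : ℝ) < a := by exact_mod_cast ha
  have hab' : (a : ℝ) ≤ b := by exact_mod_cast hab
  have h3 : (a : ℝ) ^ 2 * ψ b ≤ (b : ℝ) ^ 2 * ψ b := by gcongr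
  exact le_of_mul_le_mul_left (h3.trans h1) (by positivity)

theorem anti_mul (H : Nice ψ w) {a b : ℕ} (ha : 0 < a) (hab : a ≤ b) :
    (b : ℝ) * ψ b ≤ a * ψ a := by
  have h1 := H.mono a b ha hab
  have h2 := H.pos b (by omega)
  have ha' : (0 : ℝ) < a := by exact_mod_cast ha
  have hab' : (a : ℝ) ≤ b := by exact_mod_cast hab
  have h3 : (a : ℝ) * (b * ψ b) ≤ (b : ℝ) * (b * ψ b) := by gcongr
  refine le_of_mul_le_mul_left (h3.trans ?_) ha'
  nlinarith

theorem two_pow_mul (H : Nice ψ w) {b : ℕ} (hb : 0 < b) (j : ℕ) :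
    ψ (2 ^ j * b) ≤ (1 / 4) ^ j * ψ b := by
  have h1 := H.mono b (2 ^ j * b) hb (Nat.le_mul_of_pos_left b (by positivity))
  push_cast at h1
  have hb' : (0 : ℝ) < (b : ℝ) ^ 2 := by positivity
  have h4 : (4 : ℝ) ^ j = (2 ^ j) ^ 2 := by rw [← pow_mul, mul_comm, pow_mul]; norm_num
  have : (4 : ℝ) ^ j * ψ (2 ^ j * b) ≤ ψ b := by
    rw [h4]
    refine le_of_mul_le_mul_left ?_ hb'
    calc _ = (2 ^ j * (b : ℝ)) ^ 2 * ψ (2 ^ j * b) := by ring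
      _ ≤ _ := h1
  rw [one_div, inv_pow, inv_mul_eq_div, le_div_iff₀ (by positivity)]
  linarith

/-- Cauchy condensation of `∑ c ψ(c)`; it gives in particular `c² ψ(c) → 0`. -/
theorem dyadic_summable (H : Nice ψ w) :
    Summable fun k : ℕ => ((2 ^ k : ℕ) : ℝ) ^ 2 * ψ (2 ^ k) := by
  have h0 : ∀ n : ℕ, 0 ≤ (n : ℝ) * ψ n := by
    intro n
    rcases Nat.eq_zero_or_pos n with rfl | hn
    · simp
    · have := H.pos n hn; positivity
  have := (summable_condensed_iff_of_nonneg (f := fun c : ℕ => (c : ℝ) * ψ c) h0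
    (fun a b ha hab => H.anti_mul ha hab)).2 H.sum
  refine this.congr fun k => ?_
  push_cast; ring

theorem eps_tendsto (H : Nice ψ w) : Tendsto (fun c : ℕ => (c : ℝ) ^ 2 * ψ c) atTop (nhds 0) := by
  have h1 := H.dyadic_summable.tendsto_atTop_zero
  rw [Metric.tendsto_atTop] at h1 ⊢
  intro ε hε
  obtain ⟨k, hk⟩ := h1 ε hε
  refine ⟨2 ^ k, fun n hn => ?_⟩
  have h2 := hk k le_rfl
  have hn0 : 0 < n := lt_of_lt_of_le (by positivity) hn
  have h3 := H.mono (2 ^ k) n (by positivity) hn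
  have h4 := H.pos n hn0
  rw [Real.dist_0_eq_abs] at h2 ⊢
  rw [abs_of_nonneg (by positivity)]
  exact h3.trans_lt ((le_abs_self _).trans_lt h2)

theorem psi_tendsto (H : Nice ψ w) : Tendsto ψ atTop (nhds 0) := by
  refine squeeze_zero' (eventually_atTop.2 ⟨1, fun c hc => (H.pos c hc).le⟩)
    (eventually_atTop.2 ⟨1, fun c hc => ?_⟩) H.eps_tendsto
  have := H.pos c hc
  have hcR : (1 : ℝ) ≤ c := by exact_mod_cast hc
  nlinarith [mul_nonneg (show (0 : ℝ) ≤ c - 1 by linarith) this.le, one_le_pow₀ (n := 2) hcR]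

/-- All blocks of consecutive terms far enough out in a nonnegative convergent series have a
small sum. -/
theorem tail_le {f : ℕ → ℝ} (hf : Summable f) (h0 : ∀ n, 0 ≤ f n) {η : ℝ} (hη : 0 < η) :
    ∃ i0, ∀ i ≥ i0, ∀ n, ∑ j ∈ Finset.range n, f (i + j) ≤ η := by
  have h1 := tendsto_sum_nat_add f
  obtain ⟨i0, hi0⟩ := eventually_atTop.1 (h1.eventually (gt_mem_nhds hη))
  refine ⟨i0, fun i hi n => ?_⟩
  have h2 : Summable fun k => f (k + i) := (summable_nat_add_iff i).2 hf
  refine le_trans ?_ (hi0 i hi).le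
  have h3 := h2.sum_le_tsum (Finset.range n) (fun j _ => h0 _)
  refine le_trans (le_of_eq ?_) h3
  exact Finset.sum_congr rfl fun j _ => by rw [add_comm]

end Nice

/-- `B` is a threshold beyond which all the asymptotic smallness conditions hold: `w` is small, the
condition `big` of `Nice` applies, and `ψ`, `c² ψ(c)` and the sums of `c² ψ(c)` along
`c = b, 2b, 4b, …` are below explicit constants. -/
structure Thr (ψ w : ℕ → ℝ) (B : ℕ) : Prop where
  pos : 0 < B
  half : ∀ q ≥ B, w q ≤ 1 / 2
  big : ∀ q ≥ B, ∀ b : ℕ, (ψ q)⁻¹ ≤ b → ψ b ≤ ψ q * w q / 180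
  dyadic : ∀ b ≥ B, ∀ n, ∑ j ∈ Finset.range n, ((2 ^ j * b : ℕ) : ℝ) ^ 2 * ψ (2 ^ j * b) ≤ 1 / 1000
  small : ψ B ≤ 1 / 180
  eps : ∀ b ≥ B, (b : ℝ) ^ 2 * ψ b ≤ 1 / 36400

theorem Nice.exists_thr {ψ w : ℕ → ℝ} (H : Nice ψ w) : ∃ B, Thr ψ w B := by
  obtain ⟨i0, hi0⟩ := Nice.tail_le H.dyadic_summable
    (fun k => by have := H.pos (2 ^ k) (by positivity); positivity)
    (show (0 : ℝ) < 1 / 1000 by norm_num)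
  have e1 := H.wlim.eventually (gt_mem_nhds (show (0 : ℝ) < 1 / 2 by norm_num))
  have e2 := H.big
  have e3 := H.psi_tendsto.eventually (gt_mem_nhds (show (0 : ℝ) < 1 / 180 by norm_num))
  have e4 := H.eps_tendsto.eventually (gt_mem_nhds (show (0 : ℝ) < 1 / 36400 by norm_num))
  obtain ⟨B, hB⟩ := eventually_atTop.1 (e1.and (e2.and (e3.and e4)))
  refine ⟨max B (2 ^ i0), ?_, ?_, ?_, ?_, ?_, ?_⟩
  · exact lt_of_lt_of_le (by positivity) (le_max_right _ _)
  · exact fun q hq => (hB q (le_trans (le_max_left _ _) hq)).1.le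
  · exact fun q hq => (hB q (le_trans (le_max_left _ _) hq)).2.1
  · intro b hb n
    refine le_trans (Finset.sum_le_sum fun j _ => ?_) (hi0 i0 le_rfl n)
    refine H.mono (2 ^ (i0 + j)) (2 ^ j * b) (by positivity) ?_
    rw [pow_add, mul_comm]
    exact Nat.mul_le_mul_left _ (le_trans (le_max_right _ _) hb)
  · exact (hB _ (le_max_left _ _)).2.2.1.le
  · exact fun b hb => (hB b (le_trans (le_max_left _ _) hb)).2.2.2.le

theorem rat_sep {r r' : ℚ} (h : r ≠ r') : 1 / ((r.den : ℝ) * r'.den) ≤ |(r : ℝ) - r'| := by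
  have h1 : (r : ℝ) = (r.num : ℝ) / r.den := by exact_mod_cast (Rat.num_div_den r).symm
  have h2 : (r' : ℝ) = (r'.num : ℝ) / r'.den := by exact_mod_cast (Rat.num_div_den r').symm
  have p1 : (0 : ℝ) < r.den := by exact_mod_cast r.pos
  have p2 : (0 : ℝ) < r'.den := by exact_mod_cast r'.pos
  have hne : (r : ℝ) - r' ≠ 0 := sub_ne_zero.2 (by exact_mod_cast h)
  have e : (r : ℝ) - r' = ((r.num * r'.den - r.den * r'.num : ℤ) : ℝ) / (r.den * r'.den) := by
    rw [h1, h2]; push_cast; rw [div_sub_div _ _ p1.ne' p2.ne']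
  have hz : (r.num * r'.den - r.den * r'.num : ℤ) ≠ 0 := by
    intro h0; rw [h0] at e; simp at e; exact hne e
  rw [e, abs_div, abs_of_pos (mul_pos p1 p2)]
  gcongr
  exact_mod_cast Int.one_le_abs hz

/-- If `r` of denominator `q` is far from the other rationals, in the sense of `h1` for denominators
at least `c0` and of `h2` for smaller ones, then the end point `r + ψ(q)` is far from every
rational `r'` of denominator strictly between `q` and `1/ψ(q)`. Otherwise the mirror image of `r'`
given by `mirror_identity` has a denominator smaller than that of `r'` and is too close to `r`. -/
theorem mirror_bound {ψ w : ℕ → ℝ} (H : Nice ψ w) (r : ℚ) (c0 : ℕ) (κ : ℝ)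
    (h1 : ∀ r' : ℚ, r' ≠ r → c0 ≤ r'.den → 364 * ψ r'.den ≤ |(r : ℝ) - r'|)
    (h2 : ∀ r' : ℚ, r' ≠ r → r'.den < c0 → κ ≤ |(r : ℝ) - r'|)
    (hε : 364 * ((r.den : ℝ) ^ 2 * ψ r.den) ≤ 1)
    (hεκ : 364 * ((r.den : ℝ) ^ 2 * ψ r.den) ≤ κ)
    (r' : ℚ) (hne : r' ≠ r) (hlt : r.den < r'.den) (hltQ : (r'.den : ℝ) < (ψ r.den)⁻¹) :
    182 * ψ r'.den ≤ |(r : ℝ) + ψ r.den - r'| := by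
  obtain ⟨k, hk, hkeq⟩ := H.sqdiv r.den r.pos
  set q := r.den with hq
  set b := r'.den with hb
  have hq0 : 0 < q := r.pos
  have hb0 : 0 < b := r'.pos
  have hqR : (0 : ℝ) < q := by exact_mod_cast hq0
  have hbR : (0 : ℝ) < b := by exact_mod_cast hb0
  have hqb : (q : ℝ) < b := by exact_mod_cast hlt
  have hψq := H.pos q hq0
  have hψb := H.pos b hb0
  have hεb := H.mono q b hq0 hlt.le
  have er : (r : ℝ) = (r.num : ℝ) / q := by exact_mod_cast (Rat.num_div_den r).symm
  have er' : (r' : ℝ) = (r'.num : ℝ) / b := by exact_mod_cast (Rat.num_div_den r').symm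
  have hψeq : ψ q = 1 / ((q : ℝ) ^ 2 * k) := by rw [← hkeq]; simp
  set Q : ℝ := (q : ℝ) ^ 2 * k with hQ
  have hQ0 : 0 < Q := by positivity
  by_cases hcase : 2 * b * q ≤ Q
  · -- `b` is so small that `ψ q` is negligible compared with `|r - r'| ≥ 1 / (b q)`
    have e1 := rat_sep hne.symm
    rw [← hq, ← hb] at e1
    have e2 : ψ q ≤ 1 / (2 * b * q) := by rw [hψeq]; gcongr
    have e3 : 1 / ((q : ℝ) * b) - 1 / (2 * b * q) = 1 / (2 * b * q) := by field_simp; norm_num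
    have e4 : 182 * ψ b ≤ 1 / (2 * b * q) := by
      have : 1 / (2 * b * b) ≤ 1 / (2 * b * (q : ℝ)) := by gcongr
      refine le_trans ?_ this
      rw [le_div_iff₀ (by positivity)]
      nlinarith
    have e5 : |(r : ℝ) - r'| ≤ |(r : ℝ) + ψ q - r'| + ψ q := by
      have := abs_sub_abs_le_abs_sub ((r : ℝ) - r') ((r : ℝ) + ψ q - r')
      have e : (r : ℝ) - r' - (r + ψ q - r') = - ψ q := by ring
      rw [e, abs_neg, abs_of_pos hψq] at this
      linarith
    linarith
  push Not at hcase
  have hbQ : b < q ^ 2 * k := by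
    rw [hkeq, hQ] at hltQ
    exact_mod_cast hltQ
  have hneR : (r.num : ℝ) / q ≠ (r'.num : ℝ) / b := by
    rw [← er, ← er']; exact_mod_cast hne.symm
  obtain ⟨C, e, hC0, hCe, hC1, hC2⟩ := mirror_identity r.num r'.num q b k hq0 hb0 hk hbQ hneR
  rw [← er, ← er', ← hψeq] at hC1
  rw [← er] at hC2 hCe
  rw [← hQ] at hC1 hC2
  rw [hC1]
  by_contra hcon
  push Not at hcon
  rw [div_lt_iff₀ (by positivity)] at hcon
  have hC1' : (1 : ℝ) ≤ |(C : ℝ)| := by exact_mod_cast Int.one_le_abs hC0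
  have hCb : |(C : ℝ)| * b < 182 * Q * ((b : ℝ) ^ 2 * ψ b) := by
    calc |(C : ℝ)| * b < 182 * ψ b * (b * Q) * b := mul_lt_mul_of_pos_right hcon hbR
      _ = _ := by ring
  have hCltb : |(C : ℝ)| < b := by
    have e1 : 182 * Q * ((b : ℝ) ^ 2 * ψ b) ≤ 182 * (2 * b * q) * ((b : ℝ) ^ 2 * ψ b) := by gcongr
    have e2 : 182 * (2 * b * q) * ((b : ℝ) ^ 2 * ψ b) ≤ b * q := by
      have : 364 * ((b : ℝ) ^ 2 * ψ b) ≤ 1 := by linarith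
      calc 182 * (2 * b * q) * ((b : ℝ) ^ 2 * ψ b) = ((b : ℝ) * q) * (364 * ((b : ℝ) ^ 2 * ψ b)) := by ring
        _ ≤ ((b : ℝ) * q) * 1 := by gcongr
        _ = b * q := by ring
    have e3 : |(C : ℝ)| * b < q * b := by nlinarith
    exact (lt_of_mul_lt_mul_right e3 hbR.le).trans hqb
  have hdist : |(r : ℝ) - (e : ℝ) / C| ≤ 2 * b / (Q * |(C : ℝ)|) := by
    rw [hC2]
    gcongr
    calc |(b : ℝ) - C| ≤ |(b : ℝ)| + |(C : ℝ)| := abs_sub _ _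
      _ ≤ 2 * b := by rw [abs_of_pos hbR]; linarith
  -- the mirror image of `r'`
  set t : ℚ := (e : ℚ) / C with ht
  have htR : (t : ℝ) = (e : ℝ) / C := by rw [ht]; push_cast; rfl
  have htne : t ≠ r := by
    intro h; apply hCe; rw [← htR, h]
  have htden : (t.den : ℝ) ≤ |(C : ℝ)| := by
    have h3 : (t.den : ℤ) ∣ C := by
      rw [ht, ← Rat.divInt_eq_div]; exact Rat.den_dvd e C
    have h4 := Int.le_of_dvd (abs_pos.2 hC0) ((dvd_abs _ _).2 h3)
    exact_mod_cast h4
  have ht0 : 0 < t.den := t.pos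
  rw [← htR, le_div_iff₀ (by positivity)] at hdist
  rcases le_or_gt c0 t.den with hc | hc
  · have h3 := h1 t htne hc
    have hC3 : ((C.natAbs : ℕ) : ℝ) = |(C : ℝ)| := by simp
    have htC : t.den ≤ C.natAbs := by
      have : (t.den : ℝ) ≤ (C.natAbs : ℕ) := by rw [hC3]; exact htden
      exact_mod_cast this
    have hCb' : C.natAbs ≤ b := by
      have : ((C.natAbs : ℕ) : ℝ) ≤ b := by rw [hC3]; exact hCltb.le
      exact_mod_cast this
    have h4 := H.anti ht0 htC
    have h5 := H.mono C.natAbs b (by omega) hCb'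
    rw [hC3] at h5
    set X := |(C : ℝ)|
    have h6 : 364 * ψ C.natAbs * (Q * X) ≤ 2 * b :=
      le_trans (mul_le_mul_of_nonneg_right (by linarith) (by positivity)) hdist
    have h7 : 364 * Q * (X ^ 2 * ψ C.natAbs) ≤ 2 * (X * b) := by
      calc _ = X * (364 * ψ C.natAbs * (Q * X)) := by ring
        _ ≤ X * (2 * b) := by gcongr
        _ = _ := by ring
    have h8 : 364 * Q * ((b : ℝ) ^ 2 * ψ b) ≤ 364 * Q * (X ^ 2 * ψ C.natAbs) := by gcongr
    linarith
  · have h3 := h2 t htne hc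
    set X := |(C : ℝ)|
    have hκ0 : 0 < κ := lt_of_lt_of_le (by positivity) hεκ
    have h4 : κ * (Q * X) ≤ 2 * b := le_trans (by gcongr) hdist
    have h5 : κ * Q ≤ 2 * b := by
      refine le_trans ?_ h4
      have : κ * (Q * 1) ≤ κ * (Q * X) := by gcongr
      rwa [mul_one] at this
    have h6 : 1 * (b : ℝ) ≤ X * b := by gcongr
    have h7 : κ * b < κ * (182 * Q * ((b : ℝ) ^ 2 * ψ b)) := by
      exact mul_lt_mul_of_pos_left (by linarith) hκ0
    have h8 : κ * (182 * Q * ((b : ℝ) ^ 2 * ψ b)) ≤ (364 * ((b : ℝ) ^ 2 * ψ b)) * b := by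
      calc _ = (κ * Q) * (182 * ((b : ℝ) ^ 2 * ψ b)) := by ring
        _ ≤ (2 * b) * (182 * ((b : ℝ) ^ 2 * ψ b)) := by gcongr
        _ = _ := by ring
    have h9 : κ < 364 * ((b : ℝ) ^ 2 * ψ b) := lt_of_mul_lt_mul_right (h7.trans_le h8) hbR.le
    linarith

/-! ### Measure of the bad sets -/

theorem volume_iUnion_le_ofReal (Z : ℕ → Set ℝ) (f : ℕ → ℝ) (X : ℝ)
    (h : ∀ j, volume (Z j) ≤ ENNReal.ofReal (f j)) (hf0 : ∀ j, 0 ≤ f j)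
    (hX : ∀ n, ∑ j ∈ Finset.range n, f j ≤ X) : volume (⋃ j, Z j) ≤ ENNReal.ofReal X := by
  refine (measure_iUnion_le _).trans (ENNReal.tsum_le_of_sum_range_le fun n => ?_)
  refine (Finset.sum_le_sum fun j _ => h j).trans ?_
  rw [← ENNReal.ofReal_sum_of_nonneg fun j _ => hf0 j]
  exact ENNReal.ofReal_le_ofReal (hX n)

theorem rat_sep_of_den_eq {r r' : ℚ} {c : ℕ} (h : r ≠ r') (h1 : r.den = c) (h2 : r'.den = c) :
    1 / (c : ℝ) ≤ |(r : ℝ) - r'| := by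
  have e1 : (r : ℝ) = (r.num : ℝ) / c := by rw [← h1]; exact_mod_cast (Rat.num_div_den r).symm
  have e2 : (r' : ℝ) = (r'.num : ℝ) / c := by rw [← h2]; exact_mod_cast (Rat.num_div_den r').symm
  have p1 : (0 : ℝ) < c := by rw [← h1]; exact_mod_cast r.pos
  have hne : r.num - r'.num ≠ 0 := by
    intro h0
    apply h
    have : (r : ℝ) = r' := by rw [e1, e2, sub_eq_zero.1 h0]
    exact_mod_cast this
  have e : (r : ℝ) - r' = ((r.num - r'.num : ℤ) : ℝ) / c := by rw [e1, e2]; push_cast; ring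
  rw [e, abs_div, abs_of_pos p1]
  gcongr
  exact_mod_cast Int.one_le_abs hne

/-- The points that, for some `j`, are within `2 ψ(2 ^ j * b0)` of a rational of denominator below
`2 ^ (j + 1) * b0` occupy a small part of `[u, v]`. Distinct rationals of denominator below
`2 ^ (j + 1) * b0` are separated by at least `(2 ^ (j + 1) * b0)⁻²`, so the measure is controlled
by the sum of `c² ψ(c)` along `c = 2 ^ j * b0`, and the only relation needed between `b0` and the
length `v - u` is `ψ(b0) ≤ (v - u)/180`. -/
theorem volume_dyadic_bad {ψ w : ℕ → ℝ} (H : Nice ψ w) {B b0 : ℕ} (hB : Thr ψ w B) (hb0 : B ≤ b0)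
    {u v : ℝ} (huv : u < v) (hb : ψ b0 ≤ (v - u) / 180) :
    volume {x | x ∈ Icc u v ∧ ∃ r : ℚ, ∃ j : ℕ, r.den < 2 ^ (j + 1) * b0 ∧
      |x - r| < 2 * ψ (2 ^ j * b0)} ≤ ENNReal.ofReal ((v - u) / 10) := by
  have hb00 : 0 < b0 := lt_of_lt_of_le hB.pos hb0
  set ℓ := v - u with hℓ
  have hℓ0 : 0 < ℓ := by linarith
  have hψb := H.pos b0 hb00
  have hψ : ∀ j, ψ (2 ^ j * b0) ≤ (1 / 4) ^ j * ψ b0 := fun j => H.two_pow_mul hb00 j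
  have hψp : ∀ j, 0 < ψ (2 ^ j * b0) := fun j => H.pos _ (by positivity)
  have hψ' : ∀ j, ψ (2 ^ j * b0) ≤ ψ b0 := fun j => H.anti hb00 (Nat.le_mul_of_pos_left _ (by positivity))
  refine (measure_mono (t := ⋃ j : ℕ, {x | x ∈ Icc u v ∧
    ∃ a ∈ {a : ℝ | ∃ r : ℚ, (r : ℝ) = a ∧ r.den < 2 ^ (j + 1) * b0}, |x - a| < 2 * ψ (2 ^ j * b0)})
    ?_).trans ?_
  · rintro x ⟨hx, r, j, hr, hxr⟩
    exact mem_iUnion.2 ⟨j, hx, r, ⟨r, rfl, hr⟩, hxr⟩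
  refine volume_iUnion_le_ofReal _
    (fun j => 32 * ℓ * (((2 ^ j * b0 : ℕ) : ℝ) ^ 2 * ψ (2 ^ j * b0)) + 4 * ((1 / 4) ^ j * ψ b0)) _ ?_ ?_ ?_
  · intro j
    have hpos : (0 : ℝ) < ((2 ^ j * b0 : ℕ) : ℝ) := by positivity
    refine (volume_near_separated_le _ u v (1 / (2 * ((2 ^ j * b0 : ℕ) : ℝ)) ^ 2) (2 * ψ (2 ^ j * b0))
      huv.le (by positivity) (by have := hψp j; positivity) ?_).trans ?_
    · rintro _ ⟨r, rfl, hr⟩ _ ⟨r', rfl, hr'⟩ hne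
      have hne' : r ≠ r' := fun h => hne (by rw [h])
      refine le_trans ?_ (rat_sep hne')
      have p1 : (0 : ℝ) < r.den := by exact_mod_cast r.pos
      have p2 : (0 : ℝ) < r'.den := by exact_mod_cast r'.pos
      have q1 : (r.den : ℝ) ≤ 2 * ((2 ^ j * b0 : ℕ) : ℝ) := by
        have : r.den ≤ 2 * (2 ^ j * b0) := by rw [pow_succ] at hr; linarith
        exact_mod_cast this
      have q2 : (r'.den : ℝ) ≤ 2 * ((2 ^ j * b0 : ℕ) : ℝ) := by
        have : r'.den ≤ 2 * (2 ^ j * b0) := by rw [pow_succ] at hr'; linarith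
        exact_mod_cast this
      rw [sq]
      gcongr
    · apply ENNReal.ofReal_le_ofReal
      rw [← hℓ, div_div_eq_mul_div, div_one]
      set Y : ℝ := ((2 ^ j * b0 : ℕ) : ℝ)
      have h1 := hψ j
      have h2 := hψp j
      have h3 := hψ' j
      set y := ψ (2 ^ j * b0)
      have h4 : (ℓ + 2 * (2 * y)) * (2 * Y) ^ 2 ≤ (2 * ℓ) * (2 * Y) ^ 2 := by
        gcongr; linarith
      calc ((ℓ + 2 * (2 * y)) * (2 * Y) ^ 2 + 1) * (2 * (2 * y))
          ≤ ((2 * ℓ) * (2 * Y) ^ 2 + 1) * (2 * (2 * y)) := by gcongr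
        _ = 32 * ℓ * (Y ^ 2 * y) + 4 * y := by ring
        _ ≤ _ := by linarith
  · intro j
    have := hψp j
    positivity
  · intro n
    rw [Finset.sum_add_distrib, ← Finset.mul_sum, ← Finset.mul_sum, ← Finset.sum_mul]
    have h1 := hB.dyadic b0 hb0 n
    have h2 : ∑ j ∈ Finset.range n, (1 / 4 : ℝ) ^ j ≤ 4 / 3 := by
      have hs := summable_geometric_of_lt_one (r := (1/4 : ℝ)) (by norm_num) (by norm_num)
      refine (hs.sum_le_tsum (Finset.range n) (fun j _ => by positivity)).trans ?_
      rw [tsum_geometric_of_lt_one (by norm_num) (by norm_num)]; norm_num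
    have h3 : 32 * ℓ * ∑ j ∈ Finset.range n, ((2 ^ j * b0 : ℕ) : ℝ) ^ 2 * ψ (2 ^ j * b0)
        ≤ 32 * ℓ * (1 / 1000) := by gcongr
    have h4 : (∑ j ∈ Finset.range n, (1 / 4 : ℝ) ^ j) * ψ b0 ≤ 4 / 3 * (ℓ / 180) := by gcongr
    linarith

/-- The points within `728 ψ(c)` of a rational of large denominator `c ≥ c0` occupy a small part of
`[u, v]`, since `∑ c ψ(c)` converges. Each denominator is treated separately, which is efficient
because `c0` is at least the inverse length of the interval. -/
theorem volume_tail_bad {ψ w : ℕ → ℝ} (H : Nice ψ w) {c0 : ℕ} (hc0 : 0 < c0)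
    {u v : ℝ} (huv : u < v) (h1 : 1 ≤ (v - u) * c0) (h2 : 1456 * ψ c0 ≤ v - u)
    (h3 : ∀ n, ∑ j ∈ Finset.range n, ((c0 + j : ℕ) : ℝ) * ψ (c0 + j) ≤ 1 / 43680) :
    volume {x | x ∈ Icc u v ∧ ∃ r : ℚ, c0 ≤ r.den ∧ |x - r| < 728 * ψ r.den}
      ≤ ENNReal.ofReal ((v - u) / 10) := by
  set ℓ := v - u with hℓ
  have hℓ0 : 0 < ℓ := by linarith
  refine (measure_mono (t := ⋃ j : ℕ, {x | x ∈ Icc u v ∧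
    ∃ a ∈ {a : ℝ | ∃ r : ℚ, (r : ℝ) = a ∧ r.den = c0 + j}, |x - a| < 728 * ψ (c0 + j)})
    ?_).trans ?_
  · rintro x ⟨hx, r, hr, hxr⟩
    obtain ⟨j, hj⟩ := Nat.exists_eq_add_of_le hr
    exact mem_iUnion.2 ⟨j, hx, r, ⟨r, rfl, hj⟩, by rwa [← hj]⟩
  refine volume_iUnion_le_ofReal _
    (fun j => 4368 * ℓ * (((c0 + j : ℕ) : ℝ) * ψ (c0 + j))) _ ?_ ?_ ?_
  · intro j
    have hpos : (0 : ℝ) < ((c0 + j : ℕ) : ℝ) := by positivity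
    have hψp := H.pos (c0 + j) (by omega)
    refine (volume_near_separated_le _ u v (1 / ((c0 + j : ℕ) : ℝ)) (728 * ψ (c0 + j))
      huv.le (by positivity) (by positivity) ?_).trans ?_
    · rintro _ ⟨r, rfl, hr⟩ _ ⟨r', rfl, hr'⟩ hne
      exact rat_sep_of_den_eq (fun h => hne (by rw [h])) hr hr'
    · apply ENNReal.ofReal_le_ofReal
      rw [← hℓ, div_div_eq_mul_div, div_one]
      have hle : (c0 : ℝ) ≤ ((c0 + j : ℕ) : ℝ) := by push_cast; linarith [Nat.cast_nonneg (α := ℝ) j]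
      have h4 := H.anti hc0 (show c0 ≤ c0 + j by omega)
      set Y : ℝ := ((c0 + j : ℕ) : ℝ)
      set y := ψ (c0 + j)
      have h5 : 1 ≤ ℓ * Y := h1.trans (by gcongr)
      have h6 : ℓ + 2 * (728 * y) ≤ 2 * ℓ := by linarith
      calc ((ℓ + 2 * (728 * y)) * Y + 1) * (2 * (728 * y))
          ≤ ((2 * ℓ) * Y + ℓ * Y) * (2 * (728 * y)) := by gcongr
        _ = _ := by ring
  · intro j
    have := H.pos (c0 + j) (by omega)
    positivity
  · intro n
    rw [← Finset.mul_sum]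
    have : 4368 * ℓ * ∑ j ∈ Finset.range n, ((c0 + j : ℕ) : ℝ) * ψ (c0 + j)
        ≤ 4368 * ℓ * (1 / 43680) := by gcongr; exact h3 n
    linarith

/-- For most points of `[u, v]`, the rational supplied by the Dirichlet theorem with parameter `N`
does not have a denominator in `[c0, N/100]`. -/
theorem volume_small_den_bad {c0 N : ℕ} (hc0 : 0 < c0) (hN : 2 ≤ N)
    {u v : ℝ} (huv : u < v) (h1 : 1 ≤ (v - u) * c0) :
    volume {x | x ∈ Icc u v ∧ ∃ r : ℚ, c0 ≤ r.den ∧ 100 * r.den ≤ N ∧ |x - r| < 1 / (r.den * N)}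
      ≤ ENNReal.ofReal ((v - u) / 15) := by
  set ℓ := v - u with hℓ
  have hℓ0 : 0 < ℓ := by linarith
  have hN0 : (2 : ℝ) ≤ N := by exact_mod_cast hN
  refine (measure_mono (t := ⋃ c ∈ Finset.Icc c0 (N / 100), {x | x ∈ Icc u v ∧
    ∃ a ∈ {a : ℝ | ∃ r : ℚ, (r : ℝ) = a ∧ r.den = c}, |x - a| < 1 / (c * N)})
    ?_).trans ?_
  · rintro x ⟨hx, r, hr, hr', hxr⟩
    simp only [mem_iUnion]
    exact ⟨r.den, Finset.mem_Icc.2 ⟨hr, by omega⟩, hx, r, ⟨r, rfl, rfl⟩, hxr⟩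
  refine (measure_biUnion_finset_le _ _).trans ?_
  refine (Finset.sum_le_sum (g := fun _ => ENNReal.ofReal (6 * ℓ / N)) ?_).trans ?_
  · intro c hc
    have hc1 := (Finset.mem_Icc.1 hc).1
    have hcp : (0 : ℝ) < c := by exact_mod_cast lt_of_lt_of_le hc0 hc1
    have hc2 : (c0 : ℝ) ≤ c := by exact_mod_cast hc1
    refine (volume_near_separated_le _ u v (1 / (c : ℝ)) (1 / (c * N))
      huv.le (by positivity) (by positivity) ?_).trans ?_
    · rintro _ ⟨r, rfl, hr⟩ _ ⟨r', rfl, hr'⟩ hne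
      exact rat_sep_of_den_eq (fun h => hne (by rw [h])) hr hr'
    · apply ENNReal.ofReal_le_ofReal
      rw [← hℓ, div_div_eq_mul_div, div_one]
      have h5 : 1 ≤ ℓ * c := h1.trans (by gcongr)
      have h6 : (2 : ℝ) / N ≤ 1 := by rw [div_le_one (by positivity)]; exact hN0
      calc ((ℓ + 2 * (1 / (c * N))) * c + 1) * (2 * (1 / (c * N)))
          = (ℓ * c + 2 / N + 1) * (2 * (1 / (c * N))) := by field_simp
        _ ≤ (ℓ * c + ℓ * c + ℓ * c) * (2 * (1 / (c * N))) := by gcongr; linarith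
        _ = _ := by field_simp; ring
  · rw [Finset.sum_const, nsmul_eq_mul, Nat.card_Icc]
    have e : ((N / 100 + 1 - c0 : ℕ) : ENNReal) = ENNReal.ofReal ((N / 100 + 1 - c0 : ℕ) : ℝ) := by simp
    rw [e, ← ENNReal.ofReal_mul (by positivity)]
    apply ENNReal.ofReal_le_ofReal
    have h7 : ((N / 100 + 1 - c0 : ℕ) : ℝ) ≤ (N : ℝ) / 100 := by
      rw [le_div_iff₀ (by norm_num)]
      have : (N / 100 + 1 - c0) * 100 ≤ N := by omega
      exact_mod_cast this
    calc ((N / 100 + 1 - c0 : ℕ) : ℝ) * (6 * ℓ / N) ≤ (N : ℝ) / 100 * (6 * ℓ / N) := by gcongr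
      _ = 6 * ℓ / 100 := by field_simp
      _ ≤ _ := by linarith

/-! ### Good rationals inside an interval -/

/-- The function `ψ` made constant below the threshold `B`; for monotone `ψ` this is
`min (ψ c) (ψ B)`. -/
def Phi (ψ : ℕ → ℝ) (B c : ℕ) : ℝ := ψ (max c B)

/-- The inductive property of the intervals of the Cantor construction: every point of `[u, v]` stays
at distance at least `Φ(r.den)/2` from each rational `r` whose scale `Φ(r.den)` exceeds 1/180 of the
length of the interval. -/
def Avoids (ψ : ℕ → ℝ) (B : ℕ) (u v : ℝ) : Prop :=
  ∀ x ∈ Icc u v, ∀ r : ℚ, (v - u) / 180 < Phi ψ B r.den → Phi ψ B r.den / 2 ≤ |x - r|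

/-- The left end point of the annulus `[r + (1 - w q) ψ q, r + ψ q]` to the right of `r`,
where `q` is the denominator of `r`. -/
def lo (ψ w : ℕ → ℝ) (r : ℚ) : ℝ := r + (1 - w r.den) * ψ r.den

/-- The right end point of the annulus to the right of `r`. -/
def hi (ψ : ℕ → ℝ) (r : ℚ) : ℝ := r + ψ r.den

/-- The first denominator `b0 ≥ B` at which `ψ` drops to the scale `η`. -/
theorem exists_base {ψ w : ℕ → ℝ} (H : Nice ψ w) {B : ℕ} (hB : Thr ψ w B) {η : ℝ} (hη : 0 < η) :
    ∃ b0, B ≤ b0 ∧ ψ b0 ≤ η ∧ ∀ c, Phi ψ B c ≤ η → Phi ψ B c ≤ ψ b0 := by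
  classical
  have hex : ∃ b, B ≤ b ∧ ψ b ≤ η :=
    ((eventually_ge_atTop B).and ((H.psi_tendsto.eventually (gt_mem_nhds hη)).mono
      fun _ h => le_of_lt h)).exists
  have hs := Nat.find_spec hex
  refine ⟨Nat.find hex, hs.1, hs.2, fun c hc => ?_⟩
  exact H.anti (lt_of_lt_of_le hB.pos hs.1) (Nat.find_min' hex ⟨le_max_right _ _, hc⟩)

/-- Every denominator of scale at most `ψ b0` belongs to one of the dyadic blocks of
`volume_dyadic_bad`. -/
theorem exists_dyadic {ψ w : ℕ → ℝ} (H : Nice ψ w) {B b0 : ℕ} (hB : Thr ψ w B) (hb0 : B ≤ b0)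
    {c : ℕ} (hc : Phi ψ B c ≤ ψ b0) :
    ∃ j : ℕ, c < 2 ^ (j + 1) * b0 ∧ Phi ψ B c ≤ ψ (2 ^ j * b0) := by
  have hp : 0 < b0 := lt_of_lt_of_le hB.pos hb0
  rcases lt_or_ge c (2 * b0) with h | h
  · exact ⟨0, by simpa using h, by simpa using hc⟩
  · have hd : c / b0 ≠ 0 := by
      have := (Nat.le_div_iff_mul_le hp).2 h
      omega
    refine ⟨Nat.log 2 (c / b0), ?_, ?_⟩
    · exact (Nat.div_lt_iff_lt_mul hp).1 (Nat.lt_pow_succ_log_self (by norm_num) _)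
    · have h1 : 2 ^ Nat.log 2 (c / b0) * b0 ≤ c :=
        (Nat.le_div_iff_mul_le hp).1 (Nat.pow_log_le_self 2 hd)
      have h2 : max c B = c := max_eq_left (by omega)
      rw [Phi, h2]
      exact H.anti (by positivity) h1

set_option maxHeartbeats 1000000 in
/-- Let `x` lie well inside an avoiding interval `[u, v]` and outside the three bad sets (`g1`, `g2`,
`g3`), and let `r` be a rational of denominator at most `N` supplied by the Dirichlet theorem at
`x`. Then the denominator of `r` is comparable to `N`, the annulus to the right of `r` lies in
`[u, v]` near `x` and is again avoiding, and its points keep distance `Φ` from every other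
rational whose scale lies between those of the annulus and of `[u, v]`. -/
theorem good_rational {ψ w : ℕ → ℝ} (H : Nice ψ w) {B c0 N : ℕ} (hB : Thr ψ w B) {u v : ℝ}
    (hW : Avoids ψ B u v) (hc0 : B ≤ c0) (hN0 : 0 < N)
    (hN1 : 1000 ≤ N * ψ c0) (hN2 : 10000 ≤ N * (v - u))
    (hN3 : ∀ q : ℕ, N ≤ 100 * q → 364 * ((q : ℝ) ^ 2 * ψ q) ≤ ψ c0 / 4)
    {x : ℝ} (hx : x ∈ Icc (u + (v - u) / 10) (v - (v - u) / 10))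
    (g1 : ∀ r : ℚ, Phi ψ B r.den ≤ (v - u) / 180 → 2 * Phi ψ B r.den ≤ |x - r|)
    (g2 : ∀ r : ℚ, c0 ≤ r.den → 728 * ψ r.den ≤ |x - r|)
    (g3 : ∀ r : ℚ, c0 ≤ r.den → 100 * r.den ≤ N → 1 / ((r.den : ℝ) * N) ≤ |x - r|)
    {r : ℚ} (hr : |x - r| < 1 / ((r.den : ℝ) * N)) (hrN : r.den ≤ N) :
    N ≤ 100 * r.den ∧ Icc (lo ψ w r) (hi ψ r) ⊆ Icc u v ∧ Avoids ψ B (lo ψ w r) (hi ψ r) ∧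
    (∀ y ∈ Icc (lo ψ w r) (hi ψ r), ∀ r' : ℚ, r' ≠ r → Phi ψ B r'.den ≤ (v - u) / 180 →
      ψ r.den * w r.den / 180 < Phi ψ B r'.den → Phi ψ B r'.den ≤ |y - r'|) ∧
    x - 100 / (N : ℝ) ^ 2 ≤ lo ψ w r ∧ hi ψ r ≤ x + 101 / (N : ℝ) ^ 2 := by
  have hNR : (1 : ℝ) ≤ N := by exact_mod_cast hN0
  have hBp := hB.pos
  have hc0p : 0 < c0 := by omega
  have hqp : 0 < r.den := r.pos
  have hqR : (1 : ℝ) ≤ r.den := by exact_mod_cast hqp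
  set q := r.den with hq
  have hψc0 := H.pos c0 hc0p
  have hψq := H.pos q hqp
  obtain ⟨hw0, hw1⟩ := H.wpos q hqp
  set δ : ℝ := 1 / (N : ℝ) ^ 2 with hδ
  have hδ0 : 0 < δ := by positivity
  have hδN : δ ≤ 1 / N := by
    rw [hδ]; apply one_div_le_one_div_of_le (by positivity); nlinarith
  have hNinv : 1 / (N : ℝ) ≤ ψ c0 / 1000 := by
    rw [div_le_div_iff₀ (by positivity) (by norm_num)]; linarith
  have hNinv2 : 1 / (N : ℝ) ≤ (v - u) / 10000 := by
    rw [div_le_div_iff₀ (by positivity) (by norm_num)]; linarith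
  -- away from all rationals of small denominator
  have hfar : ∀ r' : ℚ, r'.den < c0 → ψ c0 / 2 ≤ |x - r'| := by
    intro r' hr'
    have h1 : ψ c0 ≤ Phi ψ B r'.den := H.anti (by omega) (by omega)
    rcases le_or_gt (Phi ψ B r'.den) ((v - u) / 180) with h | h
    · have := g1 r' h; linarith
    · have := hW x ⟨by linarith [hx.1, hx.2], by linarith [hx.1, hx.2]⟩ r' h
      linarith
  have hrN' : |x - r| < 1 / N := by
    refine hr.trans_le (one_div_le_one_div_of_le (by positivity) ?_)
    nlinarith
  have hqc0 : c0 ≤ q := by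
    by_contra hlt
    have := hfar r (not_le.1 hlt)
    linarith
  have hqN : N ≤ 100 * q := by
    by_contra hlt
    have := g3 r hqc0 (by omega)
    linarith
  have hqNR : (N : ℝ) ≤ 100 * q := by exact_mod_cast hqN
  have hxr : |x - r| ≤ 100 * δ := by
    refine hr.le.trans ?_
    rw [hδ, mul_one_div, div_le_div_iff₀ (by positivity) (by positivity)]
    nlinarith
  have hψδ : ψ q ≤ δ := by
    have h1 := hB.eps q (by omega)
    rw [hδ, le_div_iff₀ (by positivity)]
    have h2 : (N : ℝ) ^ 2 ≤ (100 * q) ^ 2 := by gcongr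
    have h3 : ψ q * (N : ℝ) ^ 2 ≤ ψ q * (100 * q) ^ 2 := by gcongr
    nlinarith
  have hc1 : ∀ r' : ℚ, r' ≠ r → c0 ≤ r'.den → 364 * ψ r'.den ≤ |(r : ℝ) - r'| := by
    intro r' hne hc
    have hcp : (0 : ℝ) < r'.den := by exact_mod_cast r'.pos
    have hψc := H.pos r'.den r'.pos
    have heps := hB.eps r'.den (by omega)
    -- Either the trivial separation of distinct rationals suffices, or `ψ(r'.den)` is so large compared
    -- with `1/N²` that the distance from `x` passes on to `r`.
    by_cases hcase : 364 * (r'.den * ψ r'.den) * N ≤ 1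
    · have h1 := rat_sep hne.symm
      refine le_trans ?_ h1
      rw [le_div_iff₀ (by positivity)]
      have h2 : (r.den : ℝ) ≤ N := by exact_mod_cast hrN
      calc 364 * ψ r'.den * (r.den * r'.den) ≤ 364 * ψ r'.den * (N * r'.den) := by gcongr
        _ = 364 * (r'.den * ψ r'.den) * N := by ring
        _ ≤ 1 := hcase
    · push Not at hcase
      have h1 := g2 r' hc
      have h2 : 100 * δ ≤ 364 * ψ r'.den := by
        rw [hδ, mul_one_div, div_le_iff₀ (by positivity)]
        set c : ℝ := (r'.den : ℝ)
        set p := ψ r'.den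
        have h3 : 1 ≤ (364 * (c * p) * N) * (364 * (c * p) * N) := by nlinarith
        have h4 : (364 * (c * p) * N) * (364 * (c * p) * N)
            = (364 * p * (N : ℝ) ^ 2) * (364 * (c ^ 2 * p)) := by ring
        have h5 : (364 * p * (N : ℝ) ^ 2) * (364 * (c ^ 2 * p)) ≤ (364 * p * (N : ℝ) ^ 2) * (1 / 100) := by
          gcongr; linarith
        linarith
      have h3 : |x - r'| ≤ |x - r| + |(r : ℝ) - r'| := abs_sub_le _ _ _
      linarith
  have hc2 : ∀ r' : ℚ, r' ≠ r → r'.den < c0 → ψ c0 / 4 ≤ |(r : ℝ) - r'| := by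
    intro r' _ hc
    have h1 := hfar r' hc
    have h3 : |x - r'| ≤ |x - r| + |(r : ℝ) - r'| := abs_sub_le _ _ _
    linarith
  have hloR : (r : ℝ) ≤ lo ψ w r := by
    rw [lo]; nlinarith
  have hxr' := abs_le.1 hxr
  have hlo : x - 100 * δ ≤ lo ψ w r := by linarith
  have hhi : hi ψ r ≤ x + 101 * δ := by rw [hi]; linarith
  have hsub : Icc (lo ψ w r) (hi ψ r) ⊆ Icc u v := by
    intro y hy
    exact ⟨by linarith [hy.1, hx.1], by linarith [hy.2, hx.2]⟩
  -- Rationals `r'` are treated by denominator: below `c0` they are far from `x`; from `c0` to `q` they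
  -- are far from `r`; between `q` and `1/ψ(q)` they are far from `hi ψ r` by the mirror trick; beyond
  -- `1/ψ(q)` their scale is too small to matter here.
  have key : ∀ y ∈ Icc (lo ψ w r) (hi ψ r), ∀ r' : ℚ, r' ≠ r →
      ψ q * w q / 180 < Phi ψ B r'.den →
      (Phi ψ B r'.den ≤ (v - u) / 180 → Phi ψ B r'.den ≤ |y - r'|) ∧
        Phi ψ B r'.den / 2 ≤ |y - r'| := by
    intro y hy r' hne hΦ
    have hΦ0 : 0 < Phi ψ B r'.den := H.pos _ (by omega)
    rcases lt_or_ge r'.den c0 with hc | hc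
    · have hΦc : ψ c0 ≤ Phi ψ B r'.den := H.anti (by omega) (by omega)
      have hA : Phi ψ B r'.den ≤ (v - u) / 180 → Phi ψ B r'.den ≤ |y - r'| := by
        intro h
        have h1 := g1 r' h
        have h2 : |x - y| ≤ 101 * δ := by
          rw [abs_le]; constructor <;> linarith [hy.1, hy.2]
        have h3 : |x - r'| ≤ |x - y| + |y - r'| := abs_sub_le _ _ _
        linarith
      refine ⟨hA, ?_⟩
      rcases le_or_gt (Phi ψ B r'.den) ((v - u) / 180) with h | h
      · linarith [hA h]
      · exact hW y (hsub hy) r' h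
    · have hΦe : Phi ψ B r'.den = ψ r'.den := by rw [Phi, max_eq_left (by omega)]
      rw [hΦe] at hΦ hΦ0 ⊢
      suffices h : ψ r'.den ≤ |y - r'| from ⟨fun _ => h, by linarith⟩
      rcases le_or_gt r'.den q with hle | hgt
      · have h1 := hc1 r' hne hc
        have h2 := H.anti r'.pos hle
        have h3 : |(r : ℝ) - r'| ≤ |(r : ℝ) - y| + |y - r'| := abs_sub_le _ _ _
        have h4 : |(r : ℝ) - y| ≤ ψ q := by
          have := hy.2
          rw [hi] at this
          rw [abs_le]; constructor <;> linarith [hy.1]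
        linarith
      · have hlt : (r'.den : ℝ) < (ψ q)⁻¹ := by
          by_contra hcon
          have := hB.big q (by omega) r'.den (not_lt.1 hcon)
          linarith
        have heq := hB.eps q (by omega)
        have h1 := mirror_bound H r c0 (ψ c0 / 4) hc1 hc2 (by rw [← hq]; linarith)
          (hN3 q hqN) r' hne hgt hlt
        have h2 : |hi ψ r - y| ≤ ψ q * w q := by
          have e : hi ψ r - lo ψ w r = ψ q * w q := by rw [hi, lo]; ring
          rw [abs_le]; constructor <;> nlinarith [hy.1, hy.2]
        have h3 : |hi ψ r - r'| ≤ |hi ψ r - y| + |y - r'| := abs_sub_le _ _ _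
        rw [hi] at h2 h3
        linarith
  refine ⟨hqN, hsub, ?_, fun y hy r' hne h1 h2 => (key y hy r' hne h2).1 h1, ?_, ?_⟩
  · intro y hy r' h
    have e : hi ψ r - lo ψ w r = ψ q * w q := by rw [hi, lo]; ring
    rw [e] at h
    by_cases hne : r' = r
    · subst hne
      have hΦe : Phi ψ B r'.den = ψ r'.den := by rw [Phi, max_eq_left (by omega)]
      rw [hΦe]
      have h1 := hy.1
      have h2 := hB.half q (by omega)
      rw [lo] at h1
      refine le_trans ?_ (le_abs_self _)
      have h3 : 1 / 2 * ψ q ≤ (1 - w q) * ψ q := mul_le_mul_of_nonneg_right (by linarith) hψq.le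
      linarith
    · exact (key y hy r' hne h).2
  · calc x - 100 / (N : ℝ) ^ 2 = x - 100 * δ := by rw [hδ]; ring
      _ ≤ _ := hlo
  · calc _ ≤ x + 101 * δ := hhi
      _ = _ := by rw [hδ]; ring

/-- An avoiding interval of length `ℓ` contains, for every large `N` and every `m ≤ ℓN²/1600`, `m` annuli of rationals
of denominator comparable to `N`, with gaps of order `N⁻²`, all satisfying the conclusions of
`good_rational`. -/
theorem exists_children_s9 {ψ w : ℕ → ℝ} (H : Nice ψ w) {B : ℕ} (hB : Thr ψ w B) {u v : ℝ}
    (huv : u < v) (hW : Avoids ψ B u v) :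
    ∃ N0 : ℕ, ∀ N ≥ N0, ∀ m : ℕ, (m : ℝ) * 1600 ≤ (v - u) * (N : ℝ) ^ 2 → ∃ r : ℕ → ℚ,
      (∀ i < m, N ≤ 100 * (r i).den ∧ (r i).den ≤ N ∧
        Icc (lo ψ w (r i)) (hi ψ (r i)) ⊆ Icc u v ∧ Avoids ψ B (lo ψ w (r i)) (hi ψ (r i)) ∧
        ∀ y ∈ Icc (lo ψ w (r i)) (hi ψ (r i)), ∀ r' : ℚ, r' ≠ r i →
          Phi ψ B r'.den ≤ (v - u) / 180 →
          ψ (r i).den * w (r i).den / 180 < Phi ψ B r'.den → Phi ψ B r'.den ≤ |y - r'|) ∧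
      ∀ i j, i < j → j < m →
        ((j : ℝ) - i) * (100 / (N : ℝ) ^ 2) ≤ lo ψ w (r j) - hi ψ (r i) := by
  set ℓ := v - u with hℓ
  have hℓ0 : 0 < ℓ := by linarith
  obtain ⟨b0, hb0B, hb0ℓ, hb0⟩ := exists_base H hB (show 0 < ℓ / 180 by positivity)
  obtain ⟨i0, hi0⟩ := Nice.tail_le H.sum (fun n => by
    rcases Nat.eq_zero_or_pos n with rfl | hn
    · simp
    · have := H.pos n hn; positivity) (show (0 : ℝ) < 1 / 43680 by norm_num)
  obtain ⟨c0, ⟨⟨hc0B, hc0i⟩, hc0ℓ⟩, hc0ψ⟩ :=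
    (((eventually_ge_atTop B).and (eventually_ge_atTop i0)).and
      ((tendsto_natCast_atTop_atTop (R := ℝ)).eventually_ge_atTop (1 / ℓ)) |>.and
      (H.psi_tendsto.eventually (gt_mem_nhds (show 0 < ℓ / 1456 by positivity)))).exists
  have hBp := hB.pos
  have hc0p : 0 < c0 := by omega
  have hψc0 := H.pos c0 hc0p
  have hc0ℓ' : 1 ≤ ℓ * c0 := by
    rw [div_le_iff₀ hℓ0] at hc0ℓ; linarith
  obtain ⟨q1, hq1⟩ := eventually_atTop.1
    (H.eps_tendsto.eventually (gt_mem_nhds (show 0 < ψ c0 / 1456 by positivity)))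
  obtain ⟨N0, hN0⟩ := eventually_atTop.1
    (((eventually_ge_atTop 2).and (eventually_ge_atTop (100 * q1))).and
      (((tendsto_natCast_atTop_atTop (R := ℝ)).eventually_ge_atTop (1000 / ψ c0)).and
      ((tendsto_natCast_atTop_atTop (R := ℝ)).eventually_ge_atTop (10000 / ℓ))))
  refine ⟨N0, fun N hN m hm => ?_⟩
  obtain ⟨⟨hN2, hNq⟩, hNψ, hNℓ⟩ := hN0 N hN
  rw [div_le_iff₀ hψc0] at hNψ
  rw [div_le_iff₀ hℓ0] at hNℓ
  have hNp : 0 < N := by omega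
  have hNR : (0 : ℝ) < N := by exact_mod_cast hNp
  set Z1 := {x | x ∈ Icc u v ∧ ∃ r : ℚ, ∃ j : ℕ, r.den < 2 ^ (j + 1) * b0 ∧
      |x - r| < 2 * ψ (2 ^ j * b0)} with hZ1
  set Z2 := {x | x ∈ Icc u v ∧ ∃ r : ℚ, c0 ≤ r.den ∧ |x - r| < 728 * ψ r.den} with hZ2
  set Z3 := {x | x ∈ Icc u v ∧ ∃ r : ℚ, c0 ≤ r.den ∧ 100 * r.den ≤ N ∧
    |x - r| < 1 / (r.den * N)} with hZ3
  have v1 : volume Z1 ≤ ENNReal.ofReal (ℓ / 10) := volume_dyadic_bad H hB hb0B huv hb0ℓ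
  have v2 : volume Z2 ≤ ENNReal.ofReal (ℓ / 10) :=
    volume_tail_bad H hc0p huv hc0ℓ' (by linarith) (hi0 c0 hc0i)
  have v3 : volume Z3 ≤ ENNReal.ofReal (ℓ / 15) := volume_small_den_bad hc0p hN2 huv hc0ℓ'
  set A := Icc (u + ℓ / 10) (v - ℓ / 10) \ (Z1 ∪ Z2 ∪ Z3) with hA
  have hvol : ENNReal.ofReal (m * (2 * (400 / (N : ℝ) ^ 2))) < volume A := by
    by_contra hcon
    push Not at hcon
    have e1 : (m : ℝ) * (2 * (400 / (N : ℝ) ^ 2)) ≤ ℓ / 2 := by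
      rw [mul_div_assoc', mul_div_assoc', div_le_div_iff₀ (by positivity) (by norm_num)]
      linarith
    have e2 : volume A ≤ ENNReal.ofReal (ℓ / 2) := hcon.trans (ENNReal.ofReal_le_ofReal e1)
    have e3 : Icc (u + ℓ / 10) (v - ℓ / 10) ⊆ A ∪ (Z1 ∪ Z2 ∪ Z3) := by
      intro y hy
      by_cases h : y ∈ Z1 ∪ Z2 ∪ Z3
      · exact Or.inr h
      · exact Or.inl ⟨hy, h⟩
    have e4 : volume (Icc (u + ℓ / 10) (v - ℓ / 10)) ≤
        ENNReal.ofReal (ℓ / 2 + (ℓ / 10 + ℓ / 10 + ℓ / 15)) := by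
      rw [ENNReal.ofReal_add (by positivity) (by positivity),
        ENNReal.ofReal_add (p := ℓ / 10 + ℓ / 10) (by positivity) (by positivity),
        ENNReal.ofReal_add (by positivity) (by positivity)]
      refine (measure_mono e3).trans ((measure_union_le _ _).trans (add_le_add e2 ?_))
      refine (measure_union_le _ _).trans (add_le_add ?_ v3)
      exact (measure_union_le _ _).trans (add_le_add v1 v2)
    rw [Real.volume_Icc, ENNReal.ofReal_le_ofReal_iff (by positivity)] at e4
    linarith
  -- Points of the good set spaced by `400/N²`; the Dirichlet approximations at these points move by
  -- at most `101/N²`.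
  obtain ⟨x, hxA, hxs⟩ := exists_spaced_points (400 / (N : ℝ) ^ 2) (by positivity) m A
    ⟨u + ℓ / 10, fun y hy => hy.1.1⟩ hvol
  have hdir : ∀ i, ∃ r : ℚ, |x i - r| < 1 / ((r.den : ℝ) * N) ∧ r.den ≤ N := by
    intro i
    obtain ⟨r, h1, h2⟩ := Real.exists_rat_abs_sub_le_and_den_le (x i) hNp
    have hd : (0 : ℝ) < r.den := by exact_mod_cast r.pos
    refine ⟨r, h1.trans_lt (one_div_lt_one_div_of_lt (by positivity) (by nlinarith)), h2⟩
  choose r hr hrN using hdir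
  have hgood : ∀ i < m, _ := fun i hi => by
    have hxi := hxA i hi
    have hxI : x i ∈ Icc u v := ⟨by linarith [hxi.1.1], by linarith [hxi.1.2]⟩
    have hn1 : x i ∉ Z1 := fun h => hxi.2 (Or.inl (Or.inl h))
    have hn2 : x i ∉ Z2 := fun h => hxi.2 (Or.inl (Or.inr h))
    have hn3 : x i ∉ Z3 := fun h => hxi.2 (Or.inr h)
    refine good_rational H hB hW hc0B hNp hNψ hNℓ ?_ hxi.1 ?_ ?_ ?_ (hr i) (hrN i)
    · intro q hq
      have := hq1 q (by omega)
      linarith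
    · intro r' hr'
      obtain ⟨j, hj1, hj2⟩ := exists_dyadic H hB hb0B (hb0 _ hr')
      by_contra hcon
      exact hn1 ⟨hxI, r', j, hj1, by linarith⟩
    · intro r' hr'
      by_contra hcon
      exact hn2 ⟨hxI, r', hr', by linarith⟩
    · intro r' hr' hr''
      by_contra hcon
      exact hn3 ⟨hxI, r', hr', hr'', by linarith⟩
  refine ⟨r, fun i hi => ?_, fun i j hij hj => ?_⟩
  · obtain ⟨a1, a2, a3, a4, -, -⟩ := hgood i hi
    exact ⟨a1, hrN i, a2, a3, a4⟩
  · obtain ⟨-, -, -, -, -, a6⟩ := hgood i (hij.trans hj)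
    obtain ⟨-, -, -, -, a5, -⟩ := hgood j hj
    have h1 := hxs i j hij hj
    have h2 : (1 : ℝ) ≤ (j : ℝ) - i := by
      have : (i : ℝ) + 1 ≤ j := by exact_mod_cast hij
      linarith
    have e1 : (400 : ℝ) / (N : ℝ) ^ 2 = 4 * (100 / (N : ℝ) ^ 2) := by ring
    have e2 : (101 : ℝ) / (N : ℝ) ^ 2 = 1.01 * (100 / (N : ℝ) ^ 2) := by ring
    rw [e1] at h1
    rw [e2] at a6
    have hp : (0 : ℝ) < 100 / (N : ℝ) ^ 2 := by positivity
    set p := (100 : ℝ) / (N : ℝ) ^ 2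
    nlinarith

/-! ### The Cantor construction -/

/-- The set `E(Ψ, ω)` written in terms of the restrictions of `Ψ` and `ω` to the natural
numbers. -/
def ExactSet (ψ w : ℕ → ℝ) : Set ℝ :=
  {x | {pq : ℤ × ℕ | 0 < pq.2 ∧ |x - (pq.1 : ℝ) / (pq.2 : ℝ)| ≤ ψ pq.2}.Infinite ∧
    ∃ Q : ℕ, ∀ q : ℕ, Q ≤ q → ∀ p : ℤ, (1 - w q) * ψ q ≤ |x - (p : ℝ) / (q : ℝ)|}

/-- A point lying in the annuli of rationals `R n` of denominators tending to infinity, and at distance at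
least `Φ` from all other rationals, is exactly approximable. The scales `(len (n + 1), len n]/180`
exhaust all rationals `r ≠ R n`. A non-reduced fraction `p/b` representing `R n` is harmless, since
then `4 ψ(b) ≤ ψ((R n).den)`. -/
theorem mem_exactSet {ψ w : ℕ → ℝ} (H : Nice ψ w) {B : ℕ} (hB : Thr ψ w B) {x : ℝ} {R : ℕ → ℚ}
    {len : ℕ → ℝ} (h0 : len 0 = 1) (hlen : ∀ n, len (n + 1) = ψ (R n).den * w (R n).den)
    (hden : ∀ n, B + n ≤ (R n).den) (hx : ∀ n, x ∈ Icc (lo ψ w (R n)) (hi ψ (R n)))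
    (hS : ∀ n, ∀ r : ℚ, r ≠ R n → Phi ψ B r.den ≤ len n / 180 →
      len (n + 1) / 180 < Phi ψ B r.den → Phi ψ B r.den ≤ |x - r|) :
    x ∈ ExactSet ψ w := by
  classical
  have hBp := hB.pos
  have hlim : Tendsto len atTop (nhds 0) := by
    rw [← tendsto_add_atTop_iff_nat 1]
    have hd : Tendsto (fun n => (R n).den) atTop atTop :=
      tendsto_atTop_mono (f := fun n => n) (fun n => by have := hden n; omega) tendsto_id
    refine squeeze_zero (fun n => ?_) (fun n => ?_) (H.psi_tendsto.comp hd)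
    · rw [hlen]
      have := H.pos _ (R n).pos
      have := (H.wpos _ (R n).pos).1
      positivity
    · rw [hlen]
      have := H.pos _ (R n).pos
      have := (H.wpos _ (R n).pos).2
      simp only [Function.comp]
      nlinarith
  have hall : ∀ r : ℚ, (∃ n, r = R n) ∨ Phi ψ B r.den ≤ |x - r| := by
    intro r
    have hΦ : 0 < Phi ψ B r.den := H.pos _ (by omega)
    have hex : ∃ n, len n / 180 < Phi ψ B r.den := by
      obtain ⟨n, hn⟩ := (hlim.eventually (gt_mem_nhds (show 0 < 180 * Phi ψ B r.den by positivity))).exists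
      exact ⟨n, by linarith⟩
    have hs := Nat.find_spec hex
    rcases hn : Nat.find hex with _ | k
    · rw [hn, h0] at hs
      have : Phi ψ B r.den ≤ ψ B := H.anti hBp (le_max_right _ _)
      linarith [hB.small]
    · have hmin := Nat.find_min hex (m := k) (by omega)
      rw [hn] at hs
      by_cases hr : r = R k
      · exact Or.inl ⟨k, hr⟩
      · exact Or.inr (hS k r hr (not_lt.1 hmin) hs)
  have hlo : ∀ n, (1 - w (R n).den) * ψ (R n).den ≤ |x - R n| := by
    intro n
    have := (hx n).1
    rw [lo] at this
    exact le_trans (by linarith) (le_abs_self _)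
  constructor
  · intro hfin
    obtain ⟨M, hM⟩ := (hfin.image Prod.snd).bddAbove
    have h1 := hden M
    have : (R M).den ≤ M := by
      refine hM ⟨((R M).num, (R M).den), ⟨(R M).pos, ?_⟩, rfl⟩
      have e : ((R M).num : ℝ) / (R M).den = R M := by exact_mod_cast Rat.num_div_den (R M)
      simp only [e]
      have h2 := (hx M).1
      have h3 := (hx M).2
      rw [lo] at h2
      rw [hi] at h3
      have h4 := H.pos _ (R M).pos
      have h5 := H.wpos _ (R M).pos
      have h6 : 0 ≤ (1 - w (R M).den) * ψ (R M).den := mul_nonneg (by linarith) h4.le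
      rw [abs_le]; constructor <;> linarith
    omega
  · refine ⟨B, fun b hb a => ?_⟩
    have hb0 : 0 < b := by omega
    have hψb := H.pos b hb0
    have hwb := (H.wpos b hb0).1
    have h1 : (1 - w b) * ψ b ≤ ψ b := by nlinarith
    set r : ℚ := (a : ℚ) / b with hr
    have hrR : (r : ℝ) = (a : ℝ) / b := by rw [hr]; push_cast; rfl
    have hdvd : r.den ∣ b := by
      have : (r.den : ℤ) ∣ (b : ℤ) := by
        have h := Rat.den_dvd a (b : ℤ)
        rw [Rat.divInt_eq_div] at h
        rw [hr]
        exact_mod_cast h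
      exact_mod_cast this
    have hle : r.den ≤ b := Nat.le_of_dvd hb0 hdvd
    rw [← hrR]
    rcases hall r with ⟨n, hn⟩ | h
    · obtain ⟨t, ht⟩ := hdvd
      have h2 := hlo n
      rw [← hn] at h2
      have hqB : B ≤ r.den := by rw [hn]; have := hden n; omega
      rcases Nat.lt_or_ge t 2 with ht2 | ht2
      · have : t = 1 := by
          rcases Nat.eq_zero_or_pos t with h | h
          · rw [h] at ht; omega
          · omega
        rw [this, mul_one] at ht
        rwa [← ht] at h2
      · have h3 := H.mono r.den b r.pos hle
        have h4 := H.pos r.den r.pos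
        have h5 := hB.half _ hqB
        have hq : (0 : ℝ) < r.den := by exact_mod_cast r.pos
        have h6 : 2 * (r.den : ℝ) ≤ b := by
          have : 2 * r.den ≤ b := by rw [ht]; nlinarith
          exact_mod_cast this
        have h7 : (2 * (r.den : ℝ)) ^ 2 * ψ b ≤ (b : ℝ) ^ 2 * ψ b := by gcongr
        have h8 : 4 * ψ b ≤ ψ r.den := by
          refine le_of_mul_le_mul_left (a := (r.den : ℝ) ^ 2) ?_ (by positivity)
          linarith
        have h9 : 1 / 2 * ψ r.den ≤ (1 - w r.den) * ψ r.den :=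
          mul_le_mul_of_nonneg_right (by linarith) h4.le
        linarith
    · refine (h1.trans ?_).trans h
      exact H.anti (by omega) (max_le hle hb)

/-- A level of the Cantor construction: `D` intervals `[u k, v k]`, `k < D`, where interval `k` is the
annulus of the rational `r k` (except at the initial level), together with a lower bound `ℓ` for
their lengths and a counter `M` bounding from below the denominators used at the next level. -/
structure Level where
  D : ℕ
  u : ℕ → ℝ
  v : ℕ → ℝ
  r : ℕ → ℚ
  ℓ : ℝ
  M : ℕ

/-- The invariants of a level: its intervals are avoiding, and their `s`-dimensional mass
`D ℓ ^ s` has not dropped below one. -/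
structure Level.Valid (ψ : ℕ → ℝ) (B : ℕ) (s : ℝ) (L : Level) : Prop where
  D_pos : 0 < L.D
  ℓ_pos : 0 < L.ℓ
  le_length : ∀ k < L.D, L.ℓ ≤ L.v k - L.u k
  avoids : ∀ k < L.D, Avoids ψ B (L.u k) (L.v k)
  mass : 1 ≤ L.D * L.ℓ ^ s

/-- `L'` is obtained from `L` by replacing each interval with `m` annuli inside it: interval `k` of
`L'` is a child of interval `k / m` of `L`, and siblings are separated as in `cantor_dim`.
The field `far` keeps the points of `L'` away from all rationals of intermediate scale other than
the centre of their annulus. -/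
structure Level.Refines (ψ w : ℕ → ℝ) (B : ℕ) (L L' : Level) (m : ℕ) (gap : ℝ) : Prop where
  two_le : 2 ≤ m
  gap_pos : 0 < gap
  le_gap : L.ℓ / 32 ≤ m * gap
  D_eq : L'.D = L.D * m
  M_eq : L'.M = L.M + 1
  u_eq : ∀ k, L'.u k = lo ψ w (L'.r k)
  v_eq : ∀ k, L'.v k = hi ψ (L'.r k)
  den : ∀ k < L'.D, L.M ≤ (L'.r k).den
  sub : ∀ k < L'.D, Icc (L'.u k) (L'.v k) ⊆ Icc (L.u (k / m)) (L.v (k / m))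
  sep : ∀ k k', k < k' → k' < L'.D → k / m = k' / m →
    ((k' : ℝ) - k) * gap ≤ L'.u k' - L'.v k
  far : ∀ k < L'.D, ∀ y ∈ Icc (L'.u k) (L'.v k), ∀ r' : ℚ, r' ≠ L'.r k →
    Phi ψ B r'.den ≤ (L.v (k / m) - L.u (k / m)) / 180 →
    (L'.v k - L'.u k) / 180 < Phi ψ B r'.den → Phi ψ B r'.den ≤ |y - r'|

theorem hi_sub_lo (ψ w : ℕ → ℝ) (r : ℚ) : hi ψ r - lo ψ w r = ψ r.den * w r.den := by
  rw [hi, lo]; ring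

/-- Each valid level can be refined: choose `N` so large that `exists_children` applies to all its
intervals at once and that `N² (ψ(N) w(N)) ^ s` makes up for the factor `ℓ/3200` lost in the number
`m ≈ ℓN²/1600` of children. -/
theorem Level.Valid.exists_refines {ψ w : ℕ → ℝ} (H : Nice ψ w) {B : ℕ} (hB : Thr ψ w B) {s : ℝ}
    (hdiv : ∀ (K : ℝ) (N0 : ℕ), ∃ N ≥ N0, K ≤ (N : ℝ) ^ 2 * (ψ N * w N) ^ s)
    {L : Level} (hL : L.Valid ψ B s) :
    ∃ L' : Level, L'.Valid ψ B s ∧ ∃ m gap, L.Refines ψ w B L' m gap := by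
  have hex : ∀ k, ∃ N0 : ℕ, k < L.D → ∀ N ≥ N0, ∀ m : ℕ,
      (m : ℝ) * 1600 ≤ (L.v k - L.u k) * (N : ℝ) ^ 2 → ∃ r : ℕ → ℚ,
      (∀ i < m, N ≤ 100 * (r i).den ∧ (r i).den ≤ N ∧
        Icc (lo ψ w (r i)) (hi ψ (r i)) ⊆ Icc (L.u k) (L.v k) ∧
        Avoids ψ B (lo ψ w (r i)) (hi ψ (r i)) ∧
        ∀ y ∈ Icc (lo ψ w (r i)) (hi ψ (r i)), ∀ r' : ℚ, r' ≠ r i →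
          Phi ψ B r'.den ≤ (L.v k - L.u k) / 180 →
          ψ (r i).den * w (r i).den / 180 < Phi ψ B r'.den → Phi ψ B r'.den ≤ |y - r'|) ∧
      ∀ i j, i < j → j < m →
        ((j : ℝ) - i) * (100 / (N : ℝ) ^ 2) ≤ lo ψ w (r j) - hi ψ (r i) := by
    intro k
    by_cases hk : k < L.D
    · obtain ⟨N0, h⟩ := exists_children_s9 H hB
        (by linarith [hL.le_length k hk, hL.ℓ_pos]) (hL.avoids k hk)
      exact ⟨N0, fun _ => h⟩
    · exact ⟨0, fun h => absurd h hk⟩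
  choose N0 hN0 using hex
  have hℓ := hL.ℓ_pos
  obtain ⟨N, hN, hK⟩ := hdiv (3200 / L.ℓ)
    (∑ k ∈ Finset.range L.D, N0 k + 100 * (L.M + 1) + ⌈3200 / L.ℓ⌉₊)
  have hNk : ∀ k < L.D, N0 k ≤ N := by
    intro k hk
    have := Finset.single_le_sum (f := N0) (fun _ _ => Nat.zero_le _) (Finset.mem_range.2 hk)
    omega
  have hN1 : (1 : ℝ) ≤ N := by
    have : 1 ≤ N := by omega
    exact_mod_cast this
  have hN2 : 3200 / L.ℓ ≤ N := by
    refine (Nat.le_ceil _).trans ?_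
    have : ⌈3200 / L.ℓ⌉₊ ≤ N := by omega
    exact_mod_cast this
  have hNsq : (N : ℝ) ≤ (N : ℝ) ^ 2 := by nlinarith
  have ht : 2 ≤ L.ℓ * (N : ℝ) ^ 2 / 1600 := by
    rw [div_le_iff₀ hℓ] at hN2
    rw [le_div_iff₀ (by norm_num)]
    nlinarith
  set m : ℕ := ⌊L.ℓ * (N : ℝ) ^ 2 / 1600⌋₊ with hm
  have hm2 : 2 ≤ m := Nat.le_floor (by exact_mod_cast ht)
  have hmle : (m : ℝ) ≤ L.ℓ * (N : ℝ) ^ 2 / 1600 := Nat.floor_le (by linarith)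
  have hmge : L.ℓ * (N : ℝ) ^ 2 / 3200 ≤ m := by
    have := Nat.lt_floor_add_one (L.ℓ * (N : ℝ) ^ 2 / 1600)
    rw [← hm] at this
    linarith
  have hm0 : 0 < m := by omega
  have hch : ∀ k, ∃ r : ℕ → ℚ, k < L.D →
      (∀ i < m, N ≤ 100 * (r i).den ∧ (r i).den ≤ N ∧
        Icc (lo ψ w (r i)) (hi ψ (r i)) ⊆ Icc (L.u k) (L.v k) ∧
        Avoids ψ B (lo ψ w (r i)) (hi ψ (r i)) ∧
        ∀ y ∈ Icc (lo ψ w (r i)) (hi ψ (r i)), ∀ r' : ℚ, r' ≠ r i →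
          Phi ψ B r'.den ≤ (L.v k - L.u k) / 180 →
          ψ (r i).den * w (r i).den / 180 < Phi ψ B r'.den → Phi ψ B r'.den ≤ |y - r'|) ∧
      ∀ i j, i < j → j < m →
        ((j : ℝ) - i) * (100 / (N : ℝ) ^ 2) ≤ lo ψ w (r j) - hi ψ (r i) := by
    intro k
    by_cases hk : k < L.D
    · have h1 := hL.le_length k hk
      obtain ⟨r, hr⟩ := hN0 k hk N (hNk k hk) m (by nlinarith [sq_nonneg (N : ℝ)])
      exact ⟨r, fun _ => hr⟩
    · exact ⟨fun _ => 0, fun h => absurd h hk⟩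
  choose R hR using hch
  have hNp : 0 < N := by omega
  have hg0 : 0 < ψ N * w N := mul_pos (H.pos N hNp) (H.wpos N hNp).1
  have hdiv' : ∀ k < L.D * m, k / m < L.D ∧ k % m < m := fun k hk =>
    ⟨(Nat.div_lt_iff_lt_mul hm0).2 hk, Nat.mod_lt _ hm0⟩
  let r' : ℕ → ℚ := fun k => R (k / m) (k % m)
  refine ⟨⟨L.D * m, fun k => lo ψ w (r' k), fun k => hi ψ (r' k), r', ψ N * w N, L.M + 1⟩,
    ⟨?_, hg0, ?_, ?_, ?_⟩, m, 100 / (N : ℝ) ^ 2,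
    ⟨hm2, by positivity, ?_, rfl, rfl, fun _ => rfl, fun _ => rfl, ?_, ?_, ?_, ?_⟩⟩
  · exact Nat.mul_pos hL.D_pos hm0
  · intro k hk
    obtain ⟨h1, h2⟩ := hdiv' k hk
    simp only [hi_sub_lo]
    exact H.gmono _ _ (r' k).pos ((hR _ h1).1 _ h2).2.1
  · intro k hk
    obtain ⟨h1, h2⟩ := hdiv' k hk
    exact ((hR _ h1).1 _ h2).2.2.2.1
  · have hD : (1 : ℝ) ≤ L.D := by exact_mod_cast hL.D_pos
    have hgs : 0 < (ψ N * w N) ^ s := Real.rpow_pos_of_pos hg0 s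
    rw [div_le_iff₀ hℓ] at hK
    push_cast
    have h1 : 1 ≤ L.ℓ * (N : ℝ) ^ 2 / 3200 * (ψ N * w N) ^ s := by linarith
    calc 1 ≤ L.ℓ * (N : ℝ) ^ 2 / 3200 * (ψ N * w N) ^ s := h1
      _ ≤ m * (ψ N * w N) ^ s := by gcongr
      _ = 1 * m * (ψ N * w N) ^ s := by ring
      _ ≤ L.D * m * (ψ N * w N) ^ s := by gcongr
  · rw [mul_div_assoc', le_div_iff₀ (by positivity)]
    linarith
  · intro k hk
    obtain ⟨h1, h2⟩ := hdiv' k hk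
    have h3 : N ≤ 100 * (r' k).den := ((hR _ h1).1 _ h2).1
    show L.M ≤ (r' k).den
    omega
  · intro k hk
    obtain ⟨h1, h2⟩ := hdiv' k hk
    exact ((hR _ h1).1 _ h2).2.2.1
  · intro k k' hlt hk' heq
    obtain ⟨h1, h2⟩ := hdiv' k' hk'
    have e1 := Nat.div_add_mod k m
    have e2 := Nat.div_add_mod k' m
    rw [heq] at e1
    have h3 : k % m < k' % m := by omega
    have h4 := (hR _ h1).2 _ _ h3 h2
    have h5 : ((k' : ℝ) - k) = ((k' % m : ℕ) : ℝ) - ((k % m : ℕ) : ℝ) := by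
      have a1 : (m : ℝ) * (k' / m : ℕ) + ((k % m : ℕ) : ℝ) = k := by exact_mod_cast e1
      have a2 : (m : ℝ) * (k' / m : ℕ) + ((k' % m : ℕ) : ℝ) = k' := by exact_mod_cast e2
      linarith
    rw [h5]
    simp only [r', heq]
    exact h4
  · intro k hk
    obtain ⟨h1, h2⟩ := hdiv' k hk
    simp only [hi_sub_lo]
    exact ((hR _ h1).1 _ h2).2.2.2.2

/-- The lower bound: iterating the refinement from `[0, 1]` gives a Cantor set inside the exact
set, to which `cantor_dim` applies. -/
theorem le_dimH_exactSet {ψ w : ℕ → ℝ} (H : Nice ψ w) {s : ℝ} (hs : 0 < s) (hs1 : s ≤ 1)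
    (hdiv : ∀ (K : ℝ) (N0 : ℕ), ∃ N ≥ N0, K ≤ (N : ℝ) ^ 2 * (ψ N * w N) ^ s) :
    ENNReal.ofReal s ≤ dimH (ExactSet ψ w) := by
  obtain ⟨B, hB⟩ := H.exists_thr
  have hBp := hB.pos
  -- On `[0, 1]` the avoidance condition is vacuous, since `ψ B ≤ 1/180`.
  let L0 : Level := ⟨1, fun _ => 0, fun _ => 1, fun _ => 0, 1, B⟩
  have hL0 : L0.Valid ψ B s := by
    refine ⟨Nat.one_pos, one_pos, fun k _ => by simp [L0], fun k _ x _ r h => ?_, by simp [L0]⟩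
    have : Phi ψ B r.den ≤ ψ B := H.anti hBp (le_max_right _ _)
    have := hB.small
    simp only [L0] at h
    linarith
  have hnext : ∀ L : {L : Level // L.Valid ψ B s}, ∃ L' : {L : Level // L.Valid ψ B s},
      ∃ m gap, L.1.Refines ψ w B L'.1 m gap := by
    rintro ⟨L, hL⟩
    obtain ⟨L', hL', m, gap, h⟩ := hL.exists_refines H hB hdiv
    exact ⟨⟨L', hL'⟩, m, gap, h⟩
  choose nxt mm gg hnxt using hnext
  let T : ℕ → {L : Level // L.Valid ψ B s} := fun n => nxt^[n] ⟨L0, hL0⟩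
  have hT : ∀ n, T (n + 1) = nxt (T n) := fun n => Function.iterate_succ_apply' nxt n _
  let L : ℕ → Level := fun n => (T n).1
  have hV : ∀ n, (L n).Valid ψ B s := fun n => (T n).2
  have hRf : ∀ n, (L n).Refines ψ w B (L (n + 1)) (mm (T n)) (gg (T n)) := by
    intro n
    have := hnxt (T n)
    rw [← hT n] at this
    exact this
  have hM : ∀ n, (L n).M = B + n := by
    intro n
    induction n with
    | zero => rfl
    | succ n ih => rw [(hRf n).M_eq, ih]; ring
  refine cantor_dim (fun n => (L n).D) (fun n => mm (T n)) (fun n => (L n).u) (fun n => (L n).v)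
    (fun n => gg (T n)) s ((1 / 32) ^ s) hs hs1 (by positivity) rfl (fun n => (hRf n).D_eq)
    (fun n => (hRf n).two_le) ?_ ?_ (fun n => (hRf n).gap_pos) ?_ ?_ _ ?_
  · intro n k hk
    linarith [(hV n).le_length k hk, (hV n).ℓ_pos]
  · intro n k hk
    have h1 := (hRf n).sub k hk
    have h2 : (L (n + 1)).u k ≤ (L (n + 1)).v k := by
      linarith [(hV (n + 1)).le_length k hk, (hV (n + 1)).ℓ_pos]
    exact ⟨(h1 (left_mem_Icc.2 h2)).1, (h1 (right_mem_Icc.2 h2)).2⟩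
  · intro n k k' h1 h2 h3
    exact (hRf n).sep k k' h1 h2 h3
  · intro n
    have h1 := (hV n).mass
    have h2 := (hV n).ℓ_pos
    calc ((1 : ℝ) / 32) ^ s ≤ (1 / 32) ^ s * ((L n).D * (L n).ℓ ^ s) :=
          le_mul_of_one_le_right (by positivity) h1
      _ = (L n).D * ((L n).ℓ / 32) ^ s := by
          rw [div_eq_mul_one_div ((L n).ℓ) 32, Real.mul_rpow h2.le (by norm_num)]; ring
      _ ≤ _ := by
          gcongr
          exact (hRf n).le_gap
  · intro x k hk
    have hIcc : ∀ n, x ∈ Icc ((L n).u (k n)) ((L n).v (k n)) := fun n => (hk n).2.2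
    have hlt : ∀ n, k n < (L n).D := fun n => (hk n).1
    refine mem_exactSet H hB (R := fun n => (L (n + 1)).r (k (n + 1)))
      (len := fun n => (L n).v (k n) - (L n).u (k n)) ?_ ?_ ?_ ?_ ?_
    · show (1 : ℝ) - 0 = 1
      norm_num
    · intro n
      simp only [(hRf n).u_eq, (hRf n).v_eq, hi_sub_lo]
    · intro n
      rw [← hM n]
      exact (hRf n).den _ (hlt _)
    · intro n
      have := hIcc (n + 1)
      rwa [(hRf n).u_eq, (hRf n).v_eq] at this
    · intro n r hr h1 h2
      refine (hRf n).far _ (hlt (n + 1)) x (hIcc (n + 1)) r hr ?_ h2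
      rw [(hk n).2.1]
      exact h1

/-! ### The upper bound -/

theorem Nice.le_one {ψ w : ℕ → ℝ} (H : Nice ψ w) {q : ℕ} (hq : 0 < q) : ψ q ≤ 1 := by
  obtain ⟨k, hk, h⟩ := H.sqdiv q hq
  rw [← inv_inv (ψ q), h]
  apply inv_le_one_of_one_le₀
  have h1 : (1 : ℝ) ≤ q := by exact_mod_cast hq
  have h2 : (1 : ℝ) ≤ k := by exact_mod_cast hk
  have h3 : (1 : ℝ) ≤ (q : ℝ) ^ 2 := one_le_pow₀ h1
  nlinarith

theorem Nice.num_le {ψ w : ℕ → ℝ} (H : Nice ψ w) {q R : ℕ} (hq : 0 < q) {x : ℝ}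
    (hx : x ∈ Icc (-(R : ℝ)) R) {p : ℤ} (h : |x - (p : ℝ) / q| ≤ ψ q) :
    |p| ≤ ((R + 1) * q : ℕ) := by
  have h1 := H.le_one hq
  have hq' : (0 : ℝ) < q := by exact_mod_cast hq
  have h2 : |(p : ℝ) / q| ≤ R + 1 := by
    have := abs_le.1 h
    rw [abs_le]; constructor <;> linarith [hx.1, hx.2]
  rw [abs_div, abs_of_pos hq', div_le_iff₀ hq'] at h2
  exact_mod_cast h2

/-- A point of the exact set lies in annuli of arbitrarily large denominator; on a bounded
interval only finitely many fractions have a denominator below a given bound. -/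
theorem exists_large_approx {ψ w : ℕ → ℝ} (H : Nice ψ w) {R : ℕ} {x : ℝ}
    (hx : x ∈ ExactSet ψ w) (hxR : x ∈ Icc (-(R : ℝ)) R) (n : ℕ) :
    ∃ (q : ℕ) (p : ℤ), n ≤ q ∧ |x - (p : ℝ) / q| ≤ ψ q ∧ (1 - w q) * ψ q ≤ |x - (p : ℝ) / q| := by
  obtain ⟨hinf, Q, hQ⟩ := hx
  by_contra hcon
  push Not at hcon
  refine hinf (Set.Finite.subset
    ((Set.finite_Icc (-(((R + 1) * (max n Q) : ℕ) : ℤ)) (((R + 1) * (max n Q) : ℕ) : ℤ)).prod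
      (Set.finite_Iio (max n Q))) ?_)
  rintro ⟨p, q⟩ ⟨hq, hpq⟩
  simp only at hq hpq
  have hlt : q < max n Q := by
    by_contra hge
    have h1 := hcon q p (by omega) hpq
    have h2 := hQ q (by omega) p
    linarith
  have h3 := H.num_le hq hxR hpq
  have h4 : (R + 1) * q ≤ (R + 1) * max n Q := Nat.mul_le_mul_left _ hlt.le
  have h5 : |p| ≤ (((R + 1) * max n Q : ℕ) : ℤ) := h3.trans (by exact_mod_cast h4)
  exact ⟨abs_le.1 h5, hlt⟩

/-- The upper bound: on `[-R, R]` the exact set is covered, for each `n`, by the left and right annuli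
of length `ψ(q) w(q)` of the fractions with denominator `q > n` and numerator at most
`(R + 1) q` in absolute value. -/
theorem dimH_exactSet_le {ψ w : ℕ → ℝ} (H : Nice ψ w) {s : ℝ} (hs : 0 < s)
    (hsum : Summable fun q : ℕ => (q : ℝ) * (ψ q * w q) ^ s) :
    dimH (ExactSet ψ w) ≤ ENNReal.ofReal s := by
  have hU : ExactSet ψ w = ⋃ R : ℕ, ExactSet ψ w ∩ Icc (-(R : ℝ)) R := by
    rw [← inter_iUnion]
    refine (inter_eq_left.2 fun x _ => mem_iUnion.2 ?_).symm
    obtain ⟨R, hR⟩ := exists_nat_ge |x|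
    exact ⟨R, abs_le.1 hR⟩
  rw [hU, dimH_iUnion]
  refine iSup_le fun R => ?_
  have hg : ∀ q : ℕ, 0 < q → 0 < ψ q * w q := fun q hq => mul_pos (H.pos q hq) (H.wpos q hq).1
  have e : ENNReal.ofReal s = ((s.toNNReal : NNReal) : ENNReal) := rfl
  rw [e]
  apply dimH_le_of_hausdorffMeasure_ne_top
  rw [Real.coe_toNNReal s hs.le]
  let ι : ℕ → Type := fun n => Σ j : ℕ, Fin (2 * ((R + 1) * (n + 1 + j)) + 1) × Bool
  -- Centre of the annulus indexed by `i`: denominator `n + 1 + i.1`, numerator shifted so that it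
  -- ranges over `[-(R + 1) q, (R + 1) q]`; the Boolean selects the side.
  let c : ∀ n, ι n → ℝ := fun n i =>
    (((i.2.1 : ℕ) : ℝ) - ((R + 1) * (n + 1 + i.1) : ℕ)) / ((n + 1 + i.1 : ℕ) : ℝ)
  let t : ∀ n, ι n → Set ℝ := fun n i =>
    if i.2.2 then Icc (c n i + (1 - w (n + 1 + i.1)) * ψ (n + 1 + i.1)) (c n i + ψ (n + 1 + i.1))
    else Icc (c n i - ψ (n + 1 + i.1)) (c n i - (1 - w (n + 1 + i.1)) * ψ (n + 1 + i.1))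
  have hdiam : ∀ n i, Metric.ediam (t n i) =
      ENNReal.ofReal (ψ (n + 1 + i.1) * w (n + 1 + i.1)) := by
    intro n i
    simp only [t]
    split_ifs
    · rw [Real.ediam_Icc]; congr 1; ring
    · rw [Real.ediam_Icc]; congr 1; ring
  have hglim : Tendsto (fun n : ℕ => ENNReal.ofReal (ψ (n + 1) * w (n + 1))) atTop (nhds 0) := by
    rw [← ENNReal.ofReal_zero]
    apply ENNReal.tendsto_ofReal
    refine squeeze_zero (fun n => (hg _ n.succ_pos).le) (fun n => ?_)
      ((tendsto_add_atTop_iff_nat 1).2 H.psi_tendsto)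
    have h1 := H.pos _ n.succ_pos
    have h2 := (H.wpos _ n.succ_pos).2
    exact mul_le_of_le_one_right h1.le h2.le
  have hcover : ∀ n, ExactSet ψ w ∩ Icc (-(R : ℝ)) R ⊆ ⋃ i, t n i := by
    rintro n x ⟨hx, hxR⟩
    obtain ⟨q, p, hnq, h1, h2⟩ := exists_large_approx H hx hxR (n + 1)
    obtain ⟨j, rfl⟩ := Nat.exists_eq_add_of_le hnq
    have h3 := abs_le.1 (H.num_le (by omega) hxR h1)
    set P : ℕ := (R + 1) * (n + 1 + j) with hP
    have hi : (p + P).toNat < 2 * P + 1 := by omega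
    have hcast : (((p + P).toNat : ℕ) : ℝ) - (P : ℝ) = p := by
      have : (((p + P).toNat : ℕ) : ℤ) = p + P := Int.toNat_of_nonneg (by omega)
      have : (((p + P).toNat : ℕ) : ℝ) = p + P := by exact_mod_cast this
      linarith
    rw [mem_iUnion]
    have hc : ∀ b : Bool, c n ⟨j, ⟨(p + P).toNat, hi⟩, b⟩ = (p : ℝ) / ((n + 1 + j : ℕ) : ℝ) := by
      intro b
      simp only [c]
      rw [← hP, hcast]
    set z : ℝ := (p : ℝ) / ((n + 1 + j : ℕ) : ℝ)
    rcases le_total 0 (x - z) with h | h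
    · refine ⟨⟨j, ⟨(p + P).toNat, hi⟩, true⟩, ?_⟩
      rw [abs_of_nonneg h] at h1 h2
      simp only [t, hc]
      exact ⟨by linarith, by linarith⟩
    · refine ⟨⟨j, ⟨(p + P).toNat, hi⟩, false⟩, ?_⟩
      rw [abs_of_nonpos h] at h1 h2
      simp only [t, hc]
      exact ⟨by linarith, by linarith⟩
  let F : ℕ → ENNReal := fun q => ENNReal.ofReal ((4 * R + 6) * ((q : ℝ) * (ψ q * w q) ^ s))
  have hF : ∑' q, F q ≠ ⊤ := (hsum.mul_left (4 * (R : ℝ) + 6)).tsum_ofReal_ne_top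
  have hbound : ∀ n, ∑' i, Metric.ediam (t n i) ^ s ≤ ∑' q, F q := by
    intro n
    simp only [hdiam]
    rw [ENNReal.tsum_sigma']
    refine le_trans (ENNReal.tsum_le_tsum fun j => ?_)
      (ENNReal.tsum_comp_le_tsum_of_injective (f := fun j => n + 1 + j)
        (add_right_injective (n + 1)) F)
    have hgq := hg (n + 1 + j) (by omega)
    rw [tsum_fintype]
    dsimp only
    rw [Finset.sum_const, Finset.card_univ, Fintype.card_prod, Fintype.card_fin,
      Fintype.card_bool, nsmul_eq_mul, ENNReal.ofReal_rpow_of_pos hgq]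
    have hc : (((2 * ((R + 1) * (n + 1 + j)) + 1) * 2 : ℕ) : ENNReal) =
      ENNReal.ofReal (((2 * ((R + 1) * (n + 1 + j)) + 1) * 2 : ℕ) : ℝ) :=
      (ENNReal.ofReal_natCast _).symm
    rw [hc, ← ENNReal.ofReal_mul (by positivity)]
    apply ENNReal.ofReal_le_ofReal
    rw [← mul_assoc (4 * (R : ℝ) + 6)]
    gcongr
    push_cast
    have : (0 : ℝ) ≤ n + j := by positivity
    nlinarith [Nat.cast_nonneg (α := ℝ) R]
  have hle := Measure.hausdorffMeasure_le_liminf_tsum (l := atTop) s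
    (ExactSet ψ w ∩ Icc (-(R : ℝ)) R) _ hglim t
    (Eventually.of_forall fun n i => by
      rw [hdiam]
      exact ENNReal.ofReal_le_ofReal (H.gmono _ _ n.succ_pos (by omega)))
    (Eventually.of_forall hcover)
  refine ne_top_of_le_ne_top hF (hle.trans ?_)
  refine (liminf_le_liminf (Eventually.of_forall hbound)).trans ?_
  simp

/-! ### The critical exponent and the reduction to integers -/

/-- Below the critical exponent `q² (ψ(q) w(q)) ^ s` is unbounded: a bound would give
`q (ψ(q) w(q)) ^ s₁ = O(q ^ (1 - 2 s₁/s))`, which is summable. -/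
theorem unbounded_of_not_summable {ψ w : ℕ → ℝ} (H : Nice ψ w) {s s₁ : ℝ} (hs : 0 < s)
    (hss₁ : s < s₁) (hns : ¬ Summable fun q : ℕ => (q : ℝ) * (ψ q * w q) ^ s₁) (K : ℝ) (N0 : ℕ) :
    ∃ N ≥ N0, K ≤ (N : ℝ) ^ 2 * (ψ N * w N) ^ s := by
  by_contra hcon
  push Not at hcon
  apply hns
  set τ := s₁ / s with hτ
  have hτ1 : 1 < τ := by rw [hτ, one_lt_div hs]; exact hss₁
  have hsum : Summable fun q : ℕ => |K| ^ τ * (q : ℝ) ^ (1 - 2 * τ) :=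
    (Real.summable_nat_rpow.2 (by linarith)).mul_left _
  refine hsum.of_norm_bounded_eventually_nat ?_
  filter_upwards [eventually_ge_atTop (N0 + 1)] with q hq
  have hq0 : 0 < q := by omega
  have hqR : (0 : ℝ) < q := by exact_mod_cast hq0
  have hg : 0 < ψ q * w q := mul_pos (H.pos q hq0) (H.wpos q hq0).1
  have h1 := hcon q (by omega)
  have h2 : (ψ q * w q) ^ s ≤ |K| * (q : ℝ) ^ (-2 : ℝ) := by
    rw [Real.rpow_neg hqR.le, ← div_eq_mul_inv, le_div_iff₀ (by positivity)]
    have : (q : ℝ) ^ (2 : ℝ) = (q : ℝ) ^ 2 := by norm_cast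
    rw [this]
    linarith [le_abs_self K]
  have h3 : (ψ q * w q) ^ s₁ = ((ψ q * w q) ^ s) ^ τ := by
    rw [← Real.rpow_mul hg.le, hτ, mul_div_cancel₀ _ hs.ne']
  rw [Real.norm_of_nonneg (by positivity), h3]
  calc (q : ℝ) * ((ψ q * w q) ^ s) ^ τ ≤ q * (|K| * (q : ℝ) ^ (-2 : ℝ)) ^ τ := by gcongr
    _ = |K| ^ τ * ((q : ℝ) ^ (1 : ℝ) * (q : ℝ) ^ (-2 * τ)) := by
        rw [Real.mul_rpow (abs_nonneg K) (by positivity), ← Real.rpow_mul hqR.le, Real.rpow_one]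
        ring
    _ = _ := by rw [← Real.rpow_add hqR]; ring_nf

/-- The field `big` comes from the lower bound on `ω(q)` and from `64 Ψ(b) ≤ Ψ(T)` for `b ≥ 8T`,
with `T = 1/(8Ψ(q))`; note `64 · 45/16 = 180`. -/
theorem nice_of_hypotheses (Ψ ω : ℝ → ℝ)
    (hΨpos : ∀ q : ℝ, 0 < q → 0 < Ψ q)
    (hωmem : ∀ q : ℝ, 0 < q → ω q ∈ Set.Ioo (0 : ℝ) 1)
    (hmono : AntitoneOn (fun q : ℝ => q ^ 2 * Ψ q) (Set.Ioi 0))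
    (hmono' : AntitoneOn (fun q : ℝ => q ^ 2 * Ψ q * ω q) (Set.Ioi 0))
    (hsq : SquareDivisibility Ψ)
    (hsum : Summable (fun q : ℕ => (q : ℝ) * Ψ (q : ℝ)))
    (hωlim : Filter.Tendsto ω Filter.atTop (nhds 0))
    (hbig : ∀ᶠ q : ℝ in Filter.atTop, 45 / (16 * Ψ q) * Ψ (1 / (8 * Ψ q)) ≤ ω q) :
    Nice (fun c : ℕ => Ψ c) (fun c : ℕ => ω c) where
  pos c hc := hΨpos c (by exact_mod_cast hc)
  mono a b ha hab := hmono (a := (a : ℝ)) (b := (b : ℝ)) (by simpa using ha)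
    (by simpa using lt_of_lt_of_le ha hab) (by exact_mod_cast hab)
  gmono a b ha hab := by
    have h1 := hmono' (a := (a : ℝ)) (b := (b : ℝ)) (by simpa using ha)
      (by simpa using lt_of_lt_of_le ha hab) (by exact_mod_cast hab)
    simp only at h1
    have ha' : (0 : ℝ) < a := by exact_mod_cast ha
    have hab' : (a : ℝ) ≤ b := by exact_mod_cast hab
    have hg : 0 < Ψ b * ω b :=
      mul_pos (hΨpos b (by linarith)) (hωmem b (by linarith)).1
    have h2 : (a : ℝ) ^ 2 * (Ψ b * ω b) ≤ (b : ℝ) ^ 2 * (Ψ b * ω b) := by gcongr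
    refine le_of_mul_le_mul_left (a := (a : ℝ) ^ 2) ?_ (by positivity)
    linarith
  sqdiv := hsq
  sum := hsum
  wpos c hc := hωmem c (by exact_mod_cast hc)
  wlim := hωlim.comp tendsto_natCast_atTop_atTop
  big := by
    filter_upwards [tendsto_natCast_atTop_atTop.eventually hbig, eventually_gt_atTop 0]
      with q hq hq0 b hb
    have hΨq := hΨpos q (by exact_mod_cast hq0)
    set T : ℝ := 1 / (8 * Ψ q) with hT
    have hT0 : 0 < T := by positivity
    have hbT : 8 * T ≤ b := by
      have : 8 * T = (Ψ q)⁻¹ := by rw [hT]; field_simp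
      rw [this]; exact hb
    have hb0 : (0 : ℝ) < b := by linarith
    have h1 : (b : ℝ) ^ 2 * Ψ b ≤ T ^ 2 * Ψ T :=
      hmono (a := T) (b := (b : ℝ)) hT0 hb0 (by linarith)
    have hΨb := hΨpos b hb0
    have h2 : (8 * T) ^ 2 * Ψ b ≤ (b : ℝ) ^ 2 * Ψ b := by gcongr
    have h3 : 64 * Ψ b ≤ Ψ T := by
      refine le_of_mul_le_mul_left (a := T ^ 2) ?_ (by positivity)
      linarith
    rw [div_mul_eq_mul_div, div_le_iff₀ (by positivity)] at hq
    linarith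

end Helpers

/-- **Theorem.** Suppose `q ↦ q²Ψ(q)` and `q ↦ q²Ψ(q)ω(q)` are non-increasing on `(0,∞)`,
`Ψ` satisfies the square divisibility condition, `Σ_{q≥1} qΨ(q) < ∞`, `ω(q) → 0`, `ω` maps
`(0,∞)` into `(0,1)`, and `ω(q) ≥ (45/(16Ψ(q)))·Ψ(1/(8Ψ(q)))` for all sufficiently large `q`.
Then `dim_H(E(Ψ,ω)) = inf {s ≥ 0 : Σ_{q≥1} q(Ψ(q)ω(q))^s < ∞}`. -/
theorem dimH_ESet_of_sqDiv (Ψ ω : ℝ → ℝ)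
    (hΨpos : ∀ q : ℝ, 0 < q → 0 < Ψ q)
    (hωmem : ∀ q : ℝ, 0 < q → ω q ∈ Set.Ioo (0 : ℝ) 1)
    (hmono : AntitoneOn (fun q : ℝ => q ^ 2 * Ψ q) (Set.Ioi 0))
    (hmono' : AntitoneOn (fun q : ℝ => q ^ 2 * Ψ q * ω q) (Set.Ioi 0))
    (hsq : SquareDivisibility Ψ)
    (hsum : Summable (fun q : ℕ => (q : ℝ) * Ψ (q : ℝ)))
    (hωlim : Filter.Tendsto ω Filter.atTop (nhds 0))
    (hbig : ∀ᶠ q : ℝ in Filter.atTop, 45 / (16 * Ψ q) * Ψ (1 / (8 * Ψ q)) ≤ ω q) :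
    dimH (ESet Ψ ω) = ENNReal.ofReal
      (sInf {s : ℝ | 0 ≤ s ∧ Summable (fun q : ℕ => (q : ℝ) * (Ψ (q : ℝ) * ω (q : ℝ)) ^ s)}) := by
  have H := nice_of_hypotheses Ψ ω hΨpos hωmem hmono hmono' hsq hsum hωlim hbig
  have hE : ESet Ψ ω = ExactSet (fun c : ℕ => Ψ c) (fun c : ℕ => ω c) := rfl
  rw [hE]
  set E := ExactSet (fun c : ℕ => Ψ c) (fun c : ℕ => ω c) with hEdef
  set S := {s : ℝ | 0 ≤ s ∧ Summable (fun q : ℕ => (q : ℝ) * (Ψ (q : ℝ) * ω (q : ℝ)) ^ s)} with hS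
  have h1S : (1 : ℝ) ∈ S := by
    refine ⟨zero_le_one, hsum.of_nonneg_of_le (fun q => ?_) fun q => ?_⟩
    all_goals
      rcases Nat.eq_zero_or_pos q with rfl | hq
      · simp
      have h1 := H.pos q hq
      have h2 := H.wpos q hq
      rw [Real.rpow_one]
    · have := h2.1
      positivity
    · gcongr
      exact mul_le_of_le_one_right h1.le h2.2.le
  have hbdd : BddBelow S := ⟨0, fun s hs => hs.1⟩
  have hSpos : ∀ s ∈ S, 0 < s := by
    rintro s ⟨h0, hsm⟩
    refine lt_of_le_of_ne h0 fun h => ?_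
    rw [← h] at hsm
    simp only [Real.rpow_zero, mul_one] at hsm
    exact not_tendsto_nhds_of_tendsto_atTop tendsto_natCast_atTop_atTop _ hsm.tendsto_atTop_zero
  have hup : ∀ s ∈ S, dimH E ≤ ENNReal.ofReal s := fun s hs => dimH_exactSet_le H (hSpos s hs) hs.2
  have htop : dimH E ≠ ⊤ := ne_top_of_le_ne_top ENNReal.ofReal_ne_top (hup 1 h1S)
  rw [← ENNReal.ofReal_toReal htop]
  congr 1
  apply le_antisymm
  · exact le_csInf ⟨1, h1S⟩ fun s hs => ENNReal.toReal_le_of_le_ofReal hs.1 (hup s hs)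
  · by_contra hlt
    push Not at hlt
    obtain ⟨s, hs1, hs2⟩ := exists_between hlt
    have hs0 : 0 < s := lt_of_le_of_lt ENNReal.toReal_nonneg hs1
    obtain ⟨s₁, hss₁, hs₁⟩ := exists_between hs2
    have hns : ¬ Summable fun q : ℕ => (q : ℝ) * (Ψ (q : ℝ) * ω (q : ℝ)) ^ s₁ := fun h =>
      notMem_of_lt_csInf hs₁ hbdd ⟨by linarith, h⟩
    have hle := le_dimH_exactSet H hs0 (hs2.le.trans (csInf_le hbdd h1S))
      (unbounded_of_not_summable H hs0 hss₁ hns)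
    rw [ENNReal.ofReal_le_iff_le_toReal htop] at hle
    linarith
end
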